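/- Let L, T > 0 and λ ≥ 1, and let u₀ : 𝕋_L → [0,∞) be continuous, not identically zero, L-periodic, absolutely continuous with derivative u₀' ∈ L²(0,L). Then there exists a nonnegative weak solution u of the thin-film equation with absorption u_t + ∂_x(u² ∂_x³ u) + u^λ = 0 with initial datum u₀ which in addition satisfies, for every p ∈ [2,∞) and every t ∈ [0,T], the energy estimate ‖u_x(t,·)‖_2^p + 2 ∫₀^t ‖u_x(s,·)‖_2^{p−2} ( ∫_{{x ∈ 𝕋_L : u(s,x) > 0}} u(s,x)² u_xxx(s,x)² dx ) ds ≤ ‖u₀'‖_2^p. -/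

import Mathlib

/-!
The solution is a limit of semi-discrete approximations. On the periodic lattice of mesh `h = L/N`,
with `D` the forward difference quotient, consider

  `u_i' = -(D J)_i - u_i^λ`,  `J_i = u_i u_{i-1} (D³u)_{i-2}`.

The product mobility vanishes as soon as one of its nodes does, so the (truncated, hence globally
Lipschitz) system preserves nonnegativity. Mass decreases, and summation by parts shows that the
Dirichlet energy `h ∑ (Du)²` decreases with dissipation `2 h ∑ u_i u_{i-1} ((D³u)_{i-2})²`, the
absorption having the good sign because `y ↦ y^λ` is increasing. These two facts bound the
solution, so that the truncation is never active (`scheme_exists`), and the powers of the energy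
satisfy the discrete analogue of the asserted estimate (`Scheme.energy_pow`).

The energy gives equicontinuity in space; local double averages, whose time derivative is
controlled by the flux, give equicontinuity in time (`scheme_time`). By Arzelà–Ascoli the
approximations converge uniformly along a sequence to a continuous `u` (`approx_exists`).

Near a point where `u > 0` the approximations are bounded below and the scheme is uniformly
parabolic. Localized energy estimates (`step`), with a time weight that dispenses with
information at the initial time, bound `D²u` through `D⁵u` successively (`PB.level5`). At the first
level the source `u_x u_xxx` is absorbed by interpolation (`PB.small2`); at later levels commutators
are of lower order. Consequently the difference quotients up to order four converge uniformly to
derivatives of `u`, which solves the equation classically on its positivity set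
(`Approx.regular`).

In the weak formulation the flux is the product of a bounded factor converging to `u` and a factor
bounded in `L²` which converges to `u u_xxx` where `u > 0`; where `u = 0` the first factor tends to
zero. Hence the product passes to the limit (`tendsto_integral_mul`, `Approx.weak`). The energy
estimate follows from the lower semicontinuity of the Dirichlet energy and Fatou's lemma
(`Approx.energy`). Finally, the energy never exceeds its initial value, so lower semicontinuity
and the parallelogram identity yield strong convergence to the datum (`Approx.init`).
-/

open MeasureTheory Set Filter

noncomputable section

/-- The positivity set `P_T = {(t,x) ∈ (0,T) × ℝ : u(t,x) > 0}` of `u`. -/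
def PT (T : ℝ) (u : ℝ → ℝ → ℝ) : Set (ℝ × ℝ) :=
  {p : ℝ × ℝ | p.1 ∈ Set.Ioo (0 : ℝ) T ∧ 0 < u p.1 p.2}

/-- One period of the space-time cylinder: `(0,T) × (0,L)`. -/
def QTper (L T : ℝ) : Set (ℝ × ℝ) := Set.Ioo (0 : ℝ) T ×ˢ Set.Ioo (0 : ℝ) L

/-- A weak solution of the thin-film equation with absorption
`u_t + ∂_x(u² ∂_x³ u) + u^λ = 0`, `u(0,·) = u₀`, on `[0,T] × 𝕋_L`.
Here `u₀` has (weak/a.e.) derivative `g₀`; `ux, ut, ux2, ux3, ux4` are the partial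
derivatives `u_x, u_t, u_xx, u_xxx, u_xxxx`, which are required to exist classically
and be continuous on the positivity set `P_T`. -/
structure WeakSol (L T lam : ℝ) (u₀ g₀ : ℝ → ℝ) where
  u : ℝ → ℝ → ℝ
  ux : ℝ → ℝ → ℝ
  ut : ℝ → ℝ → ℝ
  ux2 : ℝ → ℝ → ℝ
  ux3 : ℝ → ℝ → ℝ
  ux4 : ℝ → ℝ → ℝ
  /-- `u` is nonnegative. -/
  nonneg : ∀ t ∈ Set.Icc (0 : ℝ) T, ∀ x : ℝ, 0 ≤ u t x
  /-- `u` is continuous on `[0,T] × 𝕋_L`. -/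
  cont : ContinuousOn (fun p : ℝ × ℝ => u p.1 p.2)
    (Set.Icc (0 : ℝ) T ×ˢ (Set.univ : Set ℝ))
  /-- `u(t,·)` is `L`-periodic. -/
  periodic : ∀ t x : ℝ, u t (x + L) = u t x
  /-- local integrability of the spatial derivative -/
  ux_int : ∀ t ∈ Set.Icc (0 : ℝ) T, ∀ a b : ℝ, IntervalIntegrable (ux t) volume a b
  /-- each `u(t,·)` is absolutely continuous with derivative `ux t`. -/
  ac : ∀ t ∈ Set.Icc (0 : ℝ) T, ∀ a b : ℝ, u t b - u t a = ∫ x in a..b, ux t x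
  /-- `u_x(t,·) ∈ L²(0,L)`. -/
  ux_sq_int : ∀ t ∈ Set.Icc (0 : ℝ) T,
    IntervalIntegrable (fun x => (ux t x) ^ 2) volume 0 L
  /-- `sup_{t ∈ [0,T]} ‖u(t,·)‖_{1,2} < ∞`. -/
  bdd : ∃ S : ℝ, ∀ t ∈ Set.Icc (0 : ℝ) T,
    (∫ x in (0 : ℝ)..L, ((u t x) ^ 2 + (ux t x) ^ 2)) ≤ S
  /-- on `P_T` the time derivative exists and equals `ut`. -/
  hasDeriv_t : ∀ p ∈ PT T u, HasDerivAt (fun s => u s p.2) (ut p.1 p.2) p.1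
  /-- on `P_T` the spatial derivative exists and equals `ux`. -/
  hasDeriv_x : ∀ p ∈ PT T u, HasDerivAt (fun y => u p.1 y) (ux p.1 p.2) p.2
  hasDeriv_x2 : ∀ p ∈ PT T u, HasDerivAt (fun y => ux p.1 y) (ux2 p.1 p.2) p.2
  hasDeriv_x3 : ∀ p ∈ PT T u, HasDerivAt (fun y => ux2 p.1 y) (ux3 p.1 p.2) p.2
  hasDeriv_x4 : ∀ p ∈ PT T u, HasDerivAt (fun y => ux3 p.1 y) (ux4 p.1 p.2) p.2
  /-- the partial derivatives are continuous on `P_T`. -/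
  cont_t : ContinuousOn (fun p : ℝ × ℝ => ut p.1 p.2) (PT T u)
  cont_x : ContinuousOn (fun p : ℝ × ℝ => ux p.1 p.2) (PT T u)
  cont_x2 : ContinuousOn (fun p : ℝ × ℝ => ux2 p.1 p.2) (PT T u)
  cont_x3 : ContinuousOn (fun p : ℝ × ℝ => ux3 p.1 p.2) (PT T u)
  cont_x4 : ContinuousOn (fun p : ℝ × ℝ => ux4 p.1 p.2) (PT T u)
  /-- `∫∫_{P_T} (u u_xxx)² dx dt < ∞`. -/
  flux_sq_int : IntegrableOn (fun p : ℝ × ℝ => (u p.1 p.2 * ux3 p.1 p.2) ^ 2)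
    (PT T u ∩ QTper L T) volume
  /-- the weak formulation, for every `C¹` space-periodic test function vanishing
  at `t = 0` and `t = T`. -/
  weak : ∀ ψ : ℝ → ℝ → ℝ,
    ContDiff ℝ 1 (fun p : ℝ × ℝ => ψ p.1 p.2) →
    (∀ t x : ℝ, ψ t (x + L) = ψ t x) →
    (∀ x : ℝ, ψ 0 x = 0) → (∀ x : ℝ, ψ T x = 0) →
    (∫ p in QTper L T, u p.1 p.2 * deriv (fun s => ψ s p.2) p.1)
      + (∫ p in PT T u ∩ QTper L T,
          (u p.1 p.2) ^ 2 * ux3 p.1 p.2 * deriv (fun y => ψ p.1 y) p.2)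
      - (∫ p in QTper L T, u p.1 p.2 ^ lam * ψ p.1 p.2) = 0
  /-- `u(t,·) → u₀` in the `‖·‖_{1,2}` norm as `t → 0⁺`. -/
  init : Tendsto
    (fun t => ∫ x in (0 : ℝ)..L, ((u t x - u₀ x) ^ 2 + (ux t x - g₀ x) ^ 2))
    (nhdsWithin 0 (Set.Ioi 0)) (nhds 0)

/-! ### Difference calculus on the lattice -/

/-- The forward difference quotient with step `h` of a lattice function. -/
def fd (h : ℝ) (f : ℤ → ℝ) (i : ℤ) : ℝ := (f (i + 1) - f i) / h

/-- The discrete flux `u_i u_{i-1} (D³u)_{i-2}`, approximating `u² u_xxx`. -/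
def flux (h : ℝ) (f : ℤ → ℝ) (i : ℤ) : ℝ :=
  f i * f (i - 1) * fd h (fd h (fd h f)) (i - 2)

/-- The sum of a lattice function over one period `{0, …, N-1}`. -/
def psum (N : ℕ) (f : ℤ → ℝ) : ℝ := ∑ i ∈ Finset.range N, f (i : ℤ)

lemma psum_shift_one {N : ℕ} {f : ℤ → ℝ} (hf : ∀ i, f (i + N) = f i) :
    psum N (fun i => f (i + 1)) = psum N f := by
  unfold psum
  have h1 := Finset.sum_range_succ (fun i : ℕ => f (i : ℤ)) N
  have h2 := Finset.sum_range_succ' (fun i : ℕ => f (i : ℤ)) N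
  have h3 : f (N : ℤ) = f 0 := by simpa using hf 0
  simp only [Nat.cast_add, Nat.cast_one, Nat.cast_zero] at h1 h2
  linarith

lemma psum_shift_nat {N : ℕ} {f : ℤ → ℝ} (hf : ∀ i, f (i + N) = f i) (k : ℕ) :
    psum N (fun i => f (i + k)) = psum N f := by
  induction k with
  | zero => simp
  | succ k ih =>
    rw [← ih, ← psum_shift_one (f := fun i => f (i + k))]
    · congr 1; ext i; congr 1; push_cast; ring
    · intro i; rw [← hf (i + k)]; congr 1; ring

lemma psum_shift {N : ℕ} {f : ℤ → ℝ} (hf : ∀ i, f (i + N) = f i) (k : ℤ) :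
    psum N (fun i => f (i + k)) = psum N f := by
  rcases Int.eq_nat_or_neg k with ⟨n, rfl | rfl⟩
  · exact psum_shift_nat hf n
  · rw [← psum_shift_nat (f := fun i => f (i + -(n : ℤ))) _ n]
    · congr 1; ext i; congr 1; ring
    · intro i; rw [← hf (i + -(n : ℤ))]; congr 1; ring

lemma psum_add (N : ℕ) (f g : ℤ → ℝ) : psum N (fun i => f i + g i) = psum N f + psum N g :=
  Finset.sum_add_distrib
lemma psum_sub (N : ℕ) (f g : ℤ → ℝ) : psum N (fun i => f i - g i) = psum N f - psum N g :=
  Finset.sum_sub_distrib _ _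
lemma psum_neg (N : ℕ) (f : ℤ → ℝ) : psum N (fun i => - f i) = - psum N f :=
  Finset.sum_neg_distrib _
lemma psum_mul (N : ℕ) (c : ℝ) (f : ℤ → ℝ) : psum N (fun i => c * f i) = c * psum N f :=
  (Finset.mul_sum _ _ _).symm
lemma psum_nonneg {N : ℕ} {f : ℤ → ℝ} (h : ∀ i, 0 ≤ f i) : 0 ≤ psum N f :=
  Finset.sum_nonneg fun _ _ => h _
lemma psum_mono {N : ℕ} {f g : ℤ → ℝ} (h : ∀ i, f i ≤ g i) : psum N f ≤ psum N g :=
  Finset.sum_le_sum fun _ _ => h _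

lemma fd_periodic {N : ℕ} {h : ℝ} {f : ℤ → ℝ} (hf : ∀ i, f (i + N) = f i) (i : ℤ) :
    fd h f (i + N) = fd h f i := by
  unfold fd; rw [hf i, show i + N + 1 = (i + 1) + N by ring, hf]

/-- Summation by parts over a period. -/
lemma psum_sbp {N : ℕ} {h : ℝ} {f g : ℤ → ℝ} (hf : ∀ i, f (i + N) = f i)
    (hg : ∀ i, g (i + N) = g i) :
    psum N (fun i => g i * fd h f i) = - psum N (fun i => fd h g (i - 1) * f i) := by
  have h1 : psum N (fun i => g (i - 1) * f i) = psum N (fun i => g i * f (i + 1)) := by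
    rw [← psum_shift_one (f := fun i => g (i - 1) * f i)]
    · simp
    · intro i; rw [hf, show i + (N : ℤ) - 1 = (i - 1) + N by ring, hg]
  have e1 : psum N (fun i => g i * fd h f i)
      = h⁻¹ * (psum N (fun i => g i * f (i + 1)) - psum N (fun i => g i * f i)) := by
    rw [← psum_sub, ← psum_mul]; congr 1; ext i; unfold fd; ring
  have e2 : psum N (fun i => fd h g (i - 1) * f i)
      = h⁻¹ * (psum N (fun i => g i * f i) - psum N (fun i => g (i - 1) * f i)) := by
    rw [← psum_sub, ← psum_mul]; congr 1; ext i; unfold fd; simp; ring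
  rw [e1, e2, h1]; ring

/-- Discrete `H¹ ⊂ C^{1/2}` along a path. -/
lemma sq_sub_le_sum {h : ℝ} (hh : 0 < h) (f : ℤ → ℝ) (i : ℤ) (p : ℕ) :
    (f (i + p) - f i) ^ 2 ≤ p * h ^ 2 * ∑ k ∈ Finset.range p, (fd h f (i + k)) ^ 2 := by
  have e : f (i + p) - f i = ∑ k ∈ Finset.range p, h * fd h f (i + k) := by
    have := Finset.sum_range_sub (fun k : ℕ => f (i + k)) p
    simp only [Nat.cast_zero, add_zero] at this
    rw [← this]
    refine Finset.sum_congr rfl fun k _ => ?_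
    unfold fd; push_cast; field_simp; ring_nf
  rw [e, ← Finset.mul_sum, mul_pow]
  have := sq_sum_le_card_mul_sum_sq (s := Finset.range p) (f := fun k : ℕ => fd h f (i + k))
  simp only [Finset.card_range] at this
  nlinarith [sq_nonneg h]

lemma sq_sub_le_energy {N : ℕ} {h : ℝ} (hh : 0 < h) {f : ℤ → ℝ} (hf : ∀ i, f (i + N) = f i)
    (i : ℤ) (p : ℕ) (hp : p ≤ N) :
    (f (i + p) - f i) ^ 2 ≤ (p * h) * (h * psum N (fun i => (fd h f i) ^ 2)) := by
  refine (sq_sub_le_sum hh f i p).trans ?_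
  have h1 : ∑ k ∈ Finset.range p, (fd h f (i + k)) ^ 2 ≤ psum N (fun i => (fd h f i) ^ 2) := by
    rw [← psum_shift (f := fun i => (fd h f i) ^ 2) _ i]
    · unfold psum
      calc _ ≤ ∑ k ∈ Finset.range N, (fd h f (i + k)) ^ 2 :=
            Finset.sum_le_sum_of_subset_of_nonneg (Finset.range_mono hp) fun _ _ _ => sq_nonneg _
        _ = _ := Finset.sum_congr rfl fun k _ => by rw [add_comm]
    · intro j; rw [fd_periodic hf]
  have : 0 ≤ (p : ℝ) * h ^ 2 := by positivity
  nlinarith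

/-! ### Truncated ordinary differential equations -/

/-- Bounded Lipschitz functions. -/
def BLip {E : Type*} [NormedAddCommGroup E] (F : E → ℝ) : Prop :=
  ∃ C : ℝ, (∀ x, |F x| ≤ C) ∧ ∀ x y, |F x - F y| ≤ C * ‖x - y‖

section BLipLemmas
variable {E : Type*} [NormedAddCommGroup E] {F G : E → ℝ}

lemma BLip.sub (hF : BLip F) (hG : BLip G) : BLip (fun x => F x - G x) := by
  obtain ⟨C, h1, h2⟩ := hF
  obtain ⟨D, h3, h4⟩ := hG
  refine ⟨C + D, fun x => (abs_sub _ _).trans (add_le_add (h1 x) (h3 x)), fun x y => ?_⟩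
  have : F x - G x - (F y - G y) = (F x - F y) - (G x - G y) := by ring
  rw [this, add_mul]
  exact (abs_sub _ _).trans (add_le_add (h2 x y) (h4 x y))

lemma BLip.mul (hF : BLip F) (hG : BLip G) : BLip (fun x => F x * G x) := by
  obtain ⟨C, h1, h2⟩ := hF
  obtain ⟨D, h3, h4⟩ := hG
  by_cases hE : IsEmpty E
  · exact ⟨0, fun x => (hE.false x).elim, fun x => (hE.false x).elim⟩
  rw [not_isEmpty_iff] at hE
  obtain ⟨x0⟩ := hE
  have hC : 0 ≤ C := (abs_nonneg _).trans (h1 x0)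
  have hD : 0 ≤ D := (abs_nonneg _).trans (h3 x0)
  refine ⟨2 * (C * D), fun x => ?_, fun x y => ?_⟩
  · rw [abs_mul]
    nlinarith [h1 x, h3 x, abs_nonneg (F x), abs_nonneg (G x),
      mul_le_mul (h1 x) (h3 x) (abs_nonneg _) hC]
  · have : F x * G x - F y * G y = F x * (G x - G y) + (F x - F y) * G y := by ring
    rw [this]
    refine (abs_add_le _ _).trans ?_
    rw [abs_mul, abs_mul]
    have a1 := mul_le_mul (h1 x) (h4 x y) (abs_nonneg _) hC
    have a2 := mul_le_mul (h2 x y) (h3 y) (abs_nonneg _) (mul_nonneg hC (norm_nonneg (x - y)))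
    nlinarith

lemma BLip.const_mul (c : ℝ) (hF : BLip F) : BLip (fun x => c * F x) := by
  obtain ⟨C, h1, h2⟩ := hF
  refine ⟨|c| * C, fun x => ?_, fun x y => ?_⟩
  · rw [abs_mul]; exact mul_le_mul_of_nonneg_left (h1 x) (abs_nonneg _)
  · rw [← mul_sub, abs_mul, mul_assoc]; exact mul_le_mul_of_nonneg_left (h2 x y) (abs_nonneg _)

/-- A bounded Lipschitz function of one real variable after a Lipschitz function. -/
lemma BLip.comp {φ : ℝ → ℝ} (hφ : BLip φ) {C : ℝ}
    (hG : ∀ x y, |G x - G y| ≤ C * ‖x - y‖) : BLip (fun x => φ (G x)) := by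
  obtain ⟨D, h1, h2⟩ := hφ
  have hD : 0 ≤ D := (abs_nonneg _).trans (h1 0)
  refine ⟨max D (D * C), fun x => (h1 _).trans (le_max_left _ _), fun x y => ?_⟩
  refine (h2 _ _).trans ?_
  rw [Real.norm_eq_abs]
  calc D * |G x - G y| ≤ D * (C * ‖x - y‖) := mul_le_mul_of_nonneg_left (hG x y) hD
    _ = (D * C) * ‖x - y‖ := by ring
    _ ≤ _ := mul_le_mul_of_nonneg_right (le_max_right _ _) (norm_nonneg _)

end BLipLemmas

/-- Truncation of a real number to `[a, b]`. -/
def clampR (a b x : ℝ) : ℝ := max a (min b x)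

lemma clampR_of_mem {a b x : ℝ} (h1 : a ≤ x) (h2 : x ≤ b) : clampR a b x = x := by
  unfold clampR; rw [min_eq_right h2, max_eq_right h1]

lemma clampR_lip (a b x y : ℝ) : |clampR a b x - clampR a b y| ≤ |x - y| := by
  unfold clampR
  rw [max_comm a, max_comm a]
  exact (abs_max_sub_max_le_abs _ _ _).trans ((abs_min_sub_min_le_max b x b y).trans (by simp))

lemma clampR_mem {a b : ℝ} (hab : a ≤ b) (x : ℝ) : a ≤ clampR a b x ∧ clampR a b x ≤ b :=
  ⟨le_max_left _ _, max_le hab (min_le_left _ _)⟩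

lemma clampR_mono (a b : ℝ) : Monotone (clampR a b) := fun _ _ h =>
  max_le_max le_rfl (min_le_min le_rfl h)

lemma clampR_blip {a b : ℝ} (hab : a ≤ b) : BLip (clampR a b) := by
  refine ⟨max 1 (max |a| |b|), fun x => ?_, fun x y => (clampR_lip a b x y).trans ?_⟩
  · have := clampR_mem hab x
    exact (abs_le_max_abs_abs this.1 this.2).trans (le_max_right _ _)
  · rw [Real.norm_eq_abs]; nlinarith [abs_nonneg (x - y), le_max_left 1 (max |a| |b|)]

lemma rpow_blip {K lam : ℝ} (hK : 0 ≤ K) (hlam : 1 ≤ lam) :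
    BLip (fun x => (clampR 0 K x) ^ lam) := by
  have key : BLip (fun x => (clampR 0 K x)) := clampR_blip hK
  have hL : ∀ x ∈ Icc (0:ℝ) K, ∀ y ∈ Icc (0:ℝ) K,
      |y ^ lam - x ^ lam| ≤ (lam * K ^ (lam - 1)) * |y - x| := by
    intro x hx y hy
    have := Convex.norm_image_sub_le_of_norm_hasDerivWithin_le (f := fun x : ℝ => x ^ lam)
      (f' := fun x => lam * x ^ (lam - 1)) (s := Icc (0:ℝ) K) (C := lam * K ^ (lam - 1))
      (fun z _ => (Real.hasDerivAt_rpow_const (Or.inr hlam)).hasDerivWithinAt)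
      (fun z hz => ?_) (convex_Icc _ _) hx hy
    · simpa [Real.norm_eq_abs] using this
    · rw [Real.norm_eq_abs, abs_of_nonneg
        (mul_nonneg (by linarith) (Real.rpow_nonneg hz.1 _))]
      exact mul_le_mul_of_nonneg_left
        (Real.rpow_le_rpow hz.1 hz.2 (by linarith)) (by linarith)
  have hC : 0 ≤ lam * K ^ (lam - 1) := mul_nonneg (by linarith) (Real.rpow_nonneg hK _)
  refine ⟨max (K ^ lam) (lam * K ^ (lam - 1)), fun x => ?_, fun x y => ?_⟩
  · have := clampR_mem hK x
    rw [abs_of_nonneg (Real.rpow_nonneg this.1 _)]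
    exact (Real.rpow_le_rpow this.1 this.2 (by linarith)).trans (le_max_left _ _)
  · refine (hL _ (clampR_mem hK y) _ (clampR_mem hK x)).trans ?_
    calc _ ≤ (lam * K ^ (lam - 1)) * |x - y| :=
          mul_le_mul_of_nonneg_left (clampR_lip _ _ _ _) hC
      _ ≤ _ := mul_le_mul_of_nonneg_right (le_max_right _ _) (abs_nonneg _)

/-- A bounded Lipschitz autonomous ODE in `ℝ^ι` is solvable on any time interval. -/
lemma ode_exists {ι : Type*} [Fintype ι] (V : (ι → ℝ) → ι → ℝ)
    (hV : ∀ i, BLip (fun y => V y i)) {T : ℝ} (hT : 0 < T) (y0 : ι → ℝ) :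
    ∃ y : ℝ → ι → ℝ, y 0 = y0 ∧
      ∀ t ∈ Icc (0:ℝ) T, HasDerivWithinAt y (V (y t)) (Icc 0 T) t := by
  choose C hC1 hC2 using hV
  let B : ℝ := ∑ i, |C i|
  have hB : 0 ≤ B := Finset.sum_nonneg fun _ _ => abs_nonneg _
  have hCB : ∀ i, C i ≤ B := fun i => (le_abs_self _).trans
    (Finset.single_le_sum (f := fun i => |C i|) (fun _ _ => abs_nonneg _) (Finset.mem_univ i))
  have hPL : IsPicardLindelof (fun _ => V) (tmin := 0) (tmax := T) ⟨0, le_rfl, hT.le⟩ y0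
      (Real.toNNReal (B * T)) 0 (Real.toNNReal B) (Real.toNNReal B) := by
    refine ⟨fun t _ => LipschitzWith.lipschitzOnWith ?_, fun _ _ => continuousOn_const,
      fun t _ y _ => ?_, ?_⟩
    · refine LipschitzWith.of_dist_le_mul fun x y => ?_
      rw [dist_eq_norm, dist_eq_norm, Real.coe_toNNReal _ hB]
      refine (pi_norm_le_iff_of_nonneg (by positivity)).2 fun i => ?_
      rw [Pi.sub_apply, Real.norm_eq_abs]
      exact (hC2 i x y).trans (mul_le_mul_of_nonneg_right (hCB i) (norm_nonneg _))
    · rw [Real.coe_toNNReal _ hB]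
      exact (pi_norm_le_iff_of_nonneg hB).2 fun i => (hC1 i y).trans (hCB i)
    · rw [Real.coe_toNNReal _ hB, Real.coe_toNNReal _ (by positivity)]
      simp [hT.le]
  simpa using hPL.exists_eq_forall_mem_Icc_hasDerivWithinAt₀

/-! ### The semi-discrete scheme -/

lemma hasDeriv_mass {N : ℕ} {h T : ℝ} {U : ℝ → ℤ → ℝ} {J a : ℝ → ℤ → ℝ}
    (hJ : ∀ t i, J t (i + N) = J t i) {t : ℝ}
    (hU : ∀ i, HasDerivWithinAt (fun s => U s i) (-(fd h (J t) i) - a t i) (Icc 0 T) t) :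
    HasDerivWithinAt (fun s => psum N (U s)) (-(psum N (a t))) (Icc 0 T) t := by
  have h1 : HasDerivWithinAt (fun s => psum N (U s))
      (psum N (fun i => -(fd h (J t) i) - a t i)) (Icc 0 T) t := by
    unfold psum
    exact HasDerivWithinAt.fun_sum fun i _ => hU i
  have h2 := psum_sbp (N := N) (h := h) (f := J t) (g := fun _ => 1) (hJ t) (fun _ => rfl)
  have h3 : psum N (fun i => fd h (J t) i) = 0 := by
    simp only [one_mul] at h2
    rw [h2]; simp [psum, fd]
  convert h1 using 1
  rw [psum_sub, psum_neg, h3]; ring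

lemma hasDeriv_energy {N : ℕ} {h T : ℝ} {U : ℝ → ℤ → ℝ} {J a : ℝ → ℤ → ℝ}
    (hper : ∀ t i, U t (i + N) = U t i)
    (hJ : ∀ t i, J t (i + N) = J t i) (ha : ∀ t i, a t (i + N) = a t i) {t : ℝ}
    (hU : ∀ i, HasDerivWithinAt (fun s => U s i) (-(fd h (J t) i) - a t i) (Icc 0 T) t) :
    HasDerivWithinAt (fun s => psum N (fun i => (fd h (U s) i) ^ 2))
      (-2 * psum N (fun i => J t i * fd h (fd h (fd h (U t))) (i - 2))
        - 2 * psum N (fun i => fd h (U t) i * fd h (a t) i)) (Icc 0 T) t := by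
  set W : ℤ → ℝ := fun i => -(fd h (J t) i) - a t i with hW
  have hfd : ∀ i, HasDerivWithinAt (fun s => fd h (U s) i) (fd h W i) (Icc 0 T) t := by
    intro i; unfold fd
    exact ((hU (i + 1)).sub (hU i)).div_const h
  have h1 : HasDerivWithinAt (fun s => psum N (fun i => (fd h (U s) i) ^ 2))
      (psum N (fun i => 2 * (fd h (U t) i * fd h W i))) (Icc 0 T) t := by
    unfold psum
    refine HasDerivWithinAt.fun_sum fun i _ => ?_
    have := (hfd i).pow 2
    refine this.congr_deriv ?_
    push_cast; ring
  have hWp : ∀ i, W (i + N) = W i := by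
    intro i; simp only [hW]; rw [fd_periodic (hJ t), ha]
  convert h1 using 1
  have p1 := fun i => fd_periodic (h := h) (hper t) i
  have p2 := fun i => fd_periodic (h := h) p1 i
  rw [psum_mul, psum_sbp hWp p1]
  have p2' : ∀ i, (fun i => fd h (fd h (U t)) (i - 1)) (i + N)
      = (fun i => fd h (fd h (U t)) (i - 1)) i := by
    intro i
    rw [show (fun i => fd h (fd h (U t)) (i - 1)) (i + N) = fd h (fd h (U t)) ((i - 1) + N) by
      simp only; congr 1; ring, p2]
  have e1 : psum N (fun i => fd h (fd h (U t)) (i - 1) * W i)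
      = - psum N (fun i => fd h (fd h (U t)) (i - 1) * fd h (J t) i)
        - psum N (fun i => fd h (fd h (U t)) (i - 1) * a t i) := by
    rw [← psum_neg, ← psum_sub]; congr 1; ext i; simp only [hW]; ring
  have e2 := psum_sbp (h := h) (g := fun i => fd h (fd h (U t)) (i - 1)) (hJ t) p2'
  have e3 := psum_sbp (h := h) (ha t) p1
  have e4 : psum N (fun i => fd h (fun i => fd h (fd h (U t)) (i - 1)) (i - 1) * J t i)
      = psum N (fun i => J t i * fd h (fd h (fd h (U t))) (i - 2)) := by
    congr 1; ext i
    rw [mul_comm]; congr 1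
    generalize fd h (fd h (U t)) = g
    unfold fd
    dsimp only
    rw [show i - 1 + 1 - 1 = i - 2 + 1 by ring, show i - 1 - 1 = i - 2 by ring]
  rw [e1]
  rw [e2, e4, e3]; ring

/-- `U` solves the semi-discrete scheme `u_i' = -D(flux)_i - u_i^λ` on `[0,T]`, is `N`-periodic,
and takes values in `[0,K]`. It is defined, and continuous, for all times, being frozen outside
`[0,T]`. -/
structure Scheme (N : ℕ) (h T lam K : ℝ) (U : ℝ → ℤ → ℝ) : Prop where
  hpos : 0 < h
  per : ∀ t i, U t (i + N) = U t i
  nonneg : ∀ t i, 0 ≤ U t i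
  le_K : ∀ t i, U t i ≤ K
  cont : ∀ i, Continuous fun t => U t i
  froz : ∀ t, U t = U (clampR 0 T t)
  ode : ∀ t ∈ Icc (0:ℝ) T, ∀ i, HasDerivWithinAt (fun s => U s i)
    (-(fd h (flux h (U t)) i) - U t i ^ lam) (Icc 0 T) t

lemma antitone_of_hasDerivWithin {T : ℝ} {f f' : ℝ → ℝ}
    (hf : ∀ t ∈ Icc (0:ℝ) T, HasDerivWithinAt f (f' t) (Icc 0 T) t)
    (h0 : ∀ t ∈ Icc (0:ℝ) T, f' t ≤ 0) : AntitoneOn f (Icc 0 T) := by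
  refine antitoneOn_of_hasDerivWithinAt_nonpos (f' := f') (convex_Icc _ _)
    (fun t ht => (hf t ht).continuousWithinAt) (fun t ht => ?_) (fun t ht => ?_)
  · exact (hf t (interior_subset ht)).mono interior_subset
  · exact h0 t (interior_subset ht)

/-- If the derivative vanishes wherever the function is negative, nonnegativity is preserved. -/
lemma nonneg_of_deriv_zero {T : ℝ} {f f' : ℝ → ℝ}
    (hf : ∀ t ∈ Icc (0:ℝ) T, HasDerivWithinAt f (f' t) (Icc 0 T) t)
    (h0 : 0 ≤ f 0) (hneg : ∀ t ∈ Icc (0:ℝ) T, f t < 0 → f' t = 0) :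
    ∀ t ∈ Icc (0:ℝ) T, 0 ≤ f t := by
  have key : ∀ ε > 0, ∀ t ∈ Icc (0:ℝ) T, - f t ≤ ε * (1 + t) := by
    intro ε hε t ht
    refine image_le_of_deriv_right_lt_deriv_boundary (f := fun t => - f t) (f' := fun t => - f' t)
      (B := fun t => ε * (1 + t)) (B' := fun _ => ε) (a := 0) (b := T) ?_ ?_ ?_ ?_ ?_ ht
    · exact fun s hs => (hf s hs).continuousWithinAt.neg
    · intro s hs
      have := (hf s ⟨hs.1, hs.2.le⟩).neg
      exact (this.mono_of_mem_nhdsWithin (Icc_mem_nhdsGE_of_mem hs))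
    · simp; linarith
    · intro s
      simpa using ((hasDerivAt_id s).const_add 1).const_mul ε
    · intro s hs hs'
      have h1 : f s < 0 := by nlinarith [hs.1]
      rw [hneg s ⟨hs.1, hs.2.le⟩ h1]; simpa using hε
  intro t ht
  by_contra hlt
  push Not at hlt
  have := key (- f t / (2 * (1 + t))) (by have := ht.1; apply div_pos <;> linarith) t ht
  have h2 : (1 + t) ≠ 0 := by have := ht.1; positivity
  have : - f t / (2 * (1 + t)) * (1 + t) = - f t / 2 := by field_simp
  linarith

lemma fd3_eq (h : ℝ) (f : ℤ → ℝ) (i : ℤ) :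
    fd h (fd h (fd h f)) (i - 2) = (f (i + 1) - 3 * f i + 3 * f (i - 1) - f (i - 2)) / h ^ 3 := by
  unfold fd
  rw [show i - 2 + 1 + 1 + 1 = i + 1 by ring, show i - 2 + 1 + 1 = i by ring,
    show i - 2 + 1 = i - 1 by ring]
  by_cases hh : h = 0
  · simp [hh]
  · field_simp; ring

/-- Solvability of the scheme, with a bound depending only on the sup and the energy of the data. -/
theorem scheme_exists {N : ℕ} (hN : 0 < N) {L T lam h B E : ℝ} (hT : 0 < T) (hlam : 1 ≤ lam)
    (hh : 0 < h) (hNh : N * h = L) {w : ℤ → ℝ} (hw : ∀ i, w (i + N) = w i) (hw0 : ∀ i, 0 ≤ w i)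
    (hwB : ∀ i, w i ≤ B) (hE : h * psum N (fun i => (fd h w i) ^ 2) ≤ E) :
    ∃ U : ℝ → ℤ → ℝ, Scheme N h T lam (B + Real.sqrt (L * E)) U ∧ U 0 = w := by
  set K : ℝ := B + Real.sqrt (L * E) with hKdef
  have hB : 0 ≤ B := (hw0 0).trans (hwB 0)
  have hK : 0 ≤ K := add_nonneg hB (Real.sqrt_nonneg _)
  set R : ℝ := 8 * K / h ^ 3 with hRdef
  have hR : 0 ≤ R := by positivity
  have : NeZero N := ⟨hN.ne'⟩
  let Jt : (ZMod N → ℝ) → ZMod N → ℝ := fun y k =>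
    clampR 0 K (y k) * clampR 0 K (y (k - 1)) *
      clampR (-R) R ((y (k + 1) - 3 * y k + 3 * y (k - 1) - y (k - 2)) / h ^ 3)
  let V : (ZMod N → ℝ) → ZMod N → ℝ := fun y k =>
    h⁻¹ * (Jt y k - Jt y (k + 1)) - (clampR 0 K (y k)) ^ lam
  have hev : ∀ (k : ZMod N) (x y : ZMod N → ℝ), |x k - y k| ≤ ‖x - y‖ := fun k x y =>
    norm_le_pi_norm (x - y) k
  have hJt : ∀ k, BLip (fun y => Jt y k) := by
    intro k
    have c1 : ∀ j : ZMod N, BLip (fun y : ZMod N → ℝ => clampR 0 K (y j)) := fun j =>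
      (clampR_blip hK).comp (C := 1) (fun x y => by simpa using hev j x y)
    refine ((c1 k).mul (c1 (k - 1))).mul
      ((clampR_blip (by linarith)).comp (C := 8 / h ^ 3) (fun x y => ?_))
    rw [← sub_div, abs_div, abs_of_pos (by positivity : 0 < h ^ 3), div_mul_eq_mul_div]
    refine div_le_div_of_nonneg_right ?_ (by positivity)
    have a1 := abs_le.1 (hev (k + 1) x y)
    have a2 := abs_le.1 (hev k x y)
    have a3 := abs_le.1 (hev (k - 1) x y)
    have a4 := abs_le.1 (hev (k - 2) x y)
    rw [abs_le]; constructor <;> linarith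
  have hV : ∀ k, BLip (fun y => V y k) := fun k =>
    (((hJt k).sub (hJt (k + 1))).const_mul _).sub
      ((rpow_blip hK hlam).comp (C := 1) (fun x y => by simpa using hev k x y))
  -- the periodic lattice datum, read on `ZMod N`
  have hwper : ∀ i : ℤ, w ((i : ZMod N).val : ℤ) = w i := by
    intro i
    have hp : Function.Periodic w (N : ℤ) := hw
    rw [ZMod.val_intCast]
    have := hp.int_mul (i / N) (i % N)
    rw [← this]; congr 1
    have := Int.emod_add_mul_ediv i N
    push_cast; linarith
  obtain ⟨y, hy0, hy⟩ := ode_exists V hV hT (fun k => w (k.val : ℤ))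
  set U : ℝ → ℤ → ℝ := fun t i => y (clampR 0 T t) (i : ZMod N) with hUdef
  have hUper : ∀ t i, U t (i + N) = U t i := by intro t i; simp [hUdef]
  have hcl : ∀ t ∈ Icc (0:ℝ) T, clampR 0 T t = t := fun t ht => clampR_of_mem ht.1 ht.2
  have hU0 : U 0 = w := by
    ext i
    simp only [hUdef]; rw [hcl 0 ⟨le_rfl, hT.le⟩, hy0]; exact hwper i
  -- the truncated flux and absorption on the lattice
  set J : ℝ → ℤ → ℝ := fun t i => clampR 0 K (U t i) * clampR 0 K (U t (i - 1)) *
      clampR (-R) R (fd h (fd h (fd h (U t))) (i - 2)) with hJ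
  set a : ℝ → ℤ → ℝ := fun t i => (clampR 0 K (U t i)) ^ lam with ha
  have hJper : ∀ t i, J t (i + N) = J t i := by
    intro t i
    simp only [hJ]
    rw [hUper, show i + (N:ℤ) - 1 = (i - 1) + N by ring, hUper,
      show i + (N:ℤ) - 2 = (i - 2) + N by ring,
      fd_periodic (fd_periodic (fd_periodic (hUper t)))]
  have haper : ∀ t i, a t (i + N) = a t i := by intro t i; simp only [ha]; rw [hUper]
  have hode : ∀ t ∈ Icc (0:ℝ) T, ∀ i, HasDerivWithinAt (fun s => U s i)
      (-(fd h (J t) i) - a t i) (Icc 0 T) t := by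
    intro t ht i
    have h1 := (hasDerivWithinAt_pi.1 (hy t ht)) (i : ZMod N)
    have h2 : HasDerivWithinAt (fun s => U s i) (V (y t) (i : ZMod N)) (Icc 0 T) t := by
      refine h1.congr_of_mem (fun s hs => ?_) ht
      simp only [hUdef]; rw [hcl s hs]
    convert h2 using 1
    have e : ∀ j : ℤ, J t j = Jt (y t) (j : ZMod N) := by
      intro j
      simp only [hJ, Jt]
      rw [fd3_eq]
      simp only [hUdef]; rw [hcl t ht]; push_cast; rfl
    unfold fd
    simp only [V]
    rw [e, e]; push_cast
    simp only [ha, hUdef]; rw [hcl t ht]; field_simp; ring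
  have hUnn : ∀ i, ∀ t ∈ Icc (0:ℝ) T, 0 ≤ U t i := by
    intro i
    refine nonneg_of_deriv_zero (fun t ht => hode t ht i) (by rw [hU0]; exact hw0 i) ?_
    intro t ht hlt
    have hc : clampR 0 K (U t i) = 0 := by
      unfold clampR; rw [min_eq_right (hlt.le.trans hK), max_eq_left hlt.le]
    have e1 : J t i = 0 := by simp only [hJ]; rw [hc]; ring
    have e2 : J t (i + 1) = 0 := by
      simp only [hJ]; rw [show i + 1 - 1 = i by ring, hc]; ring
    unfold fd
    rw [e1, e2]
    simp only [ha]; rw [hc, Real.zero_rpow (by linarith)]; simp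
  have hann : ∀ t i, 0 ≤ a t i := fun t i => Real.rpow_nonneg (clampR_mem hK _).1 _
  have hmass : ∀ t ∈ Icc (0:ℝ) T, psum N (U t) ≤ psum N w := by
    intro t ht
    have := antitone_of_hasDerivWithin (f := fun s => psum N (U s))
      (fun t ht => hasDeriv_mass hJper (hode t ht))
      (fun t _ => by linarith [psum_nonneg (N := N) (hann t)]) ⟨le_rfl, hT.le⟩ ht ht.1
    simpa [hU0] using this
  have hen : ∀ t ∈ Icc (0:ℝ) T, h * psum N (fun i => (fd h (U t) i) ^ 2) ≤ E := by
    intro t ht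
    have := antitone_of_hasDerivWithin (f := fun s => psum N (fun i => (fd h (U s) i) ^ 2))
      (fun t ht => hasDeriv_energy hUper hJper haper (hode t ht))
      (fun t _ => ?_) ⟨le_rfl, hT.le⟩ ht ht.1
    · simp only [hU0] at this
      exact (mul_le_mul_of_nonneg_left this hh.le).trans hE
    · have p1 : 0 ≤ psum N (fun i => J t i * fd h (fd h (fd h (U t))) (i - 2)) := by
        refine psum_nonneg fun i => ?_
        simp only [hJ]
        have c1 := (clampR_mem hK (U t i)).1
        have c2 := (clampR_mem hK (U t (i - 1))).1
        rw [mul_assoc]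
        refine mul_nonneg (mul_nonneg c1 c2) ?_
        set z := fd h (fd h (fd h (U t))) (i - 2)
        rcases le_total 0 z with hz | hz
        · exact mul_nonneg (le_max_of_le_right (le_min hR hz)) hz
        · refine mul_nonneg_of_nonpos_of_nonpos ?_ hz
          exact max_le (by linarith) ((min_le_right _ _).trans hz)
      have p2 : 0 ≤ psum N (fun i => fd h (U t) i * fd h (a t) i) := by
        refine psum_nonneg fun i => ?_
        unfold fd
        rw [div_mul_div_comm]
        refine div_nonneg ?_ (by positivity)
        have mono : Monotone (fun x => (clampR 0 K x) ^ lam) := fun x y hxy =>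
          Real.rpow_le_rpow (clampR_mem hK _).1 (clampR_mono _ _ hxy) (by linarith)
        rcases le_total (U t (i + 1)) (U t i) with hle | hle
        · have := mono hle
          exact mul_nonneg_of_nonpos_of_nonpos (by linarith) (by simp only [ha]; linarith [this])
        · have := mono hle
          exact mul_nonneg (by linarith) (by simp only [ha]; linarith [this])
      linarith
  have hUK : ∀ t ∈ Icc (0:ℝ) T, ∀ i, U t i ≤ K := by
    intro t ht i
    -- some node lies below the initial sup, by the decay of mass
    obtain ⟨j, hj, hjB⟩ : ∃ j ∈ Finset.range N, U t ((j : ℕ) : ℤ) ≤ B := by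
      by_contra hcon
      push Not at hcon
      have h1 : psum N (fun _ => B) < psum N (U t) :=
        Finset.sum_lt_sum_of_nonempty ⟨0, Finset.mem_range.2 hN⟩ hcon
      have h2 : psum N w ≤ psum N (fun _ => B) := psum_mono hwB
      linarith [hmass t ht]
    obtain ⟨p, hp, hpi⟩ : ∃ p : ℕ, p ≤ N ∧ U t ((j : ℤ) + p) = U t i := by
      have hNz : (0:ℤ) < N := by exact_mod_cast hN
      refine ⟨((i - j) % N).toNat, ?_, ?_⟩
      · have := Int.emod_lt_of_pos (i - j) hNz
        omega
      · rw [Int.toNat_of_nonneg (Int.emod_nonneg _ hNz.ne')]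
        have hp : Function.Periodic (U t) (N : ℤ) := hUper t
        rw [← hp.int_mul ((i - j) / N)]
        congr 1
        have := Int.emod_add_mul_ediv (i - j) N
        push_cast; linarith
    have h1 := sq_sub_le_energy hh (hUper t) j p hp
    rw [hpi] at h1
    have h2 : (U t i - U t j) ^ 2 ≤ L * E := by
      refine h1.trans ?_
      have : (p:ℝ) * h ≤ L := by
        rw [← hNh]; exact mul_le_mul_of_nonneg_right (by exact_mod_cast hp) hh.le
      exact mul_le_mul this (hen t ht)
        (mul_nonneg hh.le (psum_nonneg fun _ => sq_nonneg _)) (by rw [← hNh]; positivity)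
    have h3 := Real.le_sqrt_of_sq_le h2
    linarith
  have hclT : ∀ t, clampR 0 T t ∈ Icc (0:ℝ) T := fun t => clampR_mem hT.le t
  have hfro : ∀ t, U t = U (clampR 0 T t) := by
    intro t; ext i; simp only [hUdef]; rw [hcl _ (hclT t)]
  refine ⟨U, ⟨hh, hUper, ?_, ?_, ?_, hfro, ?_⟩, hU0⟩
  · intro t i; rw [hfro]; exact hUnn i _ (hclT t)
  · intro t i; rw [hfro]; exact hUK _ (hclT t) i
  · intro i
    have hc : ContinuousOn (fun t => y t (i : ZMod N)) (Icc 0 T) := fun t ht =>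
      ((hasDerivWithinAt_pi.1 (hy t ht)) (i : ZMod N)).continuousWithinAt
    exact hc.comp_continuous (by unfold clampR; fun_prop) hclT
  · intro t ht i
    have hK' : ∀ j, clampR 0 K (U t j) = U t j := fun j =>
      clampR_of_mem (hUnn j t ht) (hUK t ht j)
    have e : J t = flux h (U t) := by
      ext j
      simp only [hJ, flux]; rw [hK', hK']
      congr 1
      have b1 := hUnn (j + 1) t ht
      have b2 := hUnn j t ht
      have b3 := hUnn (j - 1) t ht
      have b4 := hUnn (j - 2) t ht
      have b1' := hUK t ht (j + 1)
      have b2' := hUK t ht j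
      have b3' := hUK t ht (j - 1)
      have b4' := hUK t ht (j - 2)
      rw [fd3_eq]
      apply clampR_of_mem
      · rw [hRdef, ← neg_div]; exact div_le_div_of_nonneg_right (by linarith) (by positivity)
      · rw [hRdef]; exact div_le_div_of_nonneg_right (by linarith) (by positivity)
    have := hode t ht i
    rw [e] at this
    simpa only [ha, hK'] using this

/-! ### A priori estimates for the scheme -/

/-- The discrete Dirichlet energy `h ∑ (Du)²`. -/
def en (N : ℕ) (h : ℝ) (f : ℤ → ℝ) : ℝ := h * psum N (fun i => (fd h f i) ^ 2)

/-- The discrete dissipation `h ∑ u_i u_{i-1} ((D³u)_{i-2})²`. -/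
def diss (N : ℕ) (h : ℝ) (f : ℤ → ℝ) : ℝ :=
  h * psum N (fun i => f i * f (i - 1) * (fd h (fd h (fd h f)) (i - 2)) ^ 2)

lemma flux_periodic {N : ℕ} {h : ℝ} {f : ℤ → ℝ} (hf : ∀ i, f (i + N) = f i) (i : ℤ) :
    flux h f (i + N) = flux h f i := by
  unfold flux
  rw [hf, show i + (N:ℤ) - 1 = (i - 1) + N by ring, hf,
      show i + (N:ℤ) - 2 = (i - 2) + N by ring,
      fd_periodic (fd_periodic (fd_periodic hf))]

lemma en_nonneg {N : ℕ} {h : ℝ} (hh : 0 < h) (f : ℤ → ℝ) : 0 ≤ en N h f :=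
  mul_nonneg hh.le (psum_nonneg fun _ => sq_nonneg _)

section
variable {N : ℕ} {h T lam K : ℝ} {U : ℝ → ℤ → ℝ}

lemma Scheme.diss_nonneg (S : Scheme N h T lam K U) (t : ℝ) : 0 ≤ diss N h (U t) :=
  mul_nonneg S.hpos.le (psum_nonneg fun _ =>
    mul_nonneg (mul_nonneg (S.nonneg _ _) (S.nonneg _ _)) (sq_nonneg _))

/-- The energy identity, with the absorption term discarded. -/
lemma Scheme.deriv_en (S : Scheme N h T lam K U) (hlam : 1 ≤ lam) {t : ℝ} (ht : t ∈ Icc 0 T) :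
    ∃ e' : ℝ, HasDerivWithinAt (fun s => en N h (U s)) e' (Icc 0 T) t ∧
      e' ≤ -2 * diss N h (U t) := by
  have h1 := hasDeriv_energy (h := h) (T := T) (U := U) (J := fun t => flux h (U t))
    (a := fun t i => U t i ^ lam) (N := N) S.per (fun t => flux_periodic (S.per t))
    (fun t i => by simp only [S.per]) (t := t) (S.ode t ht)
  refine ⟨_, h1.const_mul h, ?_⟩
  have p2 : 0 ≤ psum N (fun i => fd h (U t) i * fd h (fun i => U t i ^ lam) i) := by
    refine psum_nonneg fun i => ?_
    have hh := S.hpos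
    unfold fd
    rw [div_mul_div_comm]
    refine div_nonneg ?_ (by positivity)
    rcases le_total (U t (i + 1)) (U t i) with hle | hle
    · have := Real.rpow_le_rpow (S.nonneg _ _) hle (by linarith : 0 ≤ lam)
      exact mul_nonneg_of_nonpos_of_nonpos (by linarith) (by linarith)
    · have := Real.rpow_le_rpow (S.nonneg _ _) hle (by linarith : 0 ≤ lam)
      exact mul_nonneg (by linarith) (by linarith)
  have e : psum N (fun i => flux h (U t) i * fd h (fd h (fd h (U t))) (i - 2))
      = psum N (fun i => U t i * U t (i - 1) * (fd h (fd h (fd h (U t))) (i - 2)) ^ 2) := by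
    congr 1; ext i; unfold flux; ring
  rw [e]; unfold diss
  have := mul_nonneg S.hpos.le p2
  linarith

lemma Scheme.cont_fd (c : ℝ → ℤ → ℝ) (hc : ∀ i, Continuous fun t => c t i) (i : ℤ) :
    Continuous fun t => fd h (c t) i := by
  unfold fd; exact ((hc _).sub (hc _)).div_const h

lemma Scheme.cont_fd3 (S : Scheme N h T lam K U) (i : ℤ) :
    Continuous fun t => fd h (fd h (fd h (U t))) i :=
  Scheme.cont_fd _ (Scheme.cont_fd _ (Scheme.cont_fd _ S.cont)) i

lemma Scheme.cont_en (S : Scheme N h T lam K U) : Continuous fun t => en N h (U t) := by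
  unfold en psum
  exact continuous_const.mul (continuous_finsetSum _ fun i _ => (Scheme.cont_fd _ S.cont _).pow 2)

lemma Scheme.cont_diss (S : Scheme N h T lam K U) : Continuous fun t => diss N h (U t) := by
  unfold diss psum
  exact continuous_const.mul (continuous_finsetSum _ fun i _ =>
    ((S.cont _).mul (S.cont _)).mul ((S.cont_fd3 _).pow 2))

lemma Scheme.en_antitone (S : Scheme N h T lam K U) (hlam : 1 ≤ lam) :
    AntitoneOn (fun t => en N h (U t)) (Icc 0 T) := by
  choose! e' he hle using fun t (ht : t ∈ Icc 0 T) => S.deriv_en hlam ht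
  exact antitone_of_hasDerivWithin he fun t ht =>
    (hle t ht).trans (by linarith [S.diss_nonneg t])

lemma Scheme.en_le (S : Scheme N h T lam K U) (hT : 0 ≤ T) (hlam : 1 ≤ lam) (t : ℝ) :
    en N h (U t) ≤ en N h (U 0) := by
  rw [S.froz t]
  have hm := clampR_mem hT t
  exact S.en_antitone hlam ⟨le_rfl, hT⟩ hm hm.1

/-- The energy estimate of order `2q`. -/
lemma Scheme.energy_pow (S : Scheme N h T lam K U) (hlam : 1 ≤ lam) {q : ℝ} (hq : 1 ≤ q)
    {t : ℝ} (ht : t ∈ Icc 0 T) :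
    en N h (U t) ^ q + 2 * ∫ s in (0:ℝ)..t, en N h (U s) ^ (q - 1) * diss N h (U s)
      ≤ en N h (U 0) ^ q := by
  set G : ℝ → ℝ := fun s => en N h (U s) ^ (q - 1) * diss N h (U s) with hG
  have hGc : Continuous G := by
    refine Continuous.mul ?_ S.cont_diss
    exact S.cont_en.rpow_const fun s => Or.inr (by linarith)
  choose! e' he hle using fun t (ht : t ∈ Icc 0 T) => S.deriv_en hlam ht
  have hd : ∀ s ∈ Icc (0:ℝ) T, HasDerivWithinAt
      (fun s => en N h (U s) ^ q + 2 * ∫ r in (0:ℝ)..s, G r)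
      (e' s * q * en N h (U s) ^ (q - 1) + 2 * G s) (Icc 0 T) s := by
    intro s hs
    refine ((he s hs).rpow_const (Or.inr hq)).add ?_
    exact ((hGc.integral_hasStrictDerivAt 0 s).hasDerivAt.const_mul 2).hasDerivWithinAt
  have := antitone_of_hasDerivWithin hd (fun s hs => ?_) ⟨le_rfl, ht.1.trans ht.2⟩ ht ht.1
  · simpa using this
  · have h1 := hle s hs
    have h2 := S.diss_nonneg s
    have h3 : 0 ≤ en N h (U s) ^ (q - 1) := Real.rpow_nonneg (en_nonneg S.hpos _) _
    have h4 : 0 ≤ en N h (U s) ^ (q - 1) * diss N h (U s) := mul_nonneg h3 h2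
    simp only [hG]
    have h5 : e' s * q ≤ -2 * diss N h (U s) := by nlinarith
    nlinarith [mul_le_mul_of_nonneg_right h5 h3]

lemma Scheme.holder (S : Scheme N h T lam K U) (hT : 0 ≤ T) (hlam : 1 ≤ lam) (t : ℝ) (i : ℤ)
    (p : ℕ) (hp : p ≤ N) :
    (U t (i + p) - U t i) ^ 2 ≤ (p * h) * en N h (U 0) := by
  have hh := S.hpos
  exact (sq_sub_le_energy S.hpos (S.per t) i p hp).trans
    (mul_le_mul_of_nonneg_left (S.en_le hT hlam t) (by positivity))

/-- Double averages `∑_{a,b<p} u_{i+a+b}` vary slowly in time: their time derivative only involves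
sums of the flux, controlled by the dissipation. -/
lemma Scheme.avg_time (S : Scheme N h T lam K U) (hT : 0 ≤ T) (hlam : 1 ≤ lam)
    {E κ : ℝ} (hE : en N h (U 0) ≤ E) (hκ : 0 < κ) (i : ℤ) (p : ℕ) (hp : p ≤ N)
    {s t : ℝ} (hs : s ∈ Icc 0 T) (ht : t ∈ Icc 0 T) (hst : s ≤ t) :
    |(∑ a ∈ Finset.range p, ∑ b ∈ Finset.range p, U t (i + a + b))
      - (∑ a ∈ Finset.range p, ∑ b ∈ Finset.range p, U s (i + a + b))|
      ≤ (2 * p * κ / h + p ^ 2 * K ^ lam) * (t - s) + K ^ 2 * E / (4 * κ * h ^ 2) := by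
  have hh := S.hpos
  choose! e' he hle using fun t (ht : t ∈ Icc 0 T) => S.deriv_en hlam ht
  set B : ℝ → ℝ := fun t => ∑ a ∈ Finset.range p, ∑ b ∈ Finset.range p, U t (i + a + b)
  set B' : ℝ → ℝ := fun t => ∑ a ∈ Finset.range p, ∑ b ∈ Finset.range p,
    (-(fd h (flux h (U t)) (i + a + b)) - U t (i + a + b) ^ lam)
  have hB : ∀ t ∈ Icc (0:ℝ) T, HasDerivWithinAt B (B' t) (Icc 0 T) t := fun t ht =>
    HasDerivWithinAt.fun_sum fun a _ => HasDerivWithinAt.fun_sum fun b _ => S.ode t ht _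
  -- one shifted sum of the flux is controlled by the dissipation
  have hJ : ∀ t (k : ℤ), ∑ a ∈ Finset.range p, |flux h (U t) (k + a)|
      ≤ p * κ + K ^ 2 / (4 * κ * h) * diss N h (U t) := by
    intro t k
    set m : ℤ → ℝ := fun i => U t i * U t (i - 1) * (fd h (fd h (fd h (U t))) (i - 2)) ^ 2
    have hm0 : ∀ i, 0 ≤ m i := fun _ =>
      mul_nonneg (mul_nonneg (S.nonneg _ _) (S.nonneg _ _)) (sq_nonneg _)
    have hpt : ∀ j : ℤ, |flux h (U t) j| ≤ κ + K ^ 2 / (4 * κ) * m j := by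
      intro j
      have hsq : flux h (U t) j ^ 2 ≤ K ^ 2 * m j := by
        have : flux h (U t) j ^ 2 = U t j * U t (j - 1) * m j := by
          simp only [m, flux]; ring
        rw [this]
        refine mul_le_mul_of_nonneg_right ?_ (hm0 j)
        have := mul_le_mul (S.le_K t j) (S.le_K t (j - 1)) (S.nonneg _ _)
          ((S.nonneg t j).trans (S.le_K t j))
        nlinarith
      rw [← sq_abs] at hsq
      have h1 : |flux h (U t) j| ≤ κ + |flux h (U t) j| ^ 2 / (4 * κ) := by
        have : κ + |flux h (U t) j| ^ 2 / (4 * κ) - |flux h (U t) j|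
            = (2 * κ - |flux h (U t) j|) ^ 2 / (4 * κ) := by field_simp; ring
        have h2 : 0 ≤ (2 * κ - |flux h (U t) j|) ^ 2 / (4 * κ) := by positivity
        linarith
      refine h1.trans (by rw [div_mul_eq_mul_div]; gcongr)
    calc ∑ a ∈ Finset.range p, |flux h (U t) (k + a)|
        ≤ ∑ a ∈ Finset.range p, (κ + K ^ 2 / (4 * κ) * m (k + a)) :=
          Finset.sum_le_sum fun a _ => hpt _
      _ = p * κ + K ^ 2 / (4 * κ) * ∑ a ∈ Finset.range p, m (k + a) := by
          rw [Finset.sum_add_distrib, ← Finset.mul_sum]; simp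
      _ ≤ p * κ + K ^ 2 / (4 * κ) * psum N m := by
          gcongr
          rw [← psum_shift (f := m) _ k]
          · unfold psum
            calc _ ≤ ∑ a ∈ Finset.range N, m (k + a) :=
                  Finset.sum_le_sum_of_subset_of_nonneg (Finset.range_mono hp)
                    fun _ _ _ => hm0 _
              _ = _ := Finset.sum_congr rfl fun k _ => by rw [add_comm]
          · intro j
            simp only [m]
            rw [S.per, show j + (N:ℤ) - 1 = (j - 1) + N by ring, S.per,
              show j + (N:ℤ) - 2 = (j - 2) + N by ring,
              fd_periodic (fd_periodic (fd_periodic (S.per t)))]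
      _ = _ := by unfold diss; field_simp; simp only [m]
  have hB' : ∀ t, |B' t| ≤ (2 * p * κ / h + p ^ 2 * K ^ lam)
      + K ^ 2 / (4 * κ * h ^ 2) * (2 * diss N h (U t)) := by
    intro t
    have hin : ∀ a : ℕ, ∑ b ∈ Finset.range p,
        (-(fd h (flux h (U t)) (i + a + b)) - U t (i + a + b) ^ lam)
        = -((flux h (U t) (i + p + a) - flux h (U t) (i + a)) / h)
          - ∑ b ∈ Finset.range p, U t (i + a + b) ^ lam := by
      intro a
      rw [Finset.sum_sub_distrib, Finset.sum_neg_distrib]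
      congr 2
      have := Finset.sum_range_sub (fun b : ℕ => flux h (U t) (i + a + b)) p
      simp only [Nat.cast_zero, add_zero] at this
      rw [show i + (p:ℤ) + a = i + a + p by ring, ← this, Finset.sum_div]
      refine Finset.sum_congr rfl fun b _ => ?_
      unfold fd; push_cast; ring_nf
    have hφ : ∀ j, |U t j ^ lam| ≤ K ^ lam := fun j => by
      rw [abs_of_nonneg (Real.rpow_nonneg (S.nonneg _ _) _)]
      exact Real.rpow_le_rpow (S.nonneg _ _) (S.le_K _ _) (by linarith)
    calc |B' t| = |∑ a ∈ Finset.range p, (-((flux h (U t) (i + p + a) - flux h (U t) (i + a)) / h)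
          - ∑ b ∈ Finset.range p, U t (i + a + b) ^ lam)| := by
            simp only [B']; rw [Finset.sum_congr rfl fun a _ => hin a]
      _ ≤ ∑ a ∈ Finset.range p, ((|flux h (U t) (i + p + a)| + |flux h (U t) (i + a)|) / h
          + p * K ^ lam) := by
            refine (Finset.abs_sum_le_sum_abs _ _).trans (Finset.sum_le_sum fun a _ => ?_)
            refine (abs_sub _ _).trans (add_le_add ?_ ?_)
            · rw [abs_neg, abs_div, abs_of_pos hh]
              exact div_le_div_of_nonneg_right (abs_sub _ _) hh.le
            · refine (Finset.abs_sum_le_sum_abs _ _).trans ?_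
              refine (Finset.sum_le_sum fun b _ => hφ _).trans (by simp)
      _ = (∑ a ∈ Finset.range p, |flux h (U t) (i + p + a)|
            + ∑ a ∈ Finset.range p, |flux h (U t) (i + a)|) / h + p ^ 2 * K ^ lam := by
            rw [Finset.sum_add_distrib, ← Finset.sum_div, Finset.sum_add_distrib]
            simp; ring
      _ ≤ ((p * κ + K ^ 2 / (4 * κ * h) * diss N h (U t))
            + (p * κ + K ^ 2 / (4 * κ * h) * diss N h (U t))) / h + p ^ 2 * K ^ lam := by
            gcongr
            · exact hJ t (i + p)
            · exact hJ t i
      _ = _ := by field_simp; ring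
  set c1 := (2 * p * κ / h + p ^ 2 * K ^ lam)
  set c2 := K ^ 2 / (4 * κ * h ^ 2)
  have hc2 : 0 ≤ c2 := by positivity
  have m1 := antitone_of_hasDerivWithin (T := T)
    (f := fun t => B t - c1 * t + c2 * en N h (U t)) (f' := fun t => B' t - c1 * 1 + c2 * e' t)
    (fun t ht => ((hB t ht).sub ((hasDerivWithinAt_id t _).const_mul c1)).add
      ((he t ht).const_mul c2))
    (fun t ht => by
      have := (abs_le.1 (hB' t)).2
      nlinarith [mul_le_mul_of_nonneg_left (hle t ht) hc2]) hs ht hst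
  have m2 := antitone_of_hasDerivWithin (T := T)
    (f := fun t => - B t - c1 * t + c2 * en N h (U t))
    (f' := fun t => - B' t - c1 * 1 + c2 * e' t)
    (fun t ht => ((hB t ht).neg.sub ((hasDerivWithinAt_id t _).const_mul c1)).add
      ((he t ht).const_mul c2))
    (fun t ht => by
      have := (abs_le.1 (hB' t)).1
      nlinarith [mul_le_mul_of_nonneg_left (hle t ht) hc2]) hs ht hst
  have b1 : c2 * en N h (U s) - c2 * en N h (U t) ≤ K ^ 2 * E / (4 * κ * h ^ 2) := by
    have e1 := (S.en_le hT hlam s).trans hE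
    have e2 := en_nonneg (N := N) hh (U t)
    have : K ^ 2 * E / (4 * κ * h ^ 2) = c2 * E := by simp only [c2]; ring
    rw [this]; nlinarith
  simp only at m1 m2
  rw [abs_le]; constructor <;> linarith

/-- Asymptotic time equicontinuity, uniform in the scheme. -/
lemma scheme_time {L T lam K E : ℝ} (hL : 0 < L) (hT : 0 ≤ T) (hlam : 1 ≤ lam) (hE0 : 0 ≤ E)
    (hK0 : 0 ≤ K) {ε : ℝ} (hε : 0 < ε) :
    ∃ δ > 0, ∃ h0 > 0, ∀ (N : ℕ) (h : ℝ) (U : ℝ → ℤ → ℝ), Scheme N h T lam K U → N * h = L →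
      en N h (U 0) ≤ E → h ≤ h0 → ∀ s t : ℝ, |t - s| ≤ δ → ∀ i, |U t i - U s i| ≤ ε := by
  -- spatial scale `d` of the averages
  obtain ⟨d, hd, hdL, hdE⟩ : ∃ d > 0, 4 * d ≤ L ∧ 4 * d * E ≤ (ε / 5) ^ 2 := by
    refine ⟨min (L / 4) ((ε / 5) ^ 2 / (4 * (E + 1))), by positivity, ?_, ?_⟩
    · have := min_le_left (L / 4) ((ε / 5) ^ 2 / (4 * (E + 1))); linarith
    · have h1 := min_le_right (L / 4) ((ε / 5) ^ 2 / (4 * (E + 1)))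
      rw [le_div_iff₀ (by positivity)] at h1
      have h2 : 0 < min (L / 4) ((ε / 5) ^ 2 / (4 * (E + 1))) := by positivity
      nlinarith
  obtain ⟨κ, hκ, hκ1⟩ : ∃ κ > 0, K ^ 2 * E / (4 * κ * d ^ 2) ≤ ε / 5 := by
    refine ⟨(K ^ 2 * E + 1) / (4 * d ^ 2 * (ε / 5)), by positivity, ?_⟩
    rw [div_le_iff₀ (by positivity)]
    have : ε / 5 * (4 * ((K ^ 2 * E + 1) / (4 * d ^ 2 * (ε / 5))) * d ^ 2) = K ^ 2 * E + 1 := by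
      field_simp
    rw [this]; linarith
  have hKl : 0 ≤ K ^ lam := Real.rpow_nonneg hK0 _
  set c := 2 * κ / d + K ^ lam with hc
  have hcpos : 0 < c := by positivity
  refine ⟨ε / 5 / c, by positivity, d, hd, ?_⟩
  intro N h U S hNh hE hh0
  have hh := S.hpos
  -- reduction to ordered times inside `[0,T]`
  have main : ∀ s ∈ Icc (0:ℝ) T, ∀ t ∈ Icc (0:ℝ) T, s ≤ t → t - s ≤ ε / 5 / c →
      ∀ i, |U t i - U s i| ≤ ε := by
    intro s hs t ht hst hδ i
    set p : ℕ := ⌈d / h⌉₊ with hp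
    have hp1 : d ≤ p * h := by
      have := Nat.le_ceil (d / h); rwa [div_le_iff₀ hh] at this
    have hp2 : p * h ≤ 2 * d := by
      have := (Nat.ceil_lt_add_one (by positivity : 0 ≤ d / h)).le
      have h2 := mul_le_mul_of_nonneg_right this hh.le
      rw [add_mul, div_mul_cancel₀ _ hh.ne'] at h2
      linarith
    have hppos : (0:ℝ) < p := by
      by_contra hcon
      have : (p:ℝ) * h ≤ 0 := mul_nonpos_of_nonpos_of_nonneg (by linarith) hh.le
      linarith
    have hpN : 2 * p ≤ N := by
      have : (2 * p : ℝ) * h ≤ N * h := by rw [hNh]; linarith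
      exact_mod_cast le_of_mul_le_mul_right this hh
    -- the averages are close to nodal values
    have havg : ∀ r, |(∑ a ∈ Finset.range p, ∑ b ∈ Finset.range p, U r (i + a + b)) / p ^ 2
        - U r i| ≤ ε / 5 := by
      intro r
      have hpt : ∀ a ∈ Finset.range p, ∀ b ∈ Finset.range p, |U r (i + a + b) - U r i| ≤ ε / 5 := by
        intro a ha b hb
        have ha' := Finset.mem_range.1 ha
        have hb' := Finset.mem_range.1 hb
        have h1 := S.holder hT hlam r i (a + b) (by omega)
        have h2 : (U r (i + a + b) - U r i) ^ 2 ≤ (ε / 5) ^ 2 := by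
          have e1 : i + (a:ℤ) + b = i + ((a + b : ℕ) : ℤ) := by push_cast; ring
          rw [e1]
          refine h1.trans (le_trans ?_ hdE)
          have h3 : ((a + b : ℕ) : ℝ) ≤ 2 * p := by
            have : a + b ≤ 2 * p := by omega
            exact_mod_cast this
          have h4 : ((a + b : ℕ) : ℝ) * h ≤ 4 * d := by
            have := mul_le_mul_of_nonneg_right h3 hh.le; linarith
          exact mul_le_mul h4 hE (en_nonneg hh _) (by positivity)
        exact abs_le_of_sq_le_sq h2 (by positivity)
      have e : (∑ a ∈ Finset.range p, ∑ b ∈ Finset.range p, U r (i + a + b)) / p ^ 2 - U r i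
          = (∑ a ∈ Finset.range p, ∑ b ∈ Finset.range p, (U r (i + a + b) - U r i)) / p ^ 2 := by
        simp only [Finset.sum_sub_distrib]
        simp; field_simp
      rw [e, abs_div, abs_of_pos (by positivity : (0:ℝ) < p ^ 2), div_le_iff₀ (by positivity)]
      calc _ ≤ ∑ a ∈ Finset.range p, ∑ b ∈ Finset.range p, ε / 5 := by
            refine (Finset.abs_sum_le_sum_abs _ _).trans (Finset.sum_le_sum fun a ha => ?_)
            exact (Finset.abs_sum_le_sum_abs _ _).trans (Finset.sum_le_sum fun b hb => hpt a ha b hb)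
        _ = _ := by simp; ring
    have hB := S.avg_time hT hlam hE hκ i p (by omega) hs ht hst
    have hB2 : |(∑ a ∈ Finset.range p, ∑ b ∈ Finset.range p, U t (i + a + b)) / p ^ 2
      - (∑ a ∈ Finset.range p, ∑ b ∈ Finset.range p, U s (i + a + b)) / p ^ 2| ≤ 2 * (ε / 5) := by
      rw [← sub_div, abs_div, abs_of_pos (by positivity : (0:ℝ) < p ^ 2),
        div_le_iff₀ (by positivity)]
      refine hB.trans ?_
      have t1 : (2 * p * κ / h + p ^ 2 * K ^ lam) ≤ p ^ 2 * c := by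
        have : 2 * p * κ / h ≤ p ^ 2 * (2 * κ / d) := by
          rw [div_le_iff₀ hh]
          have : p ^ 2 * (2 * κ / d) * h = 2 * p * κ * ((p * h) / d) := by ring
          rw [this]
          have h1 : 1 ≤ (p * h) / d := by rw [le_div_iff₀ hd]; linarith
          have h2 : 0 ≤ 2 * p * κ := by positivity
          nlinarith
        rw [hc, mul_add]; linarith
      have t2 : (2 * p * κ / h + p ^ 2 * K ^ lam) * (t - s) ≤ p ^ 2 * (ε / 5) := by
        calc _ ≤ p ^ 2 * c * (ε / 5 / c) :=
              mul_le_mul t1 hδ (by linarith) (by positivity)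
          _ = _ := by field_simp
      have t3 : K ^ 2 * E / (4 * κ * h ^ 2) ≤ p ^ 2 * (ε / 5) := by
        have : K ^ 2 * E / (4 * κ * h ^ 2) ≤ p ^ 2 * (K ^ 2 * E / (4 * κ * d ^ 2)) := by
          rw [div_le_iff₀ (by positivity)]
          have e : p ^ 2 * (K ^ 2 * E / (4 * κ * d ^ 2)) * (4 * κ * h ^ 2)
              = K ^ 2 * E * ((p * h) / d) ^ 2 := by field_simp
          rw [e]
          have h1 : 1 ≤ ((p * h) / d) ^ 2 := by
            have : 1 ≤ (p * h) / d := by rw [le_div_iff₀ hd]; linarith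
            nlinarith
          have h2 : 0 ≤ K ^ 2 * E := by positivity
          nlinarith
        exact this.trans (mul_le_mul_of_nonneg_left hκ1 (by positivity))
      linarith
    have a1 := abs_le.1 (havg t)
    have a2 := abs_le.1 (havg s)
    have a3 := abs_le.1 hB2
    rw [abs_le]; constructor <;> linarith
  intro s t hst i
  rw [S.froz t, S.froz s]
  have hcs := clampR_mem hT s
  have hct := clampR_mem hT t
  have hlip : |clampR 0 T t - clampR 0 T s| ≤ ε / 5 / c := (clampR_lip _ _ _ _).trans hst
  rcases le_total (clampR 0 T s) (clampR 0 T t) with hle | hle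
  · exact main _ hcs _ hct hle ((le_abs_self _).trans hlip) i
  · rw [abs_sub_comm]
    exact main _ hct _ hcs hle (by rw [abs_sub_comm] at hlip; exact (le_abs_self _).trans hlip) i

end

/-! ### Sampling of the datum and compactness -/

lemma sq_integral_le {g : ℝ → ℝ} {a b : ℝ} (hab : a ≤ b) (hg : IntervalIntegrable g volume a b)
    (hg2 : IntervalIntegrable (fun x => g x ^ 2) volume a b) :
    (∫ x in a..b, g x) ^ 2 ≤ (b - a) * ∫ x in a..b, g x ^ 2 := by
  rcases hab.eq_or_lt with rfl | hlt
  · simp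
  set m := (∫ x in a..b, g x) / (b - a) with hm
  have h0 : 0 ≤ ∫ x in a..b, (g x - m) ^ 2 :=
    intervalIntegral.integral_nonneg hab fun _ _ => sq_nonneg _
  have e : ∫ x in a..b, (g x - m) ^ 2
      = (∫ x in a..b, g x ^ 2) - 2 * m * (∫ x in a..b, g x) + m ^ 2 * (b - a) := by
    have : ∀ x, (g x - m) ^ 2 = g x ^ 2 - 2 * m * g x + m ^ 2 := fun x => by ring
    simp_rw [this]
    rw [intervalIntegral.integral_add (hg2.sub (hg.const_mul _)) intervalIntegrable_const,
      intervalIntegral.integral_sub hg2 (hg.const_mul _), intervalIntegral.integral_const_mul,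
      intervalIntegral.integral_const, smul_eq_mul]
    ring
  have hba : 0 < b - a := by linarith
  have hm2 : ∫ x in a..b, g x = m * (b - a) := by rw [hm]; field_simp
  rw [e] at h0
  rw [hm2] at h0 ⊢
  nlinarith

lemma periodic_of_ac {L : ℝ} {u₀ : ℝ → ℝ} (h0per : ∀ x : ℝ, u₀ (x + L) = u₀ x) {N : ℕ}
    {h : ℝ} (hNh : N * h = L) (i : ℤ) : u₀ (((i + N : ℤ) : ℝ) * h) = u₀ ((i : ℝ) * h) := by
  push_cast; rw [add_mul, hNh, h0per]

lemma en_sample_le {L : ℝ} {u₀ g₀ : ℝ → ℝ} {N : ℕ} {h : ℝ} (hh : 0 < h) (hNh : N * h = L)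
    (h0int : ∀ a b : ℝ, IntervalIntegrable g₀ volume a b)
    (h0ac : ∀ a b : ℝ, u₀ b - u₀ a = ∫ x in a..b, g₀ x)
    (h0L2 : IntervalIntegrable (fun x => (g₀ x) ^ 2) volume 0 L) :
    en N h (fun i => u₀ (i * h)) ≤ ∫ x in (0:ℝ)..L, g₀ x ^ 2 := by
  have hsub : ∀ k < N, IntervalIntegrable (fun x => g₀ x ^ 2) volume ((k : ℕ) * h)
      (((k + 1 : ℕ) : ℝ) * h) := by
    intro k hk
    refine h0L2.mono_set ?_
    have h1 : ((k + 1 : ℕ) : ℝ) * h ≤ L := by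
      rw [← hNh]; exact mul_le_mul_of_nonneg_right (by exact_mod_cast hk) hh.le
    have h2 : (0:ℝ) ≤ k * h := by positivity
    have h3 : (k:ℝ) * h ≤ ((k + 1 : ℕ) : ℝ) * h :=
      mul_le_mul_of_nonneg_right (by push_cast; linarith) hh.le
    rw [uIcc_of_le h3, uIcc_of_le (by linarith)]
    exact Icc_subset_Icc h2 h1
  have hs := intervalIntegral.sum_integral_adjacent_intervals (f := fun x => g₀ x ^ 2)
    (μ := volume) (a := fun k : ℕ => (k : ℝ) * h) (n := N) hsub
  simp only [Nat.cast_zero, zero_mul, hNh] at hs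
  rw [← hs]
  unfold en psum
  rw [Finset.mul_sum]
  refine Finset.sum_le_sum fun k hk => ?_
  have hk' := Finset.mem_range.1 hk
  have h3 : (k:ℝ) * h ≤ ((k + 1 : ℕ) : ℝ) * h :=
    mul_le_mul_of_nonneg_right (by push_cast; linarith) hh.le
  have := sq_integral_le h3 (h0int _ _) (hsub k hk')
  rw [← h0ac] at this
  have e : ((k + 1 : ℕ) : ℝ) * h - k * h = h := by push_cast; ring
  rw [e] at this
  unfold fd
  push_cast at this ⊢
  rw [div_pow, mul_div_assoc', div_le_iff₀ (by positivity)]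
  nlinarith

/-- Arzelà–Ascoli for uniformly bounded, asymptotically equicontinuous functions. -/
lemma compactness {f : ℕ → ℝ × ℝ → ℝ} {K : ℝ} (hb : ∀ n p, f n p ∈ Icc (-K) K)
    (heq : ∀ ε > 0, ∃ δ > 0, ∀ᶠ n in atTop, ∀ p q, dist p q ≤ δ → |f n p - f n q| ≤ ε) :
    ∃ (φ : ℕ → ℕ) (g : ℝ × ℝ → ℝ), StrictMono φ ∧ Continuous g ∧
      ∀ S : Set (ℝ × ℝ), IsCompact S → ∀ ε > 0, ∀ᶠ n in atTop, ∀ p ∈ S, |f (φ n) p - g p| ≤ ε := by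
  have hc : IsCompact (Set.pi univ (fun _ : ℚ × ℚ => Icc (-K) K)) :=
    isCompact_univ_pi fun _ => isCompact_Icc
  obtain ⟨a, -, φ, hφ, hlim⟩ := hc.tendsto_subseq
    (x := fun n (q : ℚ × ℚ) => f n ((q.1 : ℝ), (q.2 : ℝ))) (fun n q _ => hb n _)
  rw [tendsto_pi_nhds] at hlim
  have hdense : ∀ (p : ℝ × ℝ), ∀ δ > 0, ∃ q : ℚ × ℚ, dist p ((q.1 : ℝ), (q.2 : ℝ)) < δ := by
    intro p δ hδ
    obtain ⟨q1, hq1⟩ := Rat.denseRange_cast.exists_dist_lt (p.1) hδ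
    obtain ⟨q2, hq2⟩ := Rat.denseRange_cast.exists_dist_lt (p.2) hδ
    exact ⟨(q1, q2), by rw [Prod.dist_eq]; exact max_lt hq1 hq2⟩
  have hcau : ∀ p, CauchySeq fun n => f (φ n) p := by
    intro p
    rw [Metric.cauchySeq_iff']
    intro ε hε
    obtain ⟨δ, hδ, hev⟩ := heq (ε / 5) (by positivity)
    obtain ⟨q, hq⟩ := hdense p δ hδ
    have h1 := hφ.tendsto_atTop.eventually hev
    have h2 := (hlim q).eventually (Metric.ball_mem_nhds _ (show 0 < ε / 5 by positivity))
    obtain ⟨n0, hn0⟩ := (h1.and h2).exists_forall_of_atTop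
    refine ⟨n0, fun n hn => ?_⟩
    have a1 := abs_le.1 ((hn0 n hn).1 p _ hq.le)
    have a2 := abs_le.1 ((hn0 n0 le_rfl).1 p _ hq.le)
    have a3 := (hn0 n hn).2
    have a4 := (hn0 n0 le_rfl).2
    simp only [Function.comp_def, Real.dist_eq] at a3 a4 ⊢
    rw [abs_lt] at a3 a4 ⊢
    constructor <;> linarith
  choose g hg using fun p => cauchySeq_tendsto_of_complete (hcau p)
  have hgeq : ∀ ε > 0, ∃ δ > 0, ∀ p q, dist p q ≤ δ → |g p - g q| ≤ ε := by
    intro ε hε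
    obtain ⟨δ, hδ, hev⟩ := heq ε hε
    refine ⟨δ, hδ, fun p q hpq => ?_⟩
    have h1 := hφ.tendsto_atTop.eventually hev
    exact le_of_tendsto ((hg p).sub (hg q)).abs (h1.mono fun n hn => hn p q hpq)
  refine ⟨φ, g, hφ, ?_, ?_⟩
  · rw [Metric.continuous_iff]
    intro p ε hε
    obtain ⟨δ, hδ, h1⟩ := hgeq (ε / 2) (by positivity)
    refine ⟨δ, hδ, fun q hq => ?_⟩
    rw [Real.dist_eq]
    linarith [h1 q p hq.le]
  · intro S hS ε hε
    obtain ⟨δ1, hδ1, hev⟩ := heq (ε / 3) (by positivity)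
    obtain ⟨δ2, hδ2, hgev⟩ := hgeq (ε / 3) (by positivity)
    obtain ⟨s, -, hcov⟩ := hS.elim_nhds_subcover (fun p => Metric.ball p (min δ1 δ2))
      (fun p _ => Metric.ball_mem_nhds _ (lt_min hδ1 hδ2))
    have h1 := hφ.tendsto_atTop.eventually hev
    have h2 : ∀ᶠ n in atTop, ∀ p ∈ s, |f (φ n) p - g p| ≤ ε / 3 := by
      rw [Filter.eventually_all_finset]
      intro p _
      refine ((hg p).eventually (Metric.closedBall_mem_nhds _ (show 0 < ε / 3 by positivity))).mono
        fun n hn => ?_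
      simpa [Real.dist_eq] using hn
    filter_upwards [h1, h2] with n hn1 hn2 p hp
    obtain ⟨q, hq, hpq⟩ := mem_iUnion₂.1 (hcov hp)
    rw [Metric.mem_ball] at hpq
    have a1 := abs_le.1 (hn1 p q (hpq.le.trans (min_le_left _ _)))
    have a2 := abs_le.1 (hgev p q (hpq.le.trans (min_le_right _ _)))
    have a3 := abs_le.1 (hn2 q hq)
    rw [abs_le]; constructor <;> linarith

/-- A sequence of solutions of the scheme, with mesh sizes tending to zero and uniformly bounded
energy, whose piecewise constant interpolants converge uniformly to `u`. -/
structure Approx (L T lam K E : ℝ) (N : ℕ → ℕ) (h : ℕ → ℝ) (U : ℕ → ℝ → ℤ → ℝ)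
    (u : ℝ → ℝ → ℝ) : Prop where
  sch : ∀ n, Scheme (N n) (h n) T lam K (U n)
  NL : ∀ n, N n * h n = L
  en0 : ∀ n, en (N n) (h n) (U n 0) ≤ E
  h_lim : Tendsto h atTop (nhds 0)
  hT : 0 < T
  hL : 0 < L
  hlam : 1 ≤ lam
  cont : Continuous fun p : ℝ × ℝ => u p.1 p.2
  conv : ∀ ε > 0, ∀ᶠ n in atTop, ∀ t x, |U n t ⌊x / h n⌋ - u t x| ≤ ε

/-- Asymptotic space equicontinuity of the interpolants. -/
lemma Scheme.space_eq {N : ℕ} {h T lam K E L : ℝ} {U : ℝ → ℤ → ℝ} (S : Scheme N h T lam K U)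
    (hT : 0 ≤ T) (hlam : 1 ≤ lam) (hE : en N h (U 0) ≤ E) (hNh : N * h = L) {δ : ℝ}
    (hδL : δ + h ≤ L) (t : ℝ) {x y : ℝ} (hxy : x ≤ y) (hyx : y ≤ x + δ) :
    (U t ⌊y / h⌋ - U t ⌊x / h⌋) ^ 2 ≤ (δ + h) * E := by
  have hh := S.hpos
  have hle : ⌊x / h⌋ ≤ ⌊y / h⌋ := Int.floor_le_floor (div_le_div_of_nonneg_right hxy hh.le)
  obtain ⟨p, hp⟩ := Int.eq_ofNat_of_zero_le (sub_nonneg.2 hle)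
  have hp' : ⌊y / h⌋ = ⌊x / h⌋ + p := by omega
  have hpd : (p:ℝ) * h ≤ δ + h := by
    have h1 := Int.floor_le (y / h)
    have h2 := Int.lt_floor_add_one (x / h)
    have h3 : (p:ℝ) = (⌊y / h⌋ : ℝ) - ⌊x / h⌋ := by rw [hp']; push_cast; ring
    have h4 : (p:ℝ) ≤ (y - x) / h + 1 := by rw [h3, sub_div]; linarith
    have h5 := mul_le_mul_of_nonneg_right h4 hh.le
    rw [add_mul, div_mul_cancel₀ _ hh.ne'] at h5
    linarith
  have hpN : p ≤ N := by
    have : (p:ℝ) * h ≤ N * h := by rw [hNh]; linarith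
    exact_mod_cast le_of_mul_le_mul_right this hh
  rw [hp']
  refine (S.holder hT hlam t _ p hpN).trans ?_
  exact mul_le_mul hpd hE (en_nonneg hh _) (by have : (0:ℝ) ≤ p * h := by positivity
                                               linarith)

/-- The approximations obtained by sampling `u₀` at the nodes, along a convergent subsequence. -/
theorem approx_exists {L T lam : ℝ} (hL : 0 < L) (hT : 0 < T) (hlam : 1 ≤ lam)
    {u₀ g₀ : ℝ → ℝ} (h0cont : Continuous u₀) (h0nonneg : ∀ x : ℝ, 0 ≤ u₀ x)
    (h0per : ∀ x : ℝ, u₀ (x + L) = u₀ x)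
    (h0int : ∀ a b : ℝ, IntervalIntegrable g₀ volume a b)
    (h0ac : ∀ a b : ℝ, u₀ b - u₀ a = ∫ x in a..b, g₀ x)
    (h0L2 : IntervalIntegrable (fun x => (g₀ x) ^ 2) volume 0 L) :
    ∃ (K : ℝ) (N : ℕ → ℕ) (h : ℕ → ℝ) (U : ℕ → ℝ → ℤ → ℝ) (u : ℝ → ℝ → ℝ),
      Approx L T lam K (∫ x in (0:ℝ)..L, g₀ x ^ 2) N h U u ∧ (∀ x, u 0 x = u₀ x) ∧
      (∀ t x, u t (x + L) = u t x) ∧ (∀ t x, 0 ≤ u t x) := by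
  set E := ∫ x in (0:ℝ)..L, g₀ x ^ 2 with hE
  have hE0 : 0 ≤ E := intervalIntegral.integral_nonneg hL.le fun _ _ => sq_nonneg _
  obtain ⟨B, hB⟩ : ∃ B, ∀ x, u₀ x ≤ B := by
    obtain ⟨B, hB⟩ := (isCompact_Icc (a := (0:ℝ)) (b := L)).bddAbove_image h0cont.continuousOn
    refine ⟨B, fun x => ?_⟩
    obtain ⟨y, hy, hxy⟩ := Function.Periodic.exists_mem_Ico₀ (f := u₀) h0per hL x
    rw [hxy]; exact hB (mem_image_of_mem _ ⟨hy.1, hy.2.le⟩)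
  set K := B + Real.sqrt (L * E) with hK
  have hK0 : 0 ≤ K := add_nonneg ((h0nonneg 0).trans (hB 0)) (Real.sqrt_nonneg _)
  set h : ℕ → ℝ := fun n => L / (n + 1 : ℕ) with hh
  have hpos : ∀ n, 0 < h n := fun n => by simp only [hh]; positivity
  have hNh : ∀ n, ((n + 1 : ℕ) : ℝ) * h n = L := fun n => by simp only [hh]; field_simp
  have hlim : Tendsto h atTop (nhds 0) :=
    (tendsto_const_div_atTop_nhds_zero_nat L).comp (tendsto_add_atTop_nat 1)
  have hsc : ∀ n, ∃ U : ℝ → ℤ → ℝ, Scheme (n + 1) (h n) T lam K U ∧ U 0 = fun i : ℤ => u₀ (i * h n) :=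
    fun n => scheme_exists (Nat.succ_pos n) hT hlam (hpos n) (hNh n)
      (periodic_of_ac h0per (hNh n)) (fun i => h0nonneg _) (fun i => hB _)
      (en_sample_le (hpos n) (hNh n) h0int h0ac h0L2)
  choose U hS hU0 using hsc
  have hen : ∀ n, en (n + 1) (h n) (U n 0) ≤ E := fun n => by
    rw [hU0]; exact en_sample_le (hpos n) (hNh n) h0int h0ac h0L2
  obtain ⟨φ, g, hφ, hgc, hconv⟩ := compactness (f := fun n p => U n p.1 ⌊p.2 / h n⌋) (K := K)
    (fun n p => ⟨by linarith [(hS n).nonneg p.1 ⌊p.2 / h n⌋], (hS n).le_K _ _⟩) (by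
    intro ε hε
    obtain ⟨δ, hδ, h0, hh0, htime⟩ := scheme_time hL hT.le hlam hE0 hK0 (half_pos hε)
    set d := min (L / 2) ((ε / 2) ^ 2 / (2 * (E + 1))) with hd
    have hdpos : 0 < d := by positivity
    refine ⟨min δ d, lt_min hδ hdpos, ?_⟩
    have e1 := hlim.eventually (Iic_mem_nhds (lt_min hh0 hdpos))
    filter_upwards [e1] with n hn p q hpq
    have hn' : h n ≤ min h0 d := hn
    rw [Prod.dist_eq, max_le_iff, Real.dist_eq, Real.dist_eq] at hpq
    have t1 := htime _ _ _ (hS n) (hNh n) (hen n) (hn'.trans (min_le_left _ _)) q.1 p.1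
      (hpq.1.trans (min_le_left _ _)) ⌊p.2 / h n⌋
    have hsp : ∀ x y : ℝ, x ≤ y → y ≤ x + d →
        |U n q.1 ⌊y / h n⌋ - U n q.1 ⌊x / h n⌋| ≤ ε / 2 := by
      intro x y hxy hyx
      have hnd := hn'.trans (min_le_right _ _)
      have h1 := (hS n).space_eq hT.le hlam (hen n) (hNh n) (δ := d)
        (by linarith [min_le_left (L / 2) ((ε / 2) ^ 2 / (2 * (E + 1)))]) q.1 hxy hyx
      refine abs_le_of_sq_le_sq (h1.trans ?_) (by positivity)
      have h2 := min_le_right (L / 2) ((ε / 2) ^ 2 / (2 * (E + 1)))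
      rw [← hd, le_div_iff₀ (by positivity)] at h2
      nlinarith [hpos n]
    have t2 : |U n q.1 ⌊p.2 / h n⌋ - U n q.1 ⌊q.2 / h n⌋| ≤ ε / 2 := by
      have := abs_le.1 (hpq.2.trans (min_le_right _ _))
      rcases le_total p.2 q.2 with hle | hle
      · rw [abs_sub_comm]; exact hsp _ _ hle (by linarith)
      · exact hsp _ _ hle (by linarith)
    rw [abs_le] at t1 t2 ⊢
    constructor <;> linarith)
  -- passing periodicity and freezing to the limit
  have hpt : ∀ p, Tendsto (fun n => U (φ n) p.1 ⌊p.2 / h (φ n)⌋) atTop (nhds (g p)) := by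
    intro p
    rw [Metric.tendsto_nhds]
    intro ε hε
    filter_upwards [hconv {p} isCompact_singleton (ε / 2) (half_pos hε)] with n hn
    rw [Real.dist_eq]; linarith [hn p rfl]
  have hUp : ∀ n t x, U n t ⌊(x + L) / h n⌋ = U n t ⌊x / h n⌋ := by
    intro n t x
    have : (x + L) / h n = x / h n + ((n + 1 : ℕ) : ℤ) := by
      rw [add_div, ← hNh n]; push_cast; rw [mul_div_cancel_right₀ _ (hpos n).ne']
    rw [this, Int.floor_add_intCast, (hS n).per]
  have hgper : ∀ t x, g (t, x + L) = g (t, x) := fun t x =>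
    tendsto_nhds_unique (hpt (t, x + L)) (by simpa only [hUp] using hpt (t, x))
  have hgfr : ∀ t x, g (t, x) = g (clampR 0 T t, x) := fun t x =>
    tendsto_nhds_unique (hpt (t, x)) (by
      have := hpt (clampR 0 T t, x)
      refine this.congr fun n => ?_
      rw [(hS (φ n)).froz t])
  refine ⟨K, fun n => φ n + 1, fun n => h (φ n), fun n => U (φ n), fun t x => g (t, x),
    ⟨fun n => hS _, fun n => hNh _, fun n => hen _, hlim.comp hφ.tendsto_atTop, hT, hL, hlam, hgc,
      ?_⟩, ?_, hgper, ?_⟩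
  · intro ε hε
    filter_upwards [hconv (Icc 0 T ×ˢ Icc 0 L) (isCompact_Icc.prod isCompact_Icc) ε hε]
      with n hn t x
    obtain ⟨y, hy, hxy⟩ := Function.Periodic.exists_mem_Ico₀
      (f := fun x => (U (φ n) t ⌊x / h (φ n)⌋, g (t, x))) (c := L)
      (fun x => by simp only [hUp, hgper]) hL x
    simp only [Prod.mk.injEq] at hxy
    rw [hxy.1, hxy.2, hgfr, (hS (φ n)).froz t]
    exact hn (clampR 0 T t, y) ⟨clampR_mem hT.le t, hy.1, hy.2.le⟩
  · intro x
    refine tendsto_nhds_unique (hpt (0, x)) ?_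
    simp only [hU0]
    refine (h0cont.tendsto x).comp ?_
    have hl := hlim.comp hφ.tendsto_atTop
    refine squeeze_zero_norm' (a := fun n => h (φ n)) ?_ hl |> fun h' => (tendsto_sub_nhds_zero_iff.1 h')
    refine Eventually.of_forall fun n => ?_
    have p := hpos (φ n)
    have h1 := Int.floor_le (x / h (φ n))
    have h2 := Int.lt_floor_add_one (x / h (φ n))
    rw [le_div_iff₀ p] at h1
    rw [div_lt_iff₀ p, add_mul] at h2
    rw [Real.norm_eq_abs, abs_le]; constructor <;> linarith
  · intro t x
    exact ge_of_tendsto' (hpt (t, x)) fun n => (hS _).nonneg _ _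

/-! ### Local difference calculus: windows, cutoffs, interpolation -/

/-- The indices of the nodes at distance at most `r` from `x0`. -/
def win (h x0 r : ℝ) : Finset ℤ := Finset.Icc ⌈(x0 - r) / h⌉ ⌊(x0 + r) / h⌋

lemma mem_win {h x0 r : ℝ} (hh : 0 < h) {i : ℤ} : i ∈ win h x0 r ↔ |i * h - x0| ≤ r := by
  unfold win
  rw [Finset.mem_Icc, Int.ceil_le, Int.le_floor, div_le_iff₀ hh, le_div_iff₀ hh, abs_le]
  constructor <;> rintro ⟨h1, h2⟩ <;> constructor <;> linarith

/-- The local discrete `L²` norm (squared) on the window of radius `r`. -/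
def Q (h x0 r : ℝ) (f : ℤ → ℝ) : ℝ := h * ∑ i ∈ win h x0 r, f i ^ 2

lemma Q_nonneg {h x0 r : ℝ} (hh : 0 < h) (f : ℤ → ℝ) : 0 ≤ Q h x0 r f :=
  mul_nonneg hh.le (Finset.sum_nonneg fun _ _ => sq_nonneg _)

lemma win_mono {h x0 r r' : ℝ} (hh : 0 < h) (hr : r ≤ r') : win h x0 r ⊆ win h x0 r' := fun i hi => by
  rw [mem_win hh] at hi ⊢; linarith

lemma mem_win_add {h x0 r r' : ℝ} (hh : 0 < h) {k : ℤ} (hk : r + |(k:ℝ)| * h ≤ r') {i : ℤ}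
    (hi : i ∈ win h x0 r) : i + k ∈ win h x0 r' := by
  rw [mem_win hh] at hi ⊢
  push_cast
  have e : ((i:ℝ) + k) * h - x0 = (i * h - x0) + k * h := by ring
  rw [e]
  refine (abs_add_le _ _).trans ?_
  rw [abs_mul, abs_of_pos hh]; linarith

lemma sum_win_shift_le {h x0 r r' : ℝ} (hh : 0 < h) {k : ℤ} (hk : r + |(k:ℝ)| * h ≤ r')
    {f : ℤ → ℝ} (hf : ∀ i, 0 ≤ f i) :
    ∑ i ∈ win h x0 r, f (i + k) ≤ ∑ i ∈ win h x0 r', f i := by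
  rw [← Finset.sum_image (s := win h x0 r) (g := fun i => i + k) (f := f)
    (fun a _ b _ hab => by simpa using hab)]
  refine Finset.sum_le_sum_of_subset_of_nonneg ?_ fun _ _ _ => hf _
  intro j hj
  obtain ⟨i, hi, rfl⟩ := Finset.mem_image.1 hj
  exact mem_win_add hh hk hi

lemma Q_shift_le {h x0 r r' : ℝ} (hh : 0 < h) {k : ℤ} (hk : r + |(k:ℝ)| * h ≤ r') (f : ℤ → ℝ) :
    Q h x0 r (fun i => f (i + k)) ≤ Q h x0 r' f :=
  mul_le_mul_of_nonneg_left (sum_win_shift_le hh hk (f := fun i => f i ^ 2) fun _ => sq_nonneg _)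
    hh.le

lemma Q_mono {h x0 r r' : ℝ} (hh : 0 < h) (hr : r ≤ r') (f : ℤ → ℝ) : Q h x0 r f ≤ Q h x0 r' f :=
  mul_le_mul_of_nonneg_left (Finset.sum_le_sum_of_subset_of_nonneg (win_mono hh hr)
    fun _ _ _ => sq_nonneg _) hh.le

/-- Translation invariance of sums of functions supported well inside the window. -/
lemma sum_win_shift {h x0 ρ r : ℝ} (hh : 0 < h) {k : ℤ} (hk : ρ + |(k:ℝ)| * h ≤ r)
    {f : ℤ → ℝ} (hf : ∀ i, i ∉ win h x0 ρ → f i = 0) :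
    ∑ i ∈ win h x0 r, f (i + k) = ∑ i ∈ win h x0 r, f i := by
  have hk0 : 0 ≤ |(k:ℝ)| * h := by positivity
  rw [← finsum_eq_sum_of_support_subset (f := f), ← finsum_eq_sum_of_support_subset
    (f := fun i => f (i + k))]
  · exact finsum_comp_equiv (Equiv.addRight k) (f := f)
  · intro i hi
    have : i + k ∈ win h x0 ρ := by
      by_contra hcon; exact hi (hf _ hcon)
    have := mem_win_add hh (k := -k) (r' := r) (by simpa using hk) this
    simpa using this
  · intro i hi
    have : i ∈ win h x0 ρ := by
      by_contra hcon; exact hi (hf _ hcon)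
    exact win_mono hh (by linarith) this

lemma fd2_eq (h : ℝ) (f : ℤ → ℝ) (i : ℤ) :
    fd h (fd h f) i = (f (i + 2) - 2 * f (i + 1) + f i) / h ^ 2 := by
  unfold fd
  rw [show i + 1 + 1 = i + 2 by ring]
  by_cases hh : h = 0
  · simp [hh]
  · field_simp; ring

/-- Two summations by parts against a localized function. -/
lemma sum_sbp2 {h x0 ρ r : ℝ} (hh : 0 < h) (hk : ρ + 2 * h ≤ r)
    {f : ℤ → ℝ} (hf : ∀ i, i ∉ win h x0 ρ → f i = 0) (G : ℤ → ℝ) :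
    ∑ i ∈ win h x0 r, f i * fd h (fd h G) (i - 2)
      = ∑ i ∈ win h x0 r, fd h (fd h f) i * G i := by
  have s1 := sum_win_shift (h := h) (x0 := x0) (ρ := ρ) (k := 1) (r := r) hh (by simp; linarith)
    (f := fun i => f i * G (i - 1)) (fun i hi => by rw [hf i hi, zero_mul])
  have s2 := sum_win_shift (h := h) (x0 := x0) (ρ := ρ) (k := 2) (r := r) hh (by simpa using hk)
    (f := fun i => f i * G (i - 2)) (fun i hi => by rw [hf i hi, zero_mul])
  simp only [add_sub_cancel_right] at s1 s2
  have e1 : ∑ i ∈ win h x0 r, f i * fd h (fd h G) (i - 2)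
      = (∑ i ∈ win h x0 r, f i * G i - 2 * ∑ i ∈ win h x0 r, f i * G (i - 1)
        + ∑ i ∈ win h x0 r, f i * G (i - 2)) / h ^ 2 := by
    rw [Finset.mul_sum, ← Finset.sum_sub_distrib, ← Finset.sum_add_distrib, Finset.sum_div]
    refine Finset.sum_congr rfl fun i _ => ?_
    rw [fd2_eq, show i - 2 + 2 = i by ring, show i - 2 + 1 = i - 1 by ring]; ring
  have e2 : ∑ i ∈ win h x0 r, fd h (fd h f) i * G i
      = (∑ i ∈ win h x0 r, f (i + 2) * G i - 2 * ∑ i ∈ win h x0 r, f (i + 1) * G i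
        + ∑ i ∈ win h x0 r, f i * G i) / h ^ 2 := by
    rw [Finset.mul_sum, ← Finset.sum_sub_distrib, ← Finset.sum_add_distrib, Finset.sum_div]
    refine Finset.sum_congr rfl fun i _ => ?_
    rw [fd2_eq]; ring
  rw [e1, e2, s1, s2]; ring

/-- A discrete cutoff function between the windows of radii `r` and `ρ`. The bounds on its
differences are those of the fourth power of a smooth bump function. -/
structure Cut (h x0 r ρ C : ℝ) (ω : ℤ → ℝ) : Prop where
  nonneg : ∀ i, 0 ≤ ω i
  le_one : ∀ i, ω i ≤ 1
  one : ∀ i ∈ win h x0 r, ω i = 1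
  supp : ∀ i, i ∉ win h x0 ρ → ω i = 0
  d1 : ∀ i, (fd h ω i) ^ 2 ≤ C * (ω i + h ^ 4)
  d2 : ∀ i, (fd h (fd h ω) i) ^ 2 ≤ C * (ω i + h ^ 4)

lemma sq_add_sq_sq_le (x y : ℝ) : (x ^ 2 + y ^ 2) ^ 2 ≤ 2 * (x ^ 4 + y ^ 4) := by
  nlinarith [sq_nonneg (x ^ 2 - y ^ 2)]

set_option maxHeartbeats 1000000 in
/-- Cutoff functions with bounds independent of the mesh. -/
lemma cut_exists (x0 : ℝ) {r ρ : ℝ} (hr : 0 < r) (hrρ : r < ρ) :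
    ∃ C, 0 < C ∧ ∀ h : ℝ, 0 < h → h ≤ 1 → ∃ ω, Cut h x0 r ρ C ω := by
  let χ : ContDiffBump x0 := ⟨r, ρ, hr, hrρ⟩
  have hχ : ContDiff ℝ 2 χ := χ.contDiff
  have hsup : HasCompactSupport χ := χ.hasCompactSupport
  obtain ⟨M1, hM1⟩ := (hχ.continuous_deriv (by norm_num)).bounded_above_of_compact_support hsup.deriv
  have hχ1 : ContDiff ℝ 1 (deriv χ) := by
    have : ContDiff ℝ (1 + 1) χ := hχ
    exact ((contDiff_succ_iff_deriv).1 this).2.2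
  obtain ⟨M2, hM2⟩ := (hχ1.continuous_deriv (by norm_num)).bounded_above_of_compact_support
    hsup.deriv.deriv
  set M := max M1 M2 with hM
  have hM0 : 0 ≤ M := (norm_nonneg _).trans ((hM1 0).trans (le_max_left _ _))
  have hd : ∀ x, DifferentiableAt ℝ χ x := fun x => (hχ.differentiable (by norm_num)) x
  have hd1 : ∀ x, DifferentiableAt ℝ (deriv χ) x := fun x => (hχ1.differentiable (by norm_num)) x
  have l1 : ∀ x y, |χ y - χ x| ≤ M * |y - x| := fun x y =>
    Convex.norm_image_sub_le_of_norm_deriv_le (fun z _ => hd z)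
      (fun z _ => (hM1 z).trans (le_max_left _ _)) convex_univ (mem_univ x) (mem_univ y)
  have l2 : ∀ x y, |deriv χ y - deriv χ x| ≤ M * |y - x| := fun x y =>
    Convex.norm_image_sub_le_of_norm_deriv_le (fun z _ => hd1 z)
      (fun z _ => (hM2 z).trans (le_max_right _ _)) convex_univ (mem_univ x) (mem_univ y)
  have l3 : ∀ h x : ℝ, |χ (x + h + h) - 2 * χ (x + h) + χ x| ≤ M * |h| * |h| := by
    intro h x
    have hds : ∀ z, HasDerivAt (fun z => χ (z + h) - χ z) (deriv χ (z + h) - deriv χ z) z :=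
      fun z => by
        have := (hd (z + h)).hasDerivAt.comp_add_const z h
        exact this.sub (hd z).hasDerivAt
    have := Convex.norm_image_sub_le_of_norm_hasDerivWithin_le (C := M * |h|)
      (fun z _ => (hds z).hasDerivWithinAt)
      (fun z _ => by simpa using l2 z (z + h)) convex_univ (mem_univ x) (mem_univ (x + h))
    simp only [Real.norm_eq_abs, add_sub_cancel_left] at this
    convert this using 2; ring
  refine ⟨(4 * (M + 1) * (2 * (M + 1)) ^ 3 * 100) ^ 2 + 1, by positivity, ?_⟩
  intro h hh hh1
  set a : ℤ → ℝ := fun i => χ (i * h) with ha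
  have a0 : ∀ i, 0 ≤ a i := fun i => χ.nonneg
  have a1 : ∀ i, a i ≤ 1 := fun i => χ.le_one
  -- first and second difference quotients of the bump
  have hb : ∀ i, ∃ d, |d| ≤ M ∧ a (i + 1) = a i + h * d := by
    intro i
    refine ⟨(a (i + 1) - a i) / h, ?_, by field_simp; ring⟩
    rw [abs_div, abs_of_pos hh, div_le_iff₀ hh]
    have := l1 (i * h) ((i + 1 : ℤ) * h)
    have e : ((i + 1 : ℤ) : ℝ) * h - i * h = h := by push_cast; ring
    rwa [e, abs_of_pos hh] at this
  have hb2 : ∀ i, ∃ e, |e| ≤ M ∧ a (i + 2) = 2 * a (i + 1) - a i + h ^ 2 * e := by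
    intro i
    refine ⟨(a (i + 2) - 2 * a (i + 1) + a i) / h ^ 2, ?_, by field_simp; ring⟩
    rw [abs_div, abs_of_pos (by positivity : 0 < h ^ 2), div_le_iff₀ (by positivity)]
    have := l3 h (i * h)
    have e1 : (i:ℝ) * h + h = (i + 1 : ℤ) * h := by push_cast; ring
    have e2 : (i:ℝ) * h + h + h = (i + 2 : ℤ) * h := by push_cast; ring
    rw [e2, e1, abs_of_pos hh] at this
    calc _ ≤ _ := this
      _ = _ := by ring
  have key1 : ∀ A d : ℝ, 0 ≤ A → A ≤ 1 → |d| ≤ M + 1 →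
      |4 * A ^ 3 * d + 6 * A ^ 2 * (h * d ^ 2) + 4 * A * (h ^ 2 * d ^ 3) + h ^ 3 * d ^ 4|
        ≤ 4 * (M + 1) * (2 * (M + 1)) ^ 3 * 5 * (A ^ 2 + h ^ 2) := by
    intro A d hA0 hA1 hd
    set m := M + 1
    have hm1 : 1 ≤ m := by simp only [m]; linarith
    have hdk : ∀ k ≤ 4, |d| ^ k ≤ m ^ 4 := fun k hk =>
      (pow_le_pow_left₀ (abs_nonneg _) hd k).trans (pow_le_pow_right₀ hm1 hk)
    have d1 := hdk 1 (by norm_num)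
    have d2 := hdk 2 (by norm_num)
    have d3 := hdk 3 (by norm_num)
    have d4 := hdk 4 (by norm_num)
    have A3 : A ^ 3 ≤ A ^ 2 := pow_le_pow_of_le_one hA0 hA1 (by norm_num)
    have h32 : h ^ 3 ≤ h ^ 2 := pow_le_pow_of_le_one hh.le hh1 (by norm_num)
    have t1 : |4 * A ^ 3 * d| ≤ 4 * A ^ 2 * m ^ 4 := by
      rw [abs_mul, abs_of_nonneg (by positivity)]
      rw [pow_one] at d1; gcongr
    have t2 : |6 * A ^ 2 * (h * d ^ 2)| ≤ 6 * A ^ 2 * m ^ 4 := by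
      rw [abs_mul, abs_of_nonneg (by positivity), abs_mul, abs_of_pos hh, abs_pow]
      gcongr
      calc h * |d| ^ 2 ≤ 1 * m ^ 4 := by gcongr
        _ = _ := one_mul _
    have t3 : |4 * A * (h ^ 2 * d ^ 3)| ≤ 4 * h ^ 2 * m ^ 4 := by
      rw [abs_mul, abs_of_nonneg (by positivity), abs_mul, abs_of_pos (by positivity), abs_pow]
      calc 4 * A * (h ^ 2 * |d| ^ 3) ≤ 4 * 1 * (h ^ 2 * m ^ 4) := by gcongr
        _ = _ := by ring
    have t4 : |h ^ 3 * d ^ 4| ≤ h ^ 2 * m ^ 4 := by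
      rw [abs_mul, abs_of_pos (by positivity), abs_pow]; gcongr
    have hs : 0 ≤ m ^ 4 * A ^ 2 := by positivity
    have hs2 : 0 ≤ m ^ 4 * h ^ 2 := by positivity
    calc _ ≤ 4 * A ^ 2 * m ^ 4 + 6 * A ^ 2 * m ^ 4 + 4 * h ^ 2 * m ^ 4 + h ^ 2 * m ^ 4 :=
          (abs_add_le _ _).trans (add_le_add ((abs_add_le _ _).trans
            (add_le_add ((abs_add_le _ _).trans (add_le_add t1 t2)) t3)) t4)
      _ ≤ _ := by nlinarith
  refine ⟨fun i => a i ^ 4, fun i => by positivity, fun i => pow_le_one₀ (a0 i) (a1 i), ?_, ?_, ?_, ?_⟩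
  · intro i hi
    rw [mem_win hh] at hi
    have : a i = 1 := χ.one_of_mem_closedBall (by rw [Metric.mem_closedBall, Real.dist_eq]; exact hi)
    simp [this]
  · intro i hi
    rw [mem_win hh] at hi
    push Not at hi
    have : a i = 0 := χ.zero_of_le_dist (by rw [Real.dist_eq]; exact hi.le)
    simp [this]
  · intro i
    obtain ⟨d, hd, hab⟩ := hb i
    have e : fd h (fun i => a i ^ 4) i = 4 * a i ^ 3 * d + 6 * a i ^ 2 * (h * d ^ 2)
        + 4 * a i * (h ^ 2 * d ^ 3) + h ^ 3 * d ^ 4 := by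
      unfold fd; dsimp only; rw [hab]; field_simp; ring
    rw [e, ← sq_abs]
    refine (pow_le_pow_left₀ (abs_nonneg _) (key1 (a i) d (a0 i) (a1 i) (by linarith)) 2).trans ?_
    have s1 := sq_add_sq_sq_le (a i) h
    have s2 : 0 ≤ a i ^ 4 + h ^ 4 := by positivity
    set m := 4 * (M + 1) * (2 * (M + 1)) ^ 3 with hm
    calc (m * 5 * (a i ^ 2 + h ^ 2)) ^ 2 = 25 * m ^ 2 * (a i ^ 2 + h ^ 2) ^ 2 := by ring
      _ ≤ 25 * m ^ 2 * (2 * (a i ^ 4 + h ^ 4)) := by gcongr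
      _ ≤ _ := by linarith [mul_nonneg (sq_nonneg m) s2]
  · intro i
    obtain ⟨d, hd, hab⟩ := hb i
    obtain ⟨e, he, hac⟩ := hb2 i
    set m := M + 1
    have hm1 : 1 ≤ m := by simp only [m]; linarith
    have hac' : a (i + 2) = a i + 2 * h * d + h ^ 2 * e := by rw [hac, hab]; ring
    have heq : fd h (fd h (fun i => a i ^ 4)) i = 4 * a i ^ 3 * e
        + 6 * a i ^ 2 * ((2 * d + h * e) ^ 2 - 2 * d ^ 2)
        + 4 * a i * (h * ((2 * d + h * e) ^ 3 - 2 * d ^ 3))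
        + h ^ 2 * ((2 * d + h * e) ^ 4 - 2 * d ^ 4) := by
      rw [fd2_eq]; rw [hab, hac']; field_simp; ring
    have hdm : |d| ≤ m := by simp only [m]; linarith
    have hem : |e| ≤ m := by simp only [m]; linarith
    have hz : |2 * d + h * e| ≤ 3 * m := by
      refine (abs_add_le _ _).trans ?_
      rw [abs_mul, abs_mul, abs_of_pos hh, abs_of_pos (by norm_num : (0:ℝ) < 2)]
      have : h * |e| ≤ 1 * m := by gcongr
      linarith
    have hpz : ∀ k ≤ 4, |(2 * d + h * e) ^ k - 2 * d ^ k| ≤ 83 * m ^ 4 := by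
      intro k hk
      have hmk : m ^ k ≤ m ^ 4 := pow_le_pow_right₀ hm1 hk
      calc _ ≤ |(2 * d + h * e) ^ k| + |2 * d ^ k| := abs_sub _ _
        _ = |2 * d + h * e| ^ k + 2 * |d| ^ k := by
            rw [abs_pow, abs_mul, abs_pow]; norm_num
        _ ≤ (3 * m) ^ k + 2 * m ^ k := by gcongr
        _ = (3 ^ k + 2) * m ^ k := by rw [mul_pow]; ring
        _ ≤ (3 ^ 4 + 2) * m ^ 4 := by
            gcongr; norm_num
        _ = _ := by norm_num
    have t1 : |4 * a i ^ 3 * e| ≤ 4 * a i ^ 2 * m ^ 4 := by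
      rw [abs_mul, abs_of_nonneg (by have := a0 i; positivity)]
      have : |e| ≤ m ^ 4 := hem.trans (le_self_pow₀ hm1 (by norm_num))
      have := a0 i
      have A3 : a i ^ 3 ≤ a i ^ 2 := pow_le_pow_of_le_one (a0 i) (a1 i) (by norm_num)
      gcongr
    have t2 : |6 * a i ^ 2 * ((2 * d + h * e) ^ 2 - 2 * d ^ 2)| ≤ 6 * a i ^ 2 * (83 * m ^ 4) := by
      rw [abs_mul, abs_of_nonneg (by positivity)]
      have := hpz 2 (by norm_num)
      gcongr
    have t3 : |4 * a i * (h * ((2 * d + h * e) ^ 3 - 2 * d ^ 3))|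
        ≤ 2 * (a i ^ 2 + h ^ 2) * (83 * m ^ 4) := by
      have := hpz 3 (by norm_num)
      have h0 := a0 i
      rw [abs_mul, abs_of_nonneg (by positivity), abs_mul, abs_of_pos hh]
      calc _ ≤ 4 * a i * (h * (83 * m ^ 4)) := by gcongr
        _ = 2 * (2 * a i * h) * (83 * m ^ 4) := by ring
        _ ≤ _ := by gcongr; nlinarith [sq_nonneg (a i - h)]
    have t4 : |h ^ 2 * ((2 * d + h * e) ^ 4 - 2 * d ^ 4)| ≤ h ^ 2 * (83 * m ^ 4) := by
      rw [abs_mul, abs_of_pos (by positivity)]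
      have := hpz 4 (by norm_num)
      gcongr
    have hs : 0 ≤ m ^ 4 * a i ^ 2 := by positivity
    have hs2 : 0 ≤ m ^ 4 * h ^ 2 := by positivity
    have tot : |fd h (fd h (fun i => a i ^ 4)) i| ≤ 32 * m ^ 4 * 25 * (a i ^ 2 + h ^ 2) := by
      rw [heq]
      refine ((abs_add_le _ _).trans (add_le_add ((abs_add_le _ _).trans
            (add_le_add ((abs_add_le _ _).trans (add_le_add t1 t2)) t3)) t4)).trans ?_
      linarith
    rw [← sq_abs]
    refine (pow_le_pow_left₀ (abs_nonneg _) tot 2).trans ?_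
    have s1 := sq_add_sq_sq_le (a i) h
    have s2 : 0 ≤ a i ^ 4 + h ^ 4 := by positivity
    have e4 : (4 * m * (2 * m) ^ 3 * 100) = 3200 * m ^ 4 := by ring
    rw [e4]
    calc (32 * m ^ 4 * 25 * (a i ^ 2 + h ^ 2)) ^ 2 = 640000 * (m ^ 4) ^ 2 * (a i ^ 2 + h ^ 2) ^ 2 := by
          ring
      _ ≤ 640000 * (m ^ 4) ^ 2 * (2 * (a i ^ 4 + h ^ 4)) := by gcongr
      _ ≤ _ := by linarith [mul_nonneg (sq_nonneg (m ^ 4)) s2]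

/-! ### Localized energy and interpolation inequalities -/

lemma fd2_mul {h : ℝ} (hh : 0 < h) (a v : ℤ → ℝ) (i : ℤ) :
    fd h (fd h (fun j => a j * v j)) i = a i * fd h (fd h v) i
      + (2 * fd h a i * fd h v (i + 1) + fd h (fd h a) i * v (i + 2)) := by
  simp only [fd]
  rw [show i + 1 + 1 = i + 2 by ring]
  field_simp; ring

/-- The pointwise form of the energy estimate: `ω` is the cutoff, regularized to `W > 0`, `A` stands
for `D²v`, and `ω A + X` for `D²(ω v)`. -/
lemma pt_energy {ω c B W X Z μ A F : ℝ} (h0 : 0 ≤ ω) (h1 : ω ≤ W) (hW : 0 < W) (hc : 0 < c)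
    (hcμ : c ≤ μ) (hμ : μ ≤ B) (hX : X ^ 2 ≤ W * Z) :
    -2 * ((ω * A + X) * (μ * A + F)) ≤ -c * (ω * A ^ 2) + c / 4 * ((W - ω) * A ^ 2)
      + (4 * B ^ 2 / c + 1) * Z + (4 / c + 1) * (W * F ^ 2) := by
  have hXW : X ^ 2 / W ≤ Z := by rw [div_le_iff₀ hW]; linarith
  have hXW0 : 0 ≤ X ^ 2 / W := by positivity
  have a1 : -2 * (ω * A * F) ≤ c / 4 * (ω * A ^ 2) + 4 / c * (ω * F ^ 2) := by
    have : c / 4 * (ω * A ^ 2) + 4 / c * (ω * F ^ 2) + 2 * (ω * A * F)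
        = ω * (c * A + 4 * F) ^ 2 / (4 * c) := by field_simp; ring
    have h2 : 0 ≤ ω * (c * A + 4 * F) ^ 2 / (4 * c) := by positivity
    linarith
  have a2 : -2 * (X * (μ * A)) ≤ c / 4 * (W * A ^ 2) + 4 / c * (μ ^ 2 * (X ^ 2 / W)) := by
    have : c / 4 * (W * A ^ 2) + 4 / c * (μ ^ 2 * (X ^ 2 / W)) + 2 * (X * (μ * A))
        = (c * W * A + 4 * μ * X) ^ 2 / (4 * c * W) := by field_simp; ring
    have h2 : 0 ≤ (c * W * A + 4 * μ * X) ^ 2 / (4 * c * W) := by positivity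
    linarith
  have a3 : -2 * (X * F) ≤ W * F ^ 2 + X ^ 2 / W := by
    have : W * F ^ 2 + X ^ 2 / W + 2 * (X * F) = (W * F + X) ^ 2 / W := by field_simp; ring
    have h2 : 0 ≤ (W * F + X) ^ 2 / W := by positivity
    linarith
  have a4 : 4 / c * (μ ^ 2 * (X ^ 2 / W)) ≤ 4 * B ^ 2 / c * Z := by
    have : 4 * B ^ 2 / c * Z = 4 / c * (B ^ 2 * Z) := by ring
    rw [this]
    have : 0 ≤ μ := hc.le.trans hcμ
    gcongr
  have a5 : 4 / c * (ω * F ^ 2) ≤ 4 / c * (W * F ^ 2) := by gcongr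
  have a6 : c * (ω * A ^ 2) ≤ μ * (ω * A ^ 2) := by gcongr
  have a7 : 0 ≤ c * (ω * A ^ 2) := by positivity
  nlinarith [a1, a2, a3, a4, a5, a6]

/-- The constant in the static energy estimate. -/
def Kst (c B C : ℝ) : ℝ := 5 * c + (4 * B ^ 2 / c + 1) * (8 * C) + 4 / c + 1

lemma Kst_pos {c B C : ℝ} (hc : 0 < c) (hC : 0 < C) : 0 < Kst c B C := by
  unfold Kst; positivity

/-- Coercivity of the localized fourth order form, up to lower order terms. -/
lemma static_energy {h x0 r ρ ρ' R C c B : ℝ} {ω v F μ : ℤ → ℝ} (hω : Cut h x0 r ρ C ω)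
    (hh : 0 < h) (hC : 0 < C) (hc : 0 < c) (hR : ρ' + 2 * h ≤ R)
    (hμ : ∀ i ∈ win h x0 ρ', c ≤ μ i ∧ μ i ≤ B) :
    -2 * (h * ∑ i ∈ win h x0 ρ', fd h (fd h (fun j => ω j * v j)) i
        * (μ i * fd h (fd h v) i + F i))
      ≤ -c * (h * ∑ i ∈ win h x0 ρ', ω i * (fd h (fd h v) i) ^ 2)
        + Kst c B C * (Q h x0 R v + Q h x0 R (fd h v)
          + h * ∑ i ∈ win h x0 ρ', (ω i + h ^ 4) * F i ^ 2) := by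
  have hh4 : 0 < h ^ 4 := by positivity
  have key : ∀ i ∈ win h x0 ρ', -2 * (fd h (fd h (fun j => ω j * v j)) i
        * (μ i * fd h (fd h v) i + F i))
      ≤ -c * (ω i * (fd h (fd h v) i) ^ 2)
        + ((c / 4 * 6) * (v (i + 2) ^ 2 + v (i + 1) ^ 2 + v (i + 0) ^ 2)
          + (4 * B ^ 2 / c + 1) * (8 * C) * (fd h v (i + 1) ^ 2 + v (i + 2) ^ 2)
          + (4 / c + 1) * ((ω i + h ^ 4) * F i ^ 2)) := by
    intro i hi
    rw [fd2_mul hh]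
    set A := fd h (fd h v) i with hA
    set p := fd h v (i + 1)
    set q := v (i + 2) with hq
    have h0 := hω.nonneg i
    have d1 := hω.d1 i
    have d2 := hω.d2 i
    set D1 := fd h ω i
    set D2 := fd h (fd h ω) i
    have hX : (2 * D1 * p + D2 * q) ^ 2 ≤ (ω i + h ^ 4) * (8 * C * (p ^ 2 + q ^ 2)) := by
      have e1 : D1 ^ 2 * p ^ 2 ≤ C * (ω i + h ^ 4) * p ^ 2 := by gcongr
      have e2 : D2 ^ 2 * q ^ 2 ≤ C * (ω i + h ^ 4) * q ^ 2 := by gcongr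
      have e3 : 0 ≤ C * (ω i + h ^ 4) * q ^ 2 := by positivity
      nlinarith [sq_nonneg (2 * D1 * p - D2 * q)]
    have := pt_energy (F := F i) (A := A) h0 (by linarith : ω i ≤ ω i + h ^ 4) (by linarith) hc
      (hμ i hi).1 (hμ i hi).2 hX
    refine this.trans ?_
    have hA2 : h ^ 4 * A ^ 2 ≤ 6 * (v (i + 2) ^ 2 + v (i + 1) ^ 2 + v (i + 0) ^ 2) := by
      have : h ^ 4 * A ^ 2 = (v (i + 2) - 2 * v (i + 1) + v i) ^ 2 := by
        rw [hA, fd2_eq]; field_simp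
      rw [this, add_zero]
      nlinarith [sq_nonneg (2 * v (i + 2) + v (i + 1)), sq_nonneg (v (i + 1) + 2 * v i),
        sq_nonneg (v (i + 2) - v i)]
    have e : ω i + h ^ 4 - ω i = h ^ 4 := by ring
    rw [e]
    have := mul_le_mul_of_nonneg_left hA2 (by positivity : 0 ≤ c / 4)
    linarith
  have hsum := mul_le_mul_of_nonneg_left (Finset.sum_le_sum key) hh.le
  rw [← Finset.mul_sum, Finset.sum_add_distrib, Finset.sum_add_distrib, Finset.sum_add_distrib,
    ← Finset.mul_sum, ← Finset.mul_sum, ← Finset.mul_sum, ← Finset.mul_sum,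
    Finset.sum_add_distrib, Finset.sum_add_distrib, Finset.sum_add_distrib] at hsum
  have q2 := Q_shift_le (x0 := x0) (r := ρ') (r' := R) hh (k := 2) (by simpa using hR) v
  have q1 := Q_shift_le (x0 := x0) (r := ρ') (r' := R) hh (k := 1) (by simp; linarith) v
  have q0 := Q_shift_le (x0 := x0) (r := ρ') (r' := R) hh (k := 0) (by simp; linarith) v
  have p1 := Q_shift_le (x0 := x0) (r := ρ') (r' := R) hh (k := 1) (by simp; linarith) (fd h v)
  unfold Q at q2 q1 q0 p1
  set Qv := Q h x0 R v with hQv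
  set Qd := Q h x0 R (fd h v) with hQd
  have hQv0 : 0 ≤ Qv := Q_nonneg hh _
  have hQd0 : 0 ≤ Qd := Q_nonneg hh _
  have hQv' : h * ∑ i ∈ win h x0 R, v i ^ 2 = Qv := rfl
  have hQd' : h * ∑ i ∈ win h x0 R, fd h v i ^ 2 = Qd := rfl
  rw [hQv'] at q2 q1 q0
  rw [hQd'] at p1
  set V2 := ∑ i ∈ win h x0 ρ', v (i + 2) ^ 2
  set V1 := ∑ i ∈ win h x0 ρ', v (i + 1) ^ 2
  set V0 := ∑ i ∈ win h x0 ρ', v (i + 0) ^ 2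
  set P1 := ∑ i ∈ win h x0 ρ', fd h v (i + 1) ^ 2
  set FF := ∑ i ∈ win h x0 ρ', (ω i + h ^ 4) * F i ^ 2 with hFF
  have hFF0 : 0 ≤ h * FF := mul_nonneg hh.le (Finset.sum_nonneg fun i _ =>
    mul_nonneg (add_nonneg (hω.nonneg i) hh4.le) (sq_nonneg _))
  set AA := ∑ i ∈ win h x0 ρ', ω i * fd h (fd h v) i ^ 2
  set LHS := ∑ i ∈ win h x0 ρ', fd h (fd h (fun j => ω j * v j)) i * (μ i * fd h (fd h v) i + F i)
  set k1 := (4 * B ^ 2 / c + 1) * (8 * C) with hk1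
  have hk10 : 0 ≤ k1 := by positivity
  have hk2 : 0 ≤ 4 / c + 1 := by positivity
  have e : Kst c B C = 5 * c + k1 + (4 / c + 1) := by simp only [Kst, hk1]; ring
  rw [e]
  have b1 : c / 4 * 6 * (h * V2 + h * V1 + h * V0) ≤ c / 4 * 6 * (3 * Qv) := by
    gcongr; linarith
  have b2 : k1 * (h * P1 + h * V2) ≤ k1 * (Qd + Qv) := by gcongr
  have b3 := mul_nonneg hk2 hQv0
  have b4 := mul_nonneg hk2 hQd0
  have b5 := mul_nonneg hk10 hFF0
  have b6 := mul_nonneg hc.le hFF0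
  have b7 := mul_nonneg hc.le hQv0
  have b8 := mul_nonneg hc.le hQd0
  linarith

/-- Interpolation: `∫ω(g')² ≤ ε∫ω(g'')² + C(1+1/ε)∫g²`. -/
lemma interp {h x0 r ρ ρ' R C ε : ℝ} {ω : ℤ → ℝ} (hω : Cut h x0 r ρ C ω)
    (hh : 0 < h) (hh1 : h ≤ 1) (hC : 0 < C) (hε : 0 < ε) (hρ : ρ + h ≤ ρ') (hR : ρ' + 2 * h ≤ R)
    (g : ℤ → ℝ) :
    h * ∑ i ∈ win h x0 ρ', ω i * (fd h g (i + 1)) ^ 2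
      ≤ ε * (h * ∑ i ∈ win h x0 ρ', ω i * (fd h (fd h g) i) ^ 2)
        + (1 / ε + C + 4) * Q h x0 R g := by
  set f : ℤ → ℝ := fun i => ω i * fd h g i * g (i + 1) with hf
  have hz : ∑ i ∈ win h x0 ρ', fd h f i = 0 := by
    have := sum_win_shift (h := h) (x0 := x0) (ρ := ρ) (k := 1) (r := ρ') hh (by simpa using hρ)
      (f := f) (fun i hi => by simp [hf, hω.supp i hi])
    simp only [fd]
    rw [← Finset.sum_div, Finset.sum_sub_distrib, this, sub_self, zero_div]
  have key : ∀ i ∈ win h x0 ρ', ω i * (fd h g (i + 1)) ^ 2 ≤ 2 * fd h f i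
      + (ε * (ω i * (fd h (fd h g) i) ^ 2) + ((1 / ε + 2) * g (i + 1) ^ 2
        + (C + 2) * g (i + 2) ^ 2)) := by
    intro i _
    have h0 := hω.nonneg i
    have h1 := hω.le_one i
    have d1 := hω.d1 i
    have ef : fd h f i = ω i * (fd h g (i + 1)) ^ 2 + ω i * (fd h (fd h g) i) * g (i + 1)
        + fd h ω i * fd h g (i + 1) * g (i + 2) := by
      simp only [hf, fd]
      rw [show i + 1 + 1 = i + 2 by ring]
      field_simp; ring
    have hp : h ^ 4 * (fd h g (i + 1)) ^ 2 ≤ 2 * (g (i + 1) ^ 2 + g (i + 2) ^ 2) := by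
      have : h ^ 4 * (fd h g (i + 1)) ^ 2 = h ^ 2 * (g (i + 2) - g (i + 1)) ^ 2 := by
        simp only [fd]; rw [show i + 1 + 1 = i + 2 by ring]; field_simp
      rw [this]
      have : h ^ 2 ≤ 1 := pow_le_one₀ hh.le hh1
      calc h ^ 2 * (g (i + 2) - g (i + 1)) ^ 2 ≤ 1 * (g (i + 2) - g (i + 1)) ^ 2 := by gcongr
        _ ≤ _ := by nlinarith [sq_nonneg (g (i + 2) + g (i + 1))]
    rw [ef]
    set p := fd h g (i + 1)
    set A := fd h (fd h g) i
    set D1 := fd h ω i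
    have a1 : -2 * (ω i * A * g (i + 1)) ≤ ε * (ω i * A ^ 2) + 1 / ε * g (i + 1) ^ 2 := by
      have : ε * (ω i * A ^ 2) + 1 / ε * (ω i * g (i + 1) ^ 2) + 2 * (ω i * A * g (i + 1))
        = ω i * (ε * A + g (i + 1)) ^ 2 / ε := by field_simp; ring
      have h2 : 0 ≤ ω i * (ε * A + g (i + 1)) ^ 2 / ε := by positivity
      have h3 : 1 / ε * (ω i * g (i + 1) ^ 2) ≤ 1 / ε * (1 * g (i + 1) ^ 2) := by gcongr
      linarith
    have hW : 0 < ω i + h ^ 4 := by positivity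
    have a2 : -2 * (D1 * p * g (i + 2)) ≤ (ω i + h ^ 4) * p ^ 2 + C * g (i + 2) ^ 2 := by
      have h2 : D1 ^ 2 / (ω i + h ^ 4) ≤ C := by rw [div_le_iff₀ hW]; exact d1
      have : (ω i + h ^ 4) * p ^ 2 + D1 ^ 2 / (ω i + h ^ 4) * g (i + 2) ^ 2
          + 2 * (D1 * p * g (i + 2)) = ((ω i + h ^ 4) * p + D1 * g (i + 2)) ^ 2 / (ω i + h ^ 4) := by
        field_simp; ring
      have h3 : 0 ≤ ((ω i + h ^ 4) * p + D1 * g (i + 2)) ^ 2 / (ω i + h ^ 4) := by positivity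
      have h4 := mul_le_mul_of_nonneg_right h2 (sq_nonneg (g (i + 2)))
      linarith
    linarith
  have hsum := mul_le_mul_of_nonneg_left (Finset.sum_le_sum key) hh.le
  rw [Finset.sum_add_distrib, Finset.sum_add_distrib, Finset.sum_add_distrib,
    ← Finset.mul_sum, ← Finset.mul_sum, ← Finset.mul_sum, ← Finset.mul_sum, hz] at hsum
  have q2 := Q_shift_le (x0 := x0) (r := ρ') (r' := R) hh (k := 2) (by simpa using hR) g
  have q1 := Q_shift_le (x0 := x0) (r := ρ') (r' := R) hh (k := 1) (by simp; linarith) g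
  unfold Q at q2 q1
  have hQ' : h * ∑ i ∈ win h x0 R, g i ^ 2 = Q h x0 R g := rfl
  rw [hQ'] at q2 q1
  have c1 := mul_le_mul_of_nonneg_left q1 (by positivity : 0 ≤ 1 / ε + 2)
  have c2 := mul_le_mul_of_nonneg_left q2 (by positivity : 0 ≤ C + 2)
  refine hsum.trans ?_
  linarith

lemma sum_range_le_win {h x0 r : ℝ} {f : ℤ → ℝ} (hf : ∀ i, 0 ≤ f i) {i : ℤ} {m : ℕ}
    (hi : ∀ j < m, i + (j:ℤ) ∈ win h x0 r) :
    ∑ j ∈ Finset.range m, f (i + j) ≤ ∑ k ∈ win h x0 r, f k := by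
  rw [← Finset.sum_image (s := Finset.range m) (g := fun j : ℕ => i + (j:ℤ)) (f := f)
    (fun a _ b _ hab => by simpa using hab)]
  refine Finset.sum_le_sum_of_subset_of_nonneg ?_ fun _ _ _ => hf _
  intro k hk
  obtain ⟨j, hj, rfl⟩ := Finset.mem_image.1 hk
  exact hi j (Finset.mem_range.1 hj)

/-- The local Sobolev inequality at scale `δ`. -/
lemma sup_le_Q {h x0 r r' δ : ℝ} (hh : 0 < h) (hδ : 0 < δ) (hr : r + δ ≤ r') (g : ℤ → ℝ) {i : ℤ}
    (hi : i ∈ win h x0 r) :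
    g i ^ 2 ≤ 2 / δ * Q h x0 r' g + 2 * δ * Q h x0 r' (fd h g) := by
  set m := ⌊δ / h⌋₊ with hm
  have hmδ : (m:ℝ) * h ≤ δ := by
    have := Nat.floor_le (by positivity : 0 ≤ δ / h)
    rwa [← hm, le_div_iff₀ hh] at this
  have hδm : δ ≤ (m + 1) * h := by
    have := (Nat.lt_floor_add_one (δ / h)).le
    rwa [← hm, div_le_iff₀ hh] at this
  have hmem : ∀ j < m + 1, i + (j:ℤ) ∈ win h x0 r' := by
    intro j hj
    refine mem_win_add hh ?_ hi
    have : (j:ℝ) ≤ m := by exact_mod_cast Nat.lt_succ_iff.1 hj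
    simp only [Int.cast_natCast, Nat.abs_cast]
    nlinarith
  have hstep : ∀ j ∈ Finset.range (m + 1), g i ^ 2 ≤ 2 * g (i + j) ^ 2 + 2 * (δ * Q h x0 r' (fd h g)) := by
    intro j hj
    rw [Finset.mem_range] at hj
    have e1 := sq_sub_le_sum hh g i j
    have e2 : ∑ k ∈ Finset.range j, (fd h g (i + k)) ^ 2 ≤ ∑ k ∈ win h x0 r', (fd h g k) ^ 2 :=
      sum_range_le_win (f := fun k => (fd h g k) ^ 2) (fun _ => sq_nonneg _)
        fun k hk => hmem k (by omega)
    have hj' : (j:ℝ) ≤ m := by exact_mod_cast Nat.lt_succ_iff.1 hj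
    have e3 : (g (i + j) - g i) ^ 2 ≤ δ * Q h x0 r' (fd h g) := by
      calc _ ≤ _ := e1
        _ ≤ j * h ^ 2 * ∑ k ∈ win h x0 r', (fd h g k) ^ 2 := by gcongr
        _ = (j * h) * Q h x0 r' (fd h g) := by unfold Q; ring
        _ ≤ _ := by
          have := Q_nonneg (x0 := x0) (r := r') hh (fd h g)
          gcongr
          exact (mul_le_mul_of_nonneg_right hj' hh.le).trans hmδ
    nlinarith [sq_nonneg (2 * g (i + j) - g i)]
  have hs := Finset.sum_le_sum hstep
  rw [Finset.sum_const, Finset.card_range, Finset.sum_add_distrib, ← Finset.mul_sum,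
    Finset.sum_const, Finset.card_range, nsmul_eq_mul, nsmul_eq_mul] at hs
  have hq : ∑ j ∈ Finset.range (m + 1), g (i + j) ^ 2 ≤ ∑ k ∈ win h x0 r', g k ^ 2 :=
    sum_range_le_win (f := fun k => g k ^ 2) (fun _ => sq_nonneg _) hmem
  have hq' : h * ∑ j ∈ Finset.range (m + 1), g (i + j) ^ 2 ≤ Q h x0 r' g :=
    mul_le_mul_of_nonneg_left hq hh.le
  push_cast at hs
  set a := ((m:ℝ) + 1) * h with ha
  have ha0 : 0 < a := lt_of_lt_of_le hδ hδm
  have h1 : a * g i ^ 2 ≤ 2 * Q h x0 r' g + 2 * a * (δ * Q h x0 r' (fd h g)) := by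
    have := mul_le_mul_of_nonneg_left hs hh.le
    rw [ha]; linarith
  have h2 : g i ^ 2 ≤ 2 / a * Q h x0 r' g + 2 * δ * Q h x0 r' (fd h g) := by
    have e : 2 / a * Q h x0 r' g + 2 * δ * Q h x0 r' (fd h g)
      = (2 * Q h x0 r' g + 2 * a * (δ * Q h x0 r' (fd h g))) / a := by field_simp
    rw [e, le_div_iff₀ ha0]; linarith
  refine h2.trans ?_
  have := Q_nonneg (x0 := x0) (r := r') hh g
  gcongr

lemma card_win_le {h x0 r : ℝ} (hh : 0 < h) (hr : 0 ≤ r) : h * (win h x0 r).card ≤ 2 * r + h := by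
  unfold win
  rw [Int.card_Icc]
  have h1 := Int.floor_le ((x0 + r) / h)
  have h2 := Int.le_ceil ((x0 - r) / h)
  rw [le_div_iff₀ hh] at h1
  rw [div_le_iff₀ hh] at h2
  rcases le_total 0 (⌊(x0 + r) / h⌋ + 1 - ⌈(x0 - r) / h⌉) with hc | hc
  · have : (((⌊(x0 + r) / h⌋ + 1 - ⌈(x0 - r) / h⌉).toNat : ℤ) : ℝ)
        = ((⌊(x0 + r) / h⌋ + 1 - ⌈(x0 - r) / h⌉ : ℤ) : ℝ) := by rw [Int.toNat_of_nonneg hc]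
    rw [Int.cast_natCast] at this
    rw [this]; push_cast; linarith
  · rw [Int.toNat_eq_zero.2 hc]; simp; linarith

/-- A window shorter than a period carries at most the sum over the period. -/
lemma sum_win_le_psum {N : ℕ} {h x0 r : ℝ} (hh : 0 < h) (hN : 2 * r + h ≤ N * h) {f : ℤ → ℝ}
    (hf : ∀ i, 0 ≤ f i) (hper : ∀ i, f (i + N) = f i) :
    ∑ i ∈ win h x0 r, f i ≤ psum N f := by
  set a := ⌈(x0 - r) / h⌉ with ha
  rw [← psum_shift hper a]
  unfold psum
  rw [← Finset.sum_image (s := Finset.range N) (g := fun j : ℕ => (j:ℤ) + a) (f := f)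
    (fun a _ b _ hab => by simpa using hab)]
  refine Finset.sum_le_sum_of_subset_of_nonneg ?_ fun _ _ _ => hf _
  intro i hi
  unfold win at hi
  rw [Finset.mem_Icc, ← ha] at hi
  refine Finset.mem_image.2 ⟨(i - a).toNat, ?_, by rw [Int.toNat_of_nonneg (by omega)]; ring⟩
  rw [Finset.mem_range, Int.toNat_lt (by omega)]
  have h1 := Int.floor_le ((x0 + r) / h)
  have h2 := Int.le_ceil ((x0 - r) / h)
  rw [le_div_iff₀ hh] at h1
  rw [div_le_iff₀ hh] at h2
  have h3 : (i:ℝ) ≤ ⌊(x0 + r) / h⌋ := by exact_mod_cast hi.2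
  have h4 : ((i:ℝ) - a) * h < N * h := by nlinarith
  have := lt_of_mul_lt_mul_right h4 hh.le
  exact_mod_cast this

/-! ### Local bounds for families of lattice functions -/

/-- A family of time-dependent lattice functions, indexed by the discretization parameter. -/
abbrev Fam := ℕ → ℝ → ℤ → ℝ

/-- A space-time box of centre `(t0, x0)` and half-width `R`, with a sequence of mesh sizes. -/
structure Bx where
  h : ℕ → ℝ
  t0 : ℝ
  x0 : ℝ
  R : ℝ
  hpos : ∀ n, 0 < h n
  hlim : Tendsto h atTop (nhds 0)

lemma Bx.ev (B : Bx) {ε : ℝ} (hε : 0 < ε) : ∀ᶠ n in atTop, B.h n ≤ ε :=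
  (B.hlim.eventually (gt_mem_nhds hε)).mono fun _ h => h.le

/-- Difference quotient of a family. -/
def DD (B : Bx) (f : Fam) : Fam := fun n t => fd (B.h n) (f n t)

/-- Translate of a family. -/
def SH (k : ℤ) (f : Fam) : Fam := fun n t i => f n t (i + k)

/-- Continuity in time. -/
def CT (f : Fam) : Prop := ∀ n i, Continuous fun t => f n t i

lemma DD_mul (B : Bx) (f g : Fam) : DD B (f * g) = DD B f * SH 1 g + f * DD B g := by
  funext n t i; simp only [DD, SH, fd, Pi.mul_apply, Pi.add_apply]; ring

lemma DD_add (B : Bx) (f g : Fam) : DD B (f + g) = DD B f + DD B g := by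
  funext n t i; simp only [DD, fd, Pi.add_apply]; ring

lemma DD_SH (B : Bx) (k : ℤ) (f : Fam) : DD B (SH k f) = SH k (DD B f) := by
  funext n t i; simp only [DD, SH, fd]; rw [add_right_comm]

lemma DD_iter_add (B : Bx) (j : ℕ) (f g : Fam) :
    (DD B)^[j] (f + g) = (DD B)^[j] f + (DD B)^[j] g := by
  induction j generalizing f g with
  | zero => rfl
  | succ j ih => rw [Function.iterate_succ_apply, DD_add, ih]; rfl

lemma DD_iter_SH (B : Bx) (j : ℕ) (k : ℤ) (f : Fam) :
    (DD B)^[j] (SH k f) = SH k ((DD B)^[j] f) := by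
  induction j generalizing f with
  | zero => rfl
  | succ j ih => rw [Function.iterate_succ_apply, DD_SH, ih]; rfl

lemma CT.DD {f : Fam} (hf : CT f) (B : Bx) : CT (DD B f) := fun n i =>
  Scheme.cont_fd (h := B.h n) (f n) (hf n) i

lemma CT.DD_iter {f : Fam} (hf : CT f) (B : Bx) (j : ℕ) : CT ((_root_.DD B)^[j] f) := by
  induction j generalizing f with
  | zero => exact hf
  | succ j ih => exact ih (hf.DD B)

lemma CT.SH {f : Fam} (hf : CT f) (k : ℤ) : CT (SH k f) := fun n _ => hf n _
lemma CT.add {f g : Fam} (hf : CT f) (hg : CT g) : CT (f + g) := fun n i => (hf n i).add (hg n i)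
lemma CT.sub {f g : Fam} (hf : CT f) (hg : CT g) : CT (f - g) := fun n i => (hf n i).sub (hg n i)
lemma CT.mul {f g : Fam} (hf : CT f) (hg : CT g) : CT (f * g) := fun n i => (hf n i).mul (hg n i)

lemma CT.Q {f : Fam} (hf : CT f) (h x0 r : ℝ) (n : ℕ) : Continuous fun t => Q h x0 r (f n t) :=
  continuous_const.mul (continuous_finsetSum _ fun i _ => (hf n i).pow 2)

/-- A family of nonnegative continuous functions of time bounded in `L¹(t0-r, t0+r)`. -/
structure T1 (B : Bx) (r : ℝ) (b : ℕ → ℝ → ℝ) : Prop where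
  cont : ∀ n, Continuous (b n)
  nonneg : ∀ n t, 0 ≤ b n t
  bd : ∃ C, ∀ᶠ n in atTop, ∫ t in (B.t0 - r)..(B.t0 + r), b n t ≤ C

section T1
variable {B : Bx} {r r' : ℝ} {b b' : ℕ → ℝ → ℝ}

lemma T1.add (h1 : T1 B r b) (h2 : T1 B r b') : T1 B r (fun n t => b n t + b' n t) := by
  obtain ⟨C, hC⟩ := h1.bd
  obtain ⟨D, hD⟩ := h2.bd
  refine ⟨fun n => (h1.cont n).add (h2.cont n), fun n t => add_nonneg (h1.nonneg n t) (h2.nonneg n t),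
    C + D, ?_⟩
  filter_upwards [hC, hD] with n a1 a2
  rw [intervalIntegral.integral_add ((h1.cont n).intervalIntegrable _ _)
    ((h2.cont n).intervalIntegrable _ _)]
  linarith

lemma T1.const_mul (h1 : T1 B r b) {c : ℝ} (hc : 0 ≤ c) : T1 B r (fun n t => c * b n t) := by
  obtain ⟨C, hC⟩ := h1.bd
  refine ⟨fun n => continuous_const.mul (h1.cont n), fun n t => mul_nonneg hc (h1.nonneg n t),
    c * C, ?_⟩
  filter_upwards [hC] with n a1
  rw [intervalIntegral.integral_const_mul]
  gcongr

lemma T1.const {c : ℝ} (hc : 0 ≤ c) : T1 B r (fun _ _ => c) :=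
  ⟨fun _ => continuous_const, fun _ _ => hc, _, Eventually.of_forall fun _ => le_rfl⟩

lemma T1.of_le (h1 : T1 B r' b) (hr : 0 ≤ r) (hrr : r ≤ r') (hc : ∀ n, Continuous (b' n))
    (h0 : ∀ n t, 0 ≤ b' n t)
    (hle : ∀ᶠ n in atTop, ∀ t ∈ Icc (B.t0 - r) (B.t0 + r), b' n t ≤ b n t) : T1 B r b' := by
  obtain ⟨C, hC⟩ := h1.bd
  refine ⟨hc, h0, C, ?_⟩
  filter_upwards [hC, hle] with n a1 a2
  refine le_trans ?_ a1
  calc _ ≤ ∫ t in (B.t0 - r)..(B.t0 + r), b n t :=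
        intervalIntegral.integral_mono_on (by linarith) ((hc n).intervalIntegrable _ _)
          ((h1.cont n).intervalIntegrable _ _) a2
    _ ≤ _ := intervalIntegral.integral_mono_interval (by linarith) (by linarith) (by linarith)
        (Eventually.of_forall fun t => h1.nonneg n t) ((h1.cont n).intervalIntegrable _ _)

lemma T1.mono (h1 : T1 B r' b) (hr : 0 ≤ r) (hrr : r ≤ r') : T1 B r b :=
  h1.of_le hr hrr h1.cont h1.nonneg (Eventually.of_forall fun _ _ _ => le_rfl)
end T1

/-- Local uniform boundedness. -/
def BB (B : Bx) (f : Fam) : Prop := CT f ∧ ∀ r, 0 < r → r < B.R → ∃ C, 0 ≤ C ∧ ∀ᶠ n in atTop,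
  ∀ t ∈ Icc (B.t0 - r) (B.t0 + r), ∀ i ∈ win (B.h n) B.x0 r, |f n t i| ≤ C

/-- Local boundedness in `L^∞(L²)`. -/
def BL (B : Bx) (f : Fam) : Prop := CT f ∧ ∀ r, 0 < r → r < B.R → ∃ C, 0 ≤ C ∧ ∀ᶠ n in atTop,
  ∀ t ∈ Icc (B.t0 - r) (B.t0 + r), Q (B.h n) B.x0 r (f n t) ≤ C

/-- Local boundedness in `L²(L²)`. -/
def LL (B : Bx) (f : Fam) : Prop := CT f ∧ ∀ r, 0 < r → r < B.R →
  T1 B r (fun n t => Q (B.h n) B.x0 r (f n t))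

section closure
variable {B : Bx} {f g : Fam}

lemma Icc_sub_Icc {t0 r r' t : ℝ} (hr : r ≤ r') (ht : t ∈ Icc (t0 - r) (t0 + r)) :
    t ∈ Icc (t0 - r') (t0 + r') := ⟨by linarith [ht.1], by linarith [ht.2]⟩

/-- An intermediate radius. -/
lemma mid_lt {r R : ℝ} (h : r < R) : r < (r + R) / 2 ∧ (r + R) / 2 < R := by
  constructor <;> linarith

/-- For a fine mesh, translates of a window by a fixed index stay in a larger window. -/
lemma Bx.ev_shift (B : Bx) {r r' : ℝ} (h : r < r') (k : ℤ) :
    ∀ᶠ n in atTop, r + |(k:ℝ)| * B.h n ≤ r' := by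
  have : Tendsto (fun n => r + |(k:ℝ)| * B.h n) atTop (nhds (r + |(k:ℝ)| * 0)) :=
    (B.hlim.const_mul _).const_add _
  rw [mul_zero, add_zero] at this
  exact (this.eventually (gt_mem_nhds h)).mono fun _ h => h.le

lemma BB.shift (hf : BB B f) (k : ℤ) : BB B (SH k f) := by
  refine ⟨hf.1.SH k, fun r h0 hr => ?_⟩
  obtain ⟨m1, m2⟩ := mid_lt hr
  obtain ⟨C, hC0, hC⟩ := hf.2 ((r + B.R) / 2) (by linarith) m2
  refine ⟨C, hC0, ?_⟩
  filter_upwards [hC, B.ev_shift m1 k] with n a1 a2 t ht i hi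
  exact a1 t (Icc_sub_Icc m1.le ht) _ (mem_win_add (B.hpos n) a2 hi)

lemma BL.shift (hf : BL B f) (k : ℤ) : BL B (SH k f) := by
  refine ⟨hf.1.SH k, fun r h0 hr => ?_⟩
  obtain ⟨m1, m2⟩ := mid_lt hr
  obtain ⟨C, hC0, hC⟩ := hf.2 ((r + B.R) / 2) (by linarith) m2
  refine ⟨C, hC0, ?_⟩
  filter_upwards [hC, B.ev_shift m1 k] with n a1 a2 t ht
  exact (Q_shift_le (B.hpos n) a2 _).trans (a1 t (Icc_sub_Icc m1.le ht))

lemma LL.shift (hf : LL B f) (k : ℤ) : LL B (SH k f) := by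
  refine ⟨hf.1.SH k, fun r h0 hr => ?_⟩
  obtain ⟨m1, m2⟩ := mid_lt hr
  refine (hf.2 ((r + B.R) / 2) (by linarith) m2).of_le h0.le m1.le (fun n => (hf.1.SH k).Q _ _ _ n)
    (fun n t => Q_nonneg (B.hpos n) _) ?_
  filter_upwards [B.ev_shift m1 k] with n a2 t _
  exact Q_shift_le (B.hpos n) a2 _

lemma Q_add_le {h x0 r : ℝ} (hh : 0 < h) (f g : ℤ → ℝ) :
    Q h x0 r (fun i => f i + g i) ≤ 2 * Q h x0 r f + 2 * Q h x0 r g := by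
  have : ∑ i ∈ win h x0 r, (f i + g i) ^ 2
      ≤ 2 * ∑ i ∈ win h x0 r, f i ^ 2 + 2 * ∑ i ∈ win h x0 r, g i ^ 2 := by
    rw [Finset.mul_sum, Finset.mul_sum, ← Finset.sum_add_distrib]
    exact Finset.sum_le_sum fun i _ => by nlinarith [sq_nonneg (f i - g i)]
  have := mul_le_mul_of_nonneg_left this hh.le
  unfold Q; linarith

lemma Q_mul_le {h x0 r M : ℝ} (hh : 0 < h) (f g : ℤ → ℝ) (hg : ∀ i ∈ win h x0 r, g i ^ 2 ≤ M) :
    Q h x0 r (fun i => f i * g i) ≤ M * Q h x0 r f := by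
  have : ∑ i ∈ win h x0 r, (f i * g i) ^ 2 ≤ M * ∑ i ∈ win h x0 r, f i ^ 2 := by
    rw [Finset.mul_sum]
    exact Finset.sum_le_sum fun i hi => by
      rw [mul_pow, mul_comm]; exact mul_le_mul_of_nonneg_right (hg i hi) (sq_nonneg _)
  have := mul_le_mul_of_nonneg_left this hh.le
  unfold Q; linarith

lemma BB.add (hf : BB B f) (hg : BB B g) : BB B (f + g) := by
  refine ⟨hf.1.add hg.1, fun r h0 hr => ?_⟩
  obtain ⟨C, hC0, hC⟩ := hf.2 r h0 hr
  obtain ⟨D, hD0, hD⟩ := hg.2 r h0 hr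
  refine ⟨C + D, by linarith, ?_⟩
  filter_upwards [hC, hD] with n a1 a2 t ht i hi
  exact (abs_add_le _ _).trans (add_le_add (a1 t ht i hi) (a2 t ht i hi))

lemma BB.mul (hf : BB B f) (hg : BB B g) : BB B (f * g) := by
  refine ⟨hf.1.mul hg.1, fun r h0 hr => ?_⟩
  obtain ⟨C, hC0, hC⟩ := hf.2 r h0 hr
  obtain ⟨D, hD0, hD⟩ := hg.2 r h0 hr
  refine ⟨C * D, by positivity, ?_⟩
  filter_upwards [hC, hD] with n a1 a2 t ht i hi
  simp only [Pi.mul_apply]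
  rw [abs_mul]
  exact mul_le_mul (a1 t ht i hi) (a2 t ht i hi) (abs_nonneg _) hC0

lemma BL.add (hf : BL B f) (hg : BL B g) : BL B (f + g) := by
  refine ⟨hf.1.add hg.1, fun r h0 hr => ?_⟩
  obtain ⟨C, hC0, hC⟩ := hf.2 r h0 hr
  obtain ⟨D, hD0, hD⟩ := hg.2 r h0 hr
  refine ⟨2 * C + 2 * D, by linarith, ?_⟩
  filter_upwards [hC, hD] with n a1 a2 t ht
  have := Q_add_le (x0 := B.x0) (r := r) (B.hpos n) (f n t) (g n t)
  exact this.trans (by linarith [a1 t ht, a2 t ht])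

lemma LL.add (hf : LL B f) (hg : LL B g) : LL B (f + g) := by
  refine ⟨hf.1.add hg.1, fun r h0 hr => ?_⟩
  refine (((hf.2 r h0 hr).const_mul zero_le_two).add ((hg.2 r h0 hr).const_mul zero_le_two)).of_le
    h0.le le_rfl (fun n => (hf.1.add hg.1).Q _ _ _ n) (fun n t => Q_nonneg (B.hpos n) _) ?_
  exact Eventually.of_forall fun n t _ => Q_add_le (B.hpos n) _ _

lemma BL.mul_BB (hf : BL B f) (hg : BB B g) : BL B (f * g) := by
  refine ⟨hf.1.mul hg.1, fun r h0 hr => ?_⟩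
  obtain ⟨C, hC0, hC⟩ := hf.2 r h0 hr
  obtain ⟨D, hD0, hD⟩ := hg.2 r h0 hr
  refine ⟨D ^ 2 * C, by positivity, ?_⟩
  filter_upwards [hC, hD] with n a1 a2 t ht
  refine (Q_mul_le (B.hpos n) (f n t) (g n t) (M := D ^ 2) fun i hi => ?_).trans ?_
  · rw [← sq_abs]; exact pow_le_pow_left₀ (abs_nonneg _) (a2 t ht i hi) 2
  · exact mul_le_mul_of_nonneg_left (a1 t ht) (sq_nonneg _)

lemma LL.mul_BB (hf : LL B f) (hg : BB B g) : LL B (f * g) := by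
  refine ⟨hf.1.mul hg.1, fun r h0 hr => ?_⟩
  obtain ⟨D, hD0, hD⟩ := hg.2 r h0 hr
  refine ((hf.2 r h0 hr).const_mul (sq_nonneg D)).of_le
    h0.le le_rfl (fun n => (hf.1.mul hg.1).Q _ _ _ n) (fun n t => Q_nonneg (B.hpos n) _) ?_
  filter_upwards [hD] with n a2 t ht
  refine Q_mul_le (B.hpos n) (f n t) (g n t) (M := D ^ 2) fun i hi => ?_
  rw [← sq_abs]; exact pow_le_pow_left₀ (abs_nonneg _) (a2 t ht i hi) 2

lemma BB.toBL (hf : BB B f) : BL B f := by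
  refine ⟨hf.1, fun r h0 hr => ?_⟩
  obtain ⟨C, hC0, hC⟩ := hf.2 r h0 hr
  refine ⟨(2 * r + 1) * C ^ 2, by positivity, ?_⟩
  filter_upwards [hC, B.ev one_pos] with n a1 a2 t ht
  have h1 : ∑ i ∈ win (B.h n) B.x0 r, f n t i ^ 2 ≤ (win (B.h n) B.x0 r).card * C ^ 2 := by
    rw [← nsmul_eq_mul]
    refine Finset.sum_le_card_nsmul _ _ _ fun i hi => ?_
    rw [← sq_abs]; exact pow_le_pow_left₀ (abs_nonneg _) (a1 t ht i hi) 2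
  have h2 := card_win_le (x0 := B.x0) (B.hpos n) h0.le
  calc _ ≤ B.h n * ((win (B.h n) B.x0 r).card * C ^ 2) := mul_le_mul_of_nonneg_left h1 (B.hpos n).le
    _ = (B.h n * (win (B.h n) B.x0 r).card) * C ^ 2 := by ring
    _ ≤ _ := by gcongr; linarith

lemma BL.toLL (hf : BL B f) : LL B f := by
  refine ⟨hf.1, fun r h0 hr => ?_⟩
  obtain ⟨C, hC0, hC⟩ := hf.2 r h0 hr
  exact (T1.const hC0).of_le h0.le le_rfl (fun n => hf.1.Q _ _ _ n)
    (fun n t => Q_nonneg (B.hpos n) _) hC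

lemma BB.toLL (hf : BB B f) : LL B f := hf.toBL.toLL

lemma BB.of_BL (hf : BL B f) (hg : BL B (DD B f)) : BB B f := by
  refine ⟨hf.1, fun r h0 hr => ?_⟩
  obtain ⟨m1, m2⟩ := mid_lt hr
  obtain ⟨C, hC0, hC⟩ := hf.2 ((r + B.R) / 2) (by linarith) m2
  obtain ⟨D, hD0, hD⟩ := hg.2 ((r + B.R) / 2) (by linarith) m2
  set δ := (r + B.R) / 2 - r with hδ
  have hδ0 : 0 < δ := by linarith
  refine ⟨√(2 / δ * C + 2 * δ * D), Real.sqrt_nonneg _, ?_⟩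
  filter_upwards [hC, hD] with n a1 a2 t ht i hi
  refine Real.abs_le_sqrt ?_
  have ht' := Icc_sub_Icc m1.le ht
  refine (sup_le_Q (B.hpos n) hδ0 (r' := (r + B.R) / 2) (by linarith) (f n t) hi).trans ?_
  have b1 := a1 t ht'
  have b2 : Q (B.h n) B.x0 ((r + B.R) / 2) (fd (B.h n) (f n t)) ≤ D := a2 t ht'
  gcongr

/-- `L^∞(L²) · L²(H¹) ⊂ L²(L²)`. -/
lemma BL.mul_LL (hf : BL B f) (hg : LL B g) (hg' : LL B (DD B g)) : LL B (f * g) := by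
  refine ⟨hf.1.mul hg.1, fun r h0 hr => ?_⟩
  obtain ⟨m1, m2⟩ := mid_lt hr
  obtain ⟨C, hC0, hC⟩ := hf.2 r h0 hr
  set δ := (r + B.R) / 2 - r with hδ
  have hδ0 : 0 < δ := by linarith
  have t1 := (((hg.2 ((r + B.R) / 2) (by linarith) m2).const_mul (c := 2 / δ) (by positivity)).add
    ((hg'.2 ((r + B.R) / 2) (by linarith) m2).const_mul (c := 2 * δ) (by positivity))).const_mul hC0
  refine t1.of_le h0.le m1.le (fun n => (hf.1.mul hg.1).Q _ _ _ n)
    (fun n t => Q_nonneg (B.hpos n) _) ?_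
  filter_upwards [hC] with n a1 t ht
  refine (Q_mul_le (B.hpos n) (f n t) (g n t) (fun i hi =>
    sup_le_Q (B.hpos n) hδ0 (r' := (r + B.R) / 2) (by linarith) (g n t) hi)).trans ?_
  rw [mul_comm]
  refine mul_le_mul_of_nonneg_right (a1 t ht) ?_
  have q1 := Q_nonneg (x0 := B.x0) (r := (r + B.R) / 2) (B.hpos n) (g n t)
  have q2 := Q_nonneg (x0 := B.x0) (r := (r + B.R) / 2) (B.hpos n) (fd (B.h n) (g n t))
  positivity

/-- Control of `f, …, D^{j-1}f` in `L^∞` and of `D^j f` in `L^∞(L²)`. -/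
def XX (B : Bx) : ℕ → Fam → Prop
  | 0, f => BL B f
  | j + 1, f => BB B f ∧ XX B j (DD B f)

lemma XX.of_succ {j : ℕ} (hf : XX B (j + 1) f) : XX B j f := by
  induction j generalizing f with
  | zero => exact hf.1.toBL
  | succ j ih => exact ⟨hf.1, ih hf.2⟩

lemma XX.shift {j : ℕ} (hf : XX B j f) (k : ℤ) : XX B j (SH k f) := by
  induction j generalizing f with
  | zero => exact BL.shift hf k
  | succ j ih => exact ⟨hf.1.shift k, by rw [DD_SH]; exact ih hf.2⟩

lemma XX.add {j : ℕ} (hf : XX B j f) (hg : XX B j g) : XX B j (f + g) := by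
  induction j generalizing f g with
  | zero => exact BL.add hf hg
  | succ j ih => exact ⟨hf.1.add hg.1, by rw [DD_add]; exact ih hf.2 hg.2⟩

lemma XX.mul {j : ℕ} (hf : XX B (j + 1) f) (hg : XX B (j + 1) g) : XX B (j + 1) (f * g) := by
  induction j generalizing f g with
  | zero =>
    refine ⟨hf.1.mul hg.1, ?_⟩
    rw [DD_mul]
    exact BL.add (BL.mul_BB hf.2 (hg.1.shift 1)) (by rw [mul_comm]; exact BL.mul_BB hg.2 hf.1)
  | succ j ih =>
    refine ⟨hf.1.mul hg.1, ?_⟩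
    rw [DD_mul]
    exact (ih hf.2 (hg.of_succ.shift 1)).add (ih hf.of_succ hg.2)

lemma XX.toBB {j : ℕ} (hf : XX B (j + 1) f) : BB B f := hf.1

lemma LL_iter_mul_one (hf : XX B 1 f) (hg : LL B g) (hg' : LL B (DD B g)) : LL B (DD B (f * g)) := by
  rw [DD_mul]
  exact (BL.mul_LL hf.2 (hg.shift 1) (by rw [DD_SH]; exact hg'.shift 1)).add
    (by rw [mul_comm]; exact hg'.mul_BB hf.1)

lemma LL_iter_mul {j : ℕ} (hf : XX B (j + 1) f) (hg : ∀ i ≤ j + 1, LL B ((DD B)^[i] g)) :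
    LL B ((DD B)^[j + 1] (f * g)) := by
  induction j generalizing f g with
  | zero => exact LL_iter_mul_one hf (hg 0 (by omega)) (hg 1 (by omega))
  | succ j ih =>
    rw [Function.iterate_succ_apply, DD_mul, DD_iter_add]
    refine (ih hf.2 fun i hi => ?_).add (ih hf.of_succ fun i hi => ?_)
    · rw [DD_iter_SH]; exact (hg i (by omega)).shift 1
    · rw [← Function.iterate_succ_apply]; exact hg (i + 1) (by omega)

/-- The commutator `D^j(fg) - f D^j g` only involves `j-1` derivatives of `g`. -/
lemma LL_commutator {j : ℕ} (hf : XX B (j + 2) f) (hg : ∀ i ≤ j + 1, LL B ((DD B)^[i] g)) :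
    LL B ((DD B)^[j + 2] (f * g) - f * (DD B)^[j + 2] g) := by
  induction j generalizing f g with
  | zero =>
    have e : (DD B)^[0 + 2] (f * g) - f * (DD B)^[0 + 2] g
        = DD B (DD B f * SH 1 g) + SH 1 (DD B g) * DD B f := by
      change DD B (DD B (f * g)) - f * DD B (DD B g) = _
      rw [DD_mul, DD_add, DD_mul B f (DD B g)]; ring
    rw [e]
    exact (LL_iter_mul_one hf.2 ((hg 0 (by omega)).shift 1)
      (by rw [DD_SH]; exact (hg 1 (by omega)).shift 1)).add
      (((hg 1 (by omega)).shift 1).mul_BB hf.2.1)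
  | succ j ih =>
    have e : (DD B)^[j + 1 + 2] (f * g) - f * (DD B)^[j + 1 + 2] g
        = (DD B)^[j + 1 + 1] (DD B f * SH 1 g)
          + ((DD B)^[j + 2] (f * DD B g) - f * (DD B)^[j + 2] (DD B g)) := by
      rw [show j + 1 + 2 = (j + 2) + 1 by ring, Function.iterate_succ_apply, DD_mul, DD_iter_add,
        Function.iterate_succ_apply (DD B) (j + 2) g]
      ring
    rw [e]
    refine (LL_iter_mul hf.2 fun i hi => ?_).add (ih hf.of_succ fun i hi => ?_)
    · rw [DD_iter_SH]; exact (hg i (by omega)).shift 1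
    · rw [← Function.iterate_succ_apply]; exact hg (i + 1) (by omega)

end closure

/-- A differential inequality integrated against the weight `s - a`, which needs no control of
the initial value. -/
lemma time_abs {a b a' t : ℝ} {Y Y' A F : ℝ → ℝ} (haa : a ≤ a') (hat : a' ≤ t) (htb : t ≤ b)
    (hY : ∀ s ∈ Icc a b, HasDerivWithinAt Y (Y' s) (Icc a b) s)
    (hle : ∀ s ∈ Icc a b, Y' s ≤ -A s + F s) (cY : Continuous Y) (cA : Continuous A)
    (cF : Continuous F) (hY0 : ∀ s, 0 ≤ Y s) (hA0 : ∀ s, 0 ≤ A s) (hF0 : ∀ s, 0 ≤ F s) :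
    (a' - a) * (Y t + ∫ s in a'..t, A s) ≤ ∫ s in a..b, (Y s + (b - a) * F s) := by
  set g : ℝ → ℝ := fun s => (Y s + (b - a) * F s) - (s - a) * A s with hg
  have cg : Continuous g := by fun_prop
  have cG : Continuous fun s => Y s + (b - a) * F s := by fun_prop
  have cW : Continuous fun s => (s - a) * A s := by fun_prop
  have hanti : AntitoneOn (fun s => (s - a) * Y s - ∫ τ in a..s, g τ) (Icc a b) := by
    have hd : ∀ s ∈ Icc a b, HasDerivWithinAt (fun s => (s - a) * Y s - ∫ τ in a..s, g τ)
        ((1 * Y s + (s - a) * Y' s) - g s) (Icc a b) s := fun s hs =>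
      (((hasDerivWithinAt_id s _).sub_const a).mul (hY s hs)).sub
        (cg.integral_hasStrictDerivAt a s).hasDerivAt.hasDerivWithinAt
    refine antitoneOn_of_hasDerivWithinAt_nonpos (convex_Icc _ _)
      (fun s hs => (hd s hs).continuousWithinAt) (fun s hs => (hd s (interior_subset hs)).mono
        interior_subset) (fun s hs => ?_)
    have hs := interior_subset hs
    have h1 := mul_le_mul_of_nonneg_left (hle s hs) (sub_nonneg.2 hs.1)
    have h2 : (s - a) * F s ≤ (b - a) * F s :=
      mul_le_mul_of_nonneg_right (by linarith [hs.2]) (hF0 s)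
    simp only [hg]; linarith
  have h1 := hanti ⟨le_rfl, by linarith⟩ ⟨by linarith, htb⟩ (by linarith : a ≤ t)
  simp only [sub_self, zero_mul, intervalIntegral.integral_same] at h1
  have h2 : ∫ τ in a..t, g τ = (∫ τ in a..t, (Y τ + (b - a) * F τ)) - ∫ τ in a..t, (τ - a) * A τ :=
    intervalIntegral.integral_sub (cG.intervalIntegrable _ _) (cW.intervalIntegrable _ _)
  have h3 : ∫ τ in a..t, (Y τ + (b - a) * F τ) ≤ ∫ τ in a..b, (Y τ + (b - a) * F τ) :=
    intervalIntegral.integral_mono_interval le_rfl (by linarith) htb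
      (Eventually.of_forall fun s => add_nonneg (hY0 s) (mul_nonneg (by linarith) (hF0 s)))
      (cG.intervalIntegrable _ _)
  have h4 : (a' - a) * ∫ s in a'..t, A s ≤ ∫ τ in a..t, (τ - a) * A τ := by
    have e1 : (∫ τ in a..a', (τ - a) * A τ) + (∫ τ in a'..t, (τ - a) * A τ)
        = ∫ τ in a..t, (τ - a) * A τ := intervalIntegral.integral_add_adjacent_intervals
          (cW.intervalIntegrable _ _) (cW.intervalIntegrable _ _)
    have e2 : 0 ≤ ∫ τ in a..a', (τ - a) * A τ := intervalIntegral.integral_nonneg haa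
      fun s hs => mul_nonneg (by linarith [hs.1]) (hA0 s)
    have e3 : (a' - a) * ∫ s in a'..t, A s ≤ ∫ τ in a'..t, (τ - a) * A τ := by
      rw [← intervalIntegral.integral_const_mul]
      exact intervalIntegral.integral_mono_on hat ((cA.const_mul _).intervalIntegrable _ _)
        (cW.intervalIntegrable _ _) fun s hs =>
          mul_le_mul_of_nonneg_right (by linarith [hs.1]) (hA0 s)
    linarith
  have h5 : (a' - a) * Y t ≤ (t - a) * Y t := mul_le_mul_of_nonneg_right (by linarith) (hY0 t)
  linarith

/-! ### The local parabolic estimate -/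

/-- The source term bound required by the local energy estimate: the localized norm of `F` is
controlled by a small multiple of that of `D²v`, up to a term bounded in `L¹` in time. -/
def SmallSource (B : Bx) (v F : Fam) : Prop :=
  ∀ r ρ ρ' C θ : ℝ, 0 < r → r < ρ → ρ < ρ' → ρ' < B.R → 0 < C → 0 < θ →
    ∃ b, T1 B ρ' b ∧ ∀ᶠ n in atTop, ∀ ω, Cut (B.h n) B.x0 r ρ C ω →
      ∀ t ∈ Icc (B.t0 - ρ') (B.t0 + ρ'),
        B.h n * ∑ i ∈ win (B.h n) B.x0 ρ', (ω i + B.h n ^ 4) * F n t i ^ 2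
          ≤ θ * (B.h n * ∑ i ∈ win (B.h n) B.x0 ρ', ω i * (DD B (DD B v) n t i) ^ 2) + b n t

lemma SmallSource.of_LL {B : Bx} {v F : Fam} (hF : LL B F) : SmallSource B v F := by
  intro r ρ ρ' C θ h0 h1 h2 h3 hC hθ
  refine ⟨_, (hF.2 ρ' (by linarith) h3).const_mul zero_le_two, ?_⟩
  filter_upwards [B.ev one_pos] with n hn ω hω t _
  have hh := B.hpos n
  have hh4 : B.h n ^ 4 ≤ 1 := pow_le_one₀ hh.le hn
  have e : B.h n * ∑ i ∈ win (B.h n) B.x0 ρ', (ω i + B.h n ^ 4) * F n t i ^ 2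
      ≤ 2 * Q (B.h n) B.x0 ρ' (F n t) := by
    unfold Q
    rw [mul_left_comm, Finset.mul_sum _ _ (2:ℝ)]
    refine mul_le_mul_of_nonneg_left (Finset.sum_le_sum fun i _ => ?_) hh.le
    exact mul_le_mul_of_nonneg_right (by linarith [hω.le_one i]) (sq_nonneg _)
  have : 0 ≤ θ * (B.h n * ∑ i ∈ win (B.h n) B.x0 ρ', ω i * (DD B (DD B v) n t i) ^ 2) :=
    mul_nonneg hθ.le (mul_nonneg hh.le (Finset.sum_nonneg fun i _ =>
      mul_nonneg (hω.nonneg i) (sq_nonneg _)))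
  linarith

/-- The local energy estimate for `v' = -S⁻²D²(μ D²v + F)`. -/
lemma step {B : Bx} {v F μ : Fam} {c Bμ : ℝ} (hc : 0 < c)
    (hv : LL B v) (hDv : LL B (DD B v))
    (hμ : ∀ r, 0 < r → r < B.R → ∀ᶠ n in atTop, ∀ t ∈ Icc (B.t0 - r) (B.t0 + r),
      ∀ i ∈ win (B.h n) B.x0 r, c ≤ μ n t i ∧ μ n t i ≤ Bμ)
    (hF : SmallSource B v F)
    (hode : ∀ n, ∀ t ∈ Ioo (B.t0 - B.R) (B.t0 + B.R), ∀ i,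
      HasDerivAt (fun s => v n s i)
        (-(DD B (DD B (μ * DD B (DD B v) + F)) n t (i - 2))) t) :
    BL B v ∧ LL B (DD B (DD B v)) := by
  have hvc := hv.1
  have hAc : CT (DD B (DD B v)) := (hvc.DD B).DD B
  have main : ∀ r, 0 < r → r < B.R → ∃ C, 0 ≤ C ∧ ∀ᶠ n in atTop,
      ∀ t ∈ Icc (B.t0 - r) (B.t0 + r), Q (B.h n) B.x0 r (v n t)
        + c / 2 * ∫ s in (B.t0 - r)..t, Q (B.h n) B.x0 r (DD B (DD B v) n s) ≤ C := by
    intro r h0 hr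
    set δ := (B.R - r) / 4 with hδ
    have hδ0 : 0 < δ := by linarith
    obtain ⟨C, hC, hcut⟩ := cut_exists B.x0 h0 (by linarith : r < r + δ)
    have hK := Kst_pos (B := Bμ) hc hC
    obtain ⟨b, hb, hbF⟩ := hF r (r + δ) (r + 2 * δ) C (c / (2 * Kst c Bμ C)) h0 (by linarith)
      (by linarith) (by linarith) hC (by positivity)
    have tv := (hv.2 (r + 3 * δ) (by linarith) (by linarith)).mono (r := r + 2 * δ) (by linarith)
      (by linarith)
    have tDv := (hDv.2 (r + 3 * δ) (by linarith) (by linarith)).mono (r := r + 2 * δ) (by linarith)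
      (by linarith)
    have tG := ((tv.add tDv).add hb).const_mul hK.le
    have tI := tv.add (tG.const_mul (c := (B.t0 + (r + 2 * δ)) - (B.t0 - (r + 2 * δ)))
      (by linarith))
    obtain ⟨D, hD⟩ := tI.bd
    refine ⟨|D| / (2 * δ), by positivity, ?_⟩
    filter_upwards [hD, hbF, hμ (r + 2 * δ) (by linarith) (by linarith), B.ev one_pos,
      B.ev (by linarith : 0 < δ / 2)] with n hD hbF hμ hn1 hnδ t ht
    have hh := B.hpos n
    obtain ⟨ω, hω⟩ := hcut (B.h n) hh hn1
    specialize hbF ω hω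
    set W := win (B.h n) B.x0 (r + 2 * δ) with hW
    set Y : ℝ → ℝ := fun s => B.h n * ∑ i ∈ W, ω i * v n s i ^ 2 with hY
    set A : ℝ → ℝ := fun s => B.h n * ∑ i ∈ W, ω i * (DD B (DD B v) n s i) ^ 2 with hA
    set G : Fam := μ * DD B (DD B v) + F with hG
    set Y' : ℝ → ℝ := fun s => -2 * (B.h n * ∑ i ∈ W,
      fd (B.h n) (fd (B.h n) (fun j => ω j * v n s j)) i * G n s i) with hY'
    have hYd : ∀ s ∈ Icc (B.t0 - (r + 2 * δ)) (B.t0 + (r + 2 * δ)),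
        HasDerivWithinAt Y (Y' s) (Icc (B.t0 - (r + 2 * δ)) (B.t0 + (r + 2 * δ))) s := by
      intro s hs
      have hs' : s ∈ Ioo (B.t0 - B.R) (B.t0 + B.R) := ⟨by linarith [hs.1], by linarith [hs.2]⟩
      have e : Y' s = B.h n * ∑ i ∈ W, ω i * (((2:ℕ):ℝ) * v n s i ^ (2 - 1)
          * -(DD B (DD B G) n s (i - 2))) := by
        have := sum_sbp2 (h := B.h n) (x0 := B.x0) (ρ := r + δ) (r := r + 2 * δ) hh (by linarith)
          (f := fun j => ω j * v n s j) (fun i hi => by simp [hω.supp i hi]) (G n s)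
        simp only [hY']
        rw [← this, mul_left_comm, Finset.mul_sum _ _ (-2:ℝ)]
        congr 1
        refine Finset.sum_congr rfl fun i _ => ?_
        simp only [DD]; push_cast; ring
      rw [e]
      refine (HasDerivAt.const_mul _ ?_).hasDerivWithinAt
      exact HasDerivAt.fun_sum fun i _ => ((hode n s hs' i).fun_pow 2).const_mul (ω i)
    have hle : ∀ s ∈ Icc (B.t0 - (r + 2 * δ)) (B.t0 + (r + 2 * δ)), Y' s ≤ -(c / 2 * A s)
        + Kst c Bμ C * (Q (B.h n) B.x0 (r + 3 * δ) (v n s)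
          + Q (B.h n) B.x0 (r + 3 * δ) (DD B v n s) + b n s) := by
      intro s hs
      have h1 := static_energy (v := v n s) (F := F n s) (μ := μ n s) hω hh hC hc
        (ρ' := r + 2 * δ) (R := r + 3 * δ) (B := Bμ) (by linarith) (hμ s hs)
      have h2 := hbF s hs
      have h3 := mul_le_mul_of_nonneg_left h2 hK.le
      have e : Kst c Bμ C * (c / (2 * Kst c Bμ C) * A s + b n s) = c / 2 * A s
          + Kst c Bμ C * b n s := by field_simp
      change _ ≤ Kst c Bμ C * (c / (2 * Kst c Bμ C) * A s + b n s) at h3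
      rw [e] at h3
      change Y' s ≤ -c * A s + Kst c Bμ C * (Q (B.h n) B.x0 (r + 3 * δ) (v n s)
          + Q (B.h n) B.x0 (r + 3 * δ) (DD B v n s) + _) at h1
      linarith
    have hw0 : ∀ i, 0 ≤ ω i := hω.nonneg
    have hA0 : ∀ s, 0 ≤ A s := fun s => mul_nonneg hh.le
      (Finset.sum_nonneg fun i _ => mul_nonneg (hw0 i) (sq_nonneg _))
    have hY0 : ∀ s, 0 ≤ Y s := fun s => mul_nonneg hh.le
      (Finset.sum_nonneg fun i _ => mul_nonneg (hw0 i) (sq_nonneg _))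
    have cY : Continuous Y := continuous_const.mul (continuous_finsetSum _ fun i _ =>
      continuous_const.mul ((hvc n i).pow 2))
    have cA : Continuous A := continuous_const.mul (continuous_finsetSum _ fun i _ =>
      continuous_const.mul ((hAc n i).pow 2))
    have hT := time_abs (a := B.t0 - (r + 2 * δ)) (b := B.t0 + (r + 2 * δ)) (a' := B.t0 - r) (t := t)
      (A := fun s => c / 2 * A s)
      (by linarith) ht.1 (by linarith [ht.2]) hYd hle cY (cA.const_mul _) (tG.cont n) hY0
      (fun s => mul_nonneg (by positivity) (hA0 s)) (tG.nonneg n)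
    -- lower bounds, as `ω = 1` on the inner window
    have hsub : ∀ f : ℤ → ℝ, Q (B.h n) B.x0 r f ≤ B.h n * ∑ i ∈ W, ω i * f i ^ 2 := by
      intro f
      refine mul_le_mul_of_nonneg_left ?_ hh.le
      calc ∑ i ∈ win (B.h n) B.x0 r, f i ^ 2 = ∑ i ∈ win (B.h n) B.x0 r, ω i * f i ^ 2 :=
            Finset.sum_congr rfl fun i hi => by rw [hω.one i hi, one_mul]
        _ ≤ _ := Finset.sum_le_sum_of_subset_of_nonneg (win_mono hh (by linarith))
            fun i _ _ => mul_nonneg (hw0 i) (sq_nonneg _)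
    have hYle : ∀ s, Y s ≤ Q (B.h n) B.x0 (r + 3 * δ) (v n s) := fun s => by
      refine (mul_le_mul_of_nonneg_left (Finset.sum_le_sum fun i _ => ?_) hh.le).trans
        (Q_mono hh (by linarith : r + 2 * δ ≤ r + 3 * δ) (v n s))
      calc ω i * v n s i ^ 2 ≤ 1 * v n s i ^ 2 :=
            mul_le_mul_of_nonneg_right (hω.le_one i) (sq_nonneg _)
        _ = _ := one_mul _
    have hRHS : ∫ s in (B.t0 - (r + 2 * δ))..(B.t0 + (r + 2 * δ)), (Y s
        + ((B.t0 + (r + 2 * δ)) - (B.t0 - (r + 2 * δ))) * (Kst c Bμ C *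
          (Q (B.h n) B.x0 (r + 3 * δ) (v n s)
          + Q (B.h n) B.x0 (r + 3 * δ) (DD B v n s) + b n s))) ≤ D := by
      refine le_trans ?_ hD
      refine intervalIntegral.integral_mono_on (by linarith)
        ((cY.add ((tG.cont n).const_mul _)).intervalIntegrable _ _)
        ((tI.cont n).intervalIntegrable _ _) fun s _ => ?_
      have := hYle s
      linarith
    have i1 : ∫ s in (B.t0 - r)..t, Q (B.h n) B.x0 r (DD B (DD B v) n s)
        ≤ ∫ s in (B.t0 - r)..t, A s :=
      intervalIntegral.integral_mono_on ht.1 ((hAc.Q _ _ _ n).intervalIntegrable _ _)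
        (cA.intervalIntegrable _ _) fun s _ => hsub _
    rw [intervalIntegral.integral_const_mul] at hT
    have hq : Q (B.h n) B.x0 r (v n t) ≤ Y t := hsub (v n t)
    rw [le_div_iff₀ (by positivity)]
    have e2 : (B.t0 - r - (B.t0 - (r + 2 * δ))) = 2 * δ := by ring
    rw [e2] at hT
    calc _ ≤ (Y t + c / 2 * ∫ s in (B.t0 - r)..t, A s) * (2 * δ) := by gcongr
      _ = 2 * δ * (Y t + c / 2 * ∫ s in (B.t0 - r)..t, A s) := by ring
      _ ≤ D := hT.trans hRHS
      _ ≤ |D| := le_abs_self _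
  constructor
  · refine ⟨hvc, fun r h0 hr => ?_⟩
    obtain ⟨C, hC0, hC⟩ := main r h0 hr
    refine ⟨C, hC0, ?_⟩
    filter_upwards [hC] with n hn t ht
    have := hn t ht
    have h1 : 0 ≤ ∫ s in (B.t0 - r)..t, Q (B.h n) B.x0 r (DD B (DD B v) n s) :=
      intervalIntegral.integral_nonneg ht.1 fun s _ => Q_nonneg (B.hpos n) _
    have : 0 ≤ c / 2 * ∫ s in (B.t0 - r)..t, Q (B.h n) B.x0 r (DD B (DD B v) n s) := by positivity
    linarith
  · refine ⟨hAc, fun r h0 hr => ⟨fun n => hAc.Q _ _ _ n, fun n t => Q_nonneg (B.hpos n) _, ?_⟩⟩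
    obtain ⟨C, hC0, hC⟩ := main r h0 hr
    refine ⟨C / (c / 2), ?_⟩
    filter_upwards [hC] with n hn
    have := hn (B.t0 + r) ⟨by linarith, le_rfl⟩
    have h1 := Q_nonneg (x0 := B.x0) (r := r) (B.hpos n) (v n (B.t0 + r))
    rw [le_div_iff₀ (by positivity)]
    linarith

/-! ### Differences of powers -/

lemma taylor_step {c K A y0 : ℝ} {m : ℕ} {g g' : ℝ → ℝ} (hA : 0 ≤ A) (hy0 : y0 ∈ Icc c K)
    (hg : ∀ y ∈ Icc c K, HasDerivAt g (g' y) y) (h0 : g y0 = 0)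
    (hb : ∀ y ∈ Icc c K, |g' y| ≤ A * |y - y0| ^ m) :
    ∀ y ∈ Icc c K, |g y| ≤ A * |y - y0| ^ (m + 1) := by
  intro y hy
  have hsub : uIcc y0 y ⊆ Icc c K := uIcc_subset_Icc hy0 hy
  have := Convex.norm_image_sub_le_of_norm_hasDerivWithin_le (f := g) (f' := g')
    (C := A * |y - y0| ^ m) (s := uIcc y0 y)
    (fun z hz => (hg z (hsub hz)).hasDerivWithinAt) (fun z hz => ?_) (convex_uIcc _ _)
    left_mem_uIcc right_mem_uIcc
  · rw [h0, sub_zero] at this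
    calc _ ≤ _ := this
      _ = _ := by rw [Real.norm_eq_abs]; ring
  · refine (hb z (hsub hz)).trans ?_
    have : |z - y0| ≤ |y - y0| := abs_sub_left_of_mem_uIcc hz
    gcongr

/-- Taylor expansions of `y ↦ y ^ lam` up to third order, uniformly on `[c, K]`. -/
lemma taylor_rpow {lam c K : ℝ} (hc : 0 < c) : ∃ (A : ℝ) (φ1 φ2 : ℝ → ℝ), 0 ≤ A ∧
    ∀ y0 ∈ Icc c K, |φ1 y0| ≤ A ∧ |φ2 y0| ≤ A ∧ ∀ y ∈ Icc c K,
      |y ^ lam - y0 ^ lam| ≤ A * |y - y0| ∧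
      |y ^ lam - y0 ^ lam - φ1 y0 * (y - y0)| ≤ A * |y - y0| ^ 2 ∧
      |y ^ lam - y0 ^ lam - φ1 y0 * (y - y0) - φ2 y0 / 2 * (y - y0) ^ 2| ≤ A * |y - y0| ^ 3 := by
  have hbd : ∀ s a : ℝ, ∃ M, ∀ y ∈ Icc c K, |a * y ^ s| ≤ M := fun s a => by
    have : ContinuousOn (fun y : ℝ => a * y ^ s) (Icc c K) := fun y hy =>
      (continuousAt_const.mul (Real.continuousAt_rpow_const _ _ (Or.inl
        (hc.trans_le hy.1).ne'))).continuousWithinAt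
    obtain ⟨M, hM⟩ := isCompact_Icc.exists_bound_of_continuousOn this
    exact ⟨M, hM⟩
  obtain ⟨A1, h1⟩ := hbd (lam - 1) lam
  obtain ⟨A2, h2⟩ := hbd (lam - 1 - 1) (lam * (lam - 1))
  obtain ⟨A3, h3⟩ := hbd (lam - 1 - 1 - 1) (lam * (lam - 1) * (lam - 1 - 1))
  have hd : ∀ a s : ℝ, ∀ y ∈ Icc c K, HasDerivAt (fun y : ℝ => a * y ^ s) (a * s * y ^ (s - 1)) y :=
    fun a s y hy => by
      have := (Real.hasDerivAt_rpow_const (p := s) (Or.inl (hc.trans_le hy.1).ne')).const_mul a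
      rwa [← mul_assoc] at this
  set A := max (max A1 A2) (max A3 0) with hA
  have hA0 : 0 ≤ A := (le_max_right _ _).trans (le_max_right _ _)
  have l1 : A1 ≤ A := (le_max_left _ _).trans (le_max_left _ _)
  have l2 : A2 ≤ A := (le_max_right _ _).trans (le_max_left _ _)
  have l3 : A3 ≤ A := (le_max_left _ _).trans (le_max_right _ _)
  refine ⟨A, fun y => lam * y ^ (lam - 1), fun y => lam * (lam - 1) * y ^ (lam - 1 - 1), hA0,
    fun y0 hy0 => ⟨(h1 y0 hy0).trans l1, (h2 y0 hy0).trans l2, ?_⟩⟩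
  have d0 : ∀ y ∈ Icc c K, HasDerivAt (fun y : ℝ => y ^ lam) (lam * y ^ (lam - 1)) y := fun y hy => by
    simpa using hd 1 lam y hy
  have d1 := hd lam (lam - 1)
  have d2 := hd (lam * (lam - 1)) (lam - 1 - 1)
  have t0 := taylor_step (m := 0) (g := fun y : ℝ => y ^ lam - y0 ^ lam) hA0 hy0
    (fun y hy => (d0 y hy).sub_const _) (sub_self _) (fun y hy => by
      rw [pow_zero, mul_one]; exact (h1 y hy).trans l1)
  have t1 := taylor_step (m := 0) (g := fun y : ℝ => lam * y ^ (lam - 1) - lam * y0 ^ (lam - 1)) hA0 hy0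
    (fun y hy => (d1 y hy).sub_const _) (sub_self _) (fun y hy => by
      rw [pow_zero, mul_one]; exact (h2 y hy).trans l2)
  have t2 := taylor_step (m := 0) (g := fun y : ℝ => lam * (lam - 1) * y ^ (lam - 1 - 1)
      - lam * (lam - 1) * y0 ^ (lam - 1 - 1)) hA0 hy0
    (fun y hy => (d2 y hy).sub_const _) (sub_self _) (fun y hy => by
      rw [pow_zero, mul_one]; exact (h3 y hy).trans l3)
  have e0 : ∀ a y : ℝ, HasDerivAt (fun y : ℝ => a * (y - y0)) a y := fun a y => by
    simpa using ((hasDerivAt_id y).sub_const y0).const_mul a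
  have e1 : ∀ a y : ℝ, HasDerivAt (fun y : ℝ => a / 2 * (y - y0) ^ 2) (a * (y - y0)) y := fun a y => by
    have := (((hasDerivAt_id y).sub_const y0).pow 2).const_mul (a / 2)
    refine this.congr_deriv ?_
    norm_num
    ring
  have t01 := taylor_step (m := 1) (g := fun y : ℝ => y ^ lam - y0 ^ lam
      - lam * y0 ^ (lam - 1) * (y - y0)) hA0 hy0
    (fun y hy => ((d0 y hy).sub_const _).sub (e0 _ y)) (by simp) t1
  have t12 := taylor_step (m := 1) (g := fun y : ℝ => lam * y ^ (lam - 1) - lam * y0 ^ (lam - 1)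
      - lam * (lam - 1) * y0 ^ (lam - 1 - 1) * (y - y0)) hA0 hy0
    (fun y hy => ((d1 y hy).sub_const _).sub (e0 _ y)) (by simp) t2
  have t012 := taylor_step (m := 2) (g := fun y : ℝ => y ^ lam - y0 ^ lam
      - lam * y0 ^ (lam - 1) * (y - y0)
      - lam * (lam - 1) * y0 ^ (lam - 1 - 1) / 2 * (y - y0) ^ 2) hA0 hy0
    (fun y hy => (((d0 y hy).sub_const _).sub (e0 _ y)).sub (e1 _ y)) (by simp) t12
  intro y hy
  refine ⟨?_, t01 y hy, t012 y hy⟩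
  simpa using t0 y hy

set_option maxHeartbeats 800000 in
/-- Difference quotients of order at most three of `y ^ lam` are bounded in terms of those of
the positive lattice function `y`. -/
lemma fd_rpow_bound {lam c K : ℝ} (hc : 0 < c) (M : ℝ) (hM : 0 ≤ M) : ∃ C, 0 ≤ C ∧
    ∀ (h : ℝ) (y : ℤ → ℝ) (i : ℤ), 0 < h → h ≤ 1 → y i ∈ Icc c K → y (i + 1) ∈ Icc c K →
      |fd h y i| ≤ M →
      |fd h (fun j => y j ^ lam) i| ≤ C ∧
      (y (i + 1 + 1) ∈ Icc c K → |fd h (fd h y) i| ≤ M →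
        |fd h (fd h fun j => y j ^ lam) i| ≤ C ∧
        (y (i + 1 + 1 + 1) ∈ Icc c K → |fd h (fd h (fd h y)) i| ≤ M →
          |fd h (fd h (fd h fun j => y j ^ lam)) i| ≤ C)) := by
  obtain ⟨A, φ1, φ2, hA, H⟩ := taylor_rpow (lam := lam) (K := K) hc
  refine ⟨A * M + 13 * (A * M ^ 2) + 427 * (A * M ^ 3), by positivity, ?_⟩
  intro h y i hh h1 y0 y1 hp
  obtain ⟨b1, b2, H⟩ := H (y i) y0
  have q2 : 0 ≤ A * M ^ 2 := by positivity
  have q3 : 0 ≤ A * M ^ 3 := by positivity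
  have d1 : y (i + 1) - y i = h * fd h y i := by unfold fd; field_simp
  have a1 : |y (i + 1) - y i| ≤ h * M := by
    rw [d1, abs_mul, abs_of_pos hh]; gcongr
  obtain ⟨x1, x2, x3⟩ := H _ y1
  refine ⟨?_, fun y2 hq => ⟨?_, fun y3 hr => ?_⟩⟩
  · unfold fd
    rw [abs_div, abs_of_pos hh, div_le_iff₀ hh]
    have := mul_le_mul_of_nonneg_left a1 hA
    nlinarith
  · have d2 : y (i + 1 + 1) - y i = 2 * h * fd h y i + h ^ 2 * fd h (fd h y) i := by
      unfold fd; field_simp; ring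
    have a2 : |y (i + 1 + 1) - y i| ≤ h * (3 * M) := by
      rw [d2]
      refine (abs_add_le _ _).trans ?_
      rw [abs_mul, abs_mul _ (fd h (fd h y) i), abs_of_pos (by positivity : 0 < 2 * h),
        abs_of_pos (by positivity : 0 < h ^ 2)]
      have := mul_le_mul_of_nonneg_left hp (by positivity : 0 ≤ 2 * h)
      have := mul_le_mul_of_nonneg_left hq (by positivity : 0 ≤ h ^ 2)
      have : h ^ 2 * M ≤ h * M := by nlinarith [mul_nonneg hh.le hM]
      linarith
    obtain ⟨z1, z2, z3⟩ := H _ y2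
    have e : fd h (fd h fun j => y j ^ lam) i * h ^ 2 = φ1 (y i) * fd h (fd h y) i * h ^ 2
        + (y (i + 1 + 1) ^ lam - y i ^ lam - φ1 (y i) * (y (i + 1 + 1) - y i))
        - 2 * (y (i + 1) ^ lam - y i ^ lam - φ1 (y i) * (y (i + 1) - y i)) := by
      unfold fd; field_simp; ring
    have r1 := x2.trans (mul_le_mul_of_nonneg_left (pow_le_pow_left₀ (abs_nonneg _) a1 2) hA)
    have r2 := z2.trans (mul_le_mul_of_nonneg_left (pow_le_pow_left₀ (abs_nonneg _) a2 2) hA)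
    have r3 : |φ1 (y i) * fd h (fd h y) i| ≤ A * M := by rw [abs_mul]; gcongr
    have h2 : 0 < h ^ 2 := by positivity
    have key : |fd h (fd h fun j => y j ^ lam) i| * h ^ 2 ≤ (A * M + 11 * (A * M ^ 2)) * h ^ 2 := by
      rw [← abs_of_pos h2, ← abs_mul, abs_of_pos h2, e]
      rw [abs_le] at r1 r2 r3 ⊢
      have := mul_le_mul_of_nonneg_right r3.1 h2.le
      have := mul_le_mul_of_nonneg_right r3.2 h2.le
      constructor <;> nlinarith
    have := le_of_mul_le_mul_right key h2
    linarith
  · have d2 : y (i + 1 + 1) - y i = 2 * h * fd h y i + h ^ 2 * fd h (fd h y) i := by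
      unfold fd; field_simp; ring
    have d3 : y (i + 1 + 1 + 1) - y i = 3 * h * fd h y i + 3 * h ^ 2 * fd h (fd h y) i
        + h ^ 3 * fd h (fd h (fd h y)) i := by
      unfold fd; field_simp; ring
    obtain ⟨z1, z2, z3⟩ := H _ y2
    obtain ⟨w1, w2, w3⟩ := H _ y3
    have e : fd h (fd h (fd h fun j => y j ^ lam)) i * h ^ 3
        = φ1 (y i) * (y (i + 1 + 1 + 1) - y i - 3 * (y (i + 1 + 1) - y i) + 3 * (y (i + 1) - y i))
        + φ2 (y i) / 2 * ((y (i + 1 + 1 + 1) - y i) ^ 2 - 3 * (y (i + 1 + 1) - y i) ^ 2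
          + 3 * (y (i + 1) - y i) ^ 2)
        + (y (i + 1 + 1 + 1) ^ lam - y i ^ lam - φ1 (y i) * (y (i + 1 + 1 + 1) - y i)
          - φ2 (y i) / 2 * (y (i + 1 + 1 + 1) - y i) ^ 2)
        - 3 * (y (i + 1 + 1) ^ lam - y i ^ lam - φ1 (y i) * (y (i + 1 + 1) - y i)
          - φ2 (y i) / 2 * (y (i + 1 + 1) - y i) ^ 2)
        + 3 * (y (i + 1) ^ lam - y i ^ lam - φ1 (y i) * (y (i + 1) - y i)
          - φ2 (y i) / 2 * (y (i + 1) - y i) ^ 2) := by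
      unfold fd; field_simp; ring
    set p := fd h y i
    set q := fd h (fd h y) i
    set r := fd h (fd h (fd h y)) i
    have hM1 : h ^ 2 * M ≤ h * M := by nlinarith [mul_nonneg hh.le hM]
    have hM2 : h ^ 3 * M ≤ h * M := by
      have : h ^ 3 ≤ h := by nlinarith [mul_pos hh hh]
      gcongr
    have p1 : |h * p| ≤ h * M := by rw [abs_mul, abs_of_pos hh]; gcongr
    have p2 : |h ^ 2 * q| ≤ h * M := by
      rw [abs_mul, abs_of_pos (by positivity : 0 < h ^ 2)]; refine le_trans ?_ hM1; gcongr
    have p3 : |h ^ 3 * r| ≤ h * M := by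
      rw [abs_mul, abs_of_pos (by positivity : 0 < h ^ 3)]; refine le_trans ?_ hM2; gcongr
    have a2 : |y (i + 1 + 1) - y i| ≤ h * (3 * M) := by
      rw [d2]; clear * - p1 p2; rw [abs_le] at *; constructor <;> linarith [p1.1, p1.2, p2.1, p2.2]
    have a3 : |y (i + 1 + 1 + 1) - y i| ≤ h * (7 * M) := by
      rw [d3]; clear * - p1 p2 p3; rw [abs_le] at *
      constructor <;> linarith [p1.1, p1.2, p2.1, p2.2, p3.1, p3.2]
    have r1 := x3.trans (mul_le_mul_of_nonneg_left (pow_le_pow_left₀ (abs_nonneg _) a1 3) hA)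
    have r2 := z3.trans (mul_le_mul_of_nonneg_left (pow_le_pow_left₀ (abs_nonneg _) a2 3) hA)
    have r3 := w3.trans (mul_le_mul_of_nonneg_left (pow_le_pow_left₀ (abs_nonneg _) a3 3) hA)
    rw [show φ1 (y i) * (y (i + 1 + 1 + 1) - y i - 3 * (y (i + 1 + 1) - y i) + 3 * (y (i + 1) - y i))
        = h ^ 3 * (φ1 (y i) * r) by rw [d1, d2, d3]; ring,
      show φ2 (y i) / 2 * ((y (i + 1 + 1 + 1) - y i) ^ 2 - 3 * (y (i + 1 + 1) - y i) ^ 2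
          + 3 * (y (i + 1) - y i) ^ 2) = h ^ 3 * (φ2 (y i) / 2 * (6 * (p * q) + h * (6 * (p * r) + 6 * (q * q))
            + h ^ 2 * (6 * (q * r)) + h ^ 3 * (r * r))) by rw [d1, d2, d3]; ring] at e
    have pb : ∀ a b : ℝ, |a| ≤ M → |b| ≤ M → |a * b| ≤ M ^ 2 := fun a b ha hb => by
      rw [abs_mul, pow_two]; gcongr
    have hs : ∀ (k : ℕ) (a S : ℝ), |a| ≤ S → |h ^ k * a| ≤ S := fun k a S ha => by
      rw [abs_mul, abs_of_pos (by positivity : 0 < h ^ k)]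
      have := pow_le_one₀ hh.le h1 (n := k)
      nlinarith [abs_nonneg a]
    have g1 : |φ1 (y i) * r| ≤ A * M := by rw [abs_mul]; gcongr
    have g2 : |6 * (p * q) + h * (6 * (p * r) + 6 * (q * q)) + h ^ 2 * (6 * (q * r)) + h ^ 3 * (r * r)|
        ≤ 25 * M ^ 2 := by
      have k1 := pb p q hp hq
      have k2 := pb p r hp hr
      have k3 := pb q q hq hq
      have k4 := pb q r hq hr
      have k5 := hs 3 _ _ (pb r r hr hr)
      have k6 := hs 2 (6 * (q * r)) (6 * M ^ 2) (by rw [abs_mul, abs_of_pos (by norm_num : (0:ℝ) < 6)]; gcongr)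
      have k7 := hs 1 (6 * (p * r) + 6 * (q * q)) (12 * M ^ 2) (by
        clear * - k2 k3; rw [abs_le] at *; constructor <;> linarith)
      rw [pow_one] at k7
      clear * - k1 k5 k6 k7
      rw [abs_le] at *
      constructor <;> linarith
    have g3 : |φ2 (y i) / 2 * (6 * (p * q) + h * (6 * (p * r) + 6 * (q * q)) + h ^ 2 * (6 * (q * r))
        + h ^ 3 * (r * r))| ≤ A / 2 * (25 * M ^ 2) := by
      rw [abs_mul, abs_div, abs_of_pos (by norm_num : (0:ℝ) < 2)]; gcongr
    have h3 : 0 < h ^ 3 := by positivity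
    have key : |fd h (fd h (fd h fun j => y j ^ lam)) i| * h ^ 3
        ≤ (A * M + 13 * (A * M ^ 2) + 427 * (A * M ^ 3)) * h ^ 3 := by
      rw [← abs_of_pos h3, ← abs_mul, abs_of_pos h3, e]
      clear * - r1 r2 r3 g1 g3 h3 q2
      rw [abs_le] at r1 r2 r3 g1 g3 ⊢
      have s1 := mul_le_mul_of_nonneg_left g1.1 h3.le
      have s2 := mul_le_mul_of_nonneg_left g1.2 h3.le
      have s3 := mul_le_mul_of_nonneg_left g3.1 h3.le
      have s4 := mul_le_mul_of_nonneg_left g3.2 h3.le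
      have s5 := mul_nonneg h3.le q2
      constructor <;> linarith
    exact le_of_mul_le_mul_right key h3

/-! ### The approximations on a box where they are bounded below -/

/-- The discrete solutions `U n`, on a box inside `(0, T) × ℝ` on which they are bounded below by
a positive constant `c`. -/
structure PB (B : Bx) (N : ℕ → ℕ) (L T lam K E c : ℝ) (U : Fam) : Prop where
  sch : ∀ n, Scheme (N n) (B.h n) T lam K (U n)
  NL : ∀ n, N n * B.h n = L
  en0 : ∀ n, en (N n) (B.h n) (U n 0) ≤ E
  hlam : 1 ≤ lam
  hT : 0 < T
  hR : 0 < B.R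
  lo : 0 < B.t0 - B.R
  hi : B.t0 + B.R < T
  RL : 4 * B.R ≤ L
  hc : 0 < c
  pos : ∀ᶠ n in atTop, ∀ t ∈ Icc (B.t0 - B.R) (B.t0 + B.R), ∀ i ∈ win (B.h n) B.x0 B.R, c ≤ U n t i

section base
variable {B : Bx} {N : ℕ → ℕ} {L T lam K E c : ℝ} {U : Fam}

lemma PB.ct (P : PB B N L T lam K E c U) : CT U := fun n => (P.sch n).cont

lemma PB.K0 (P : PB B N L T lam K E c U) : 0 ≤ K := ((P.sch 0).nonneg 0 0).trans ((P.sch 0).le_K 0 0)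

lemma PB.E0 (P : PB B N L T lam K E c U) : 0 ≤ E := (en_nonneg (P.sch 0).hpos _).trans (P.en0 0)

lemma PB.ev_per (P : PB B N L T lam K E c U) : ∀ᶠ n in atTop, ∀ r ≤ B.R, 2 * r + B.h n ≤ N n * B.h n := by
  filter_upwards [B.ev (by linarith [P.hR] : 0 < 2 * B.R)] with n hn r hr
  rw [P.NL]; linarith [P.RL]

lemma PB.bb (P : PB B N L T lam K E c U) : BB B U :=
  ⟨P.ct, fun r _ _ => ⟨K, P.K0, Eventually.of_forall fun n t _ i _ => by
    rw [abs_of_nonneg ((P.sch n).nonneg t i)]; exact (P.sch n).le_K t i⟩⟩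

lemma PB.Q1 (P : PB B N L T lam K E c U) : ∀ᶠ n in atTop, ∀ r ≤ B.R, ∀ t,
    Q (B.h n) B.x0 r (fd (B.h n) (U n t)) ≤ E := by
  filter_upwards [P.ev_per] with n hn r hr t
  refine le_trans ?_ (((P.sch n).en_le P.hT.le P.hlam t).trans (P.en0 n))
  exact mul_le_mul_of_nonneg_left (sum_win_le_psum (B.hpos n) (hn r hr) (fun i => sq_nonneg _)
    fun i => by rw [fd_periodic ((P.sch n).per t)]) (B.hpos n).le

lemma PB.bl1 (P : PB B N L T lam K E c U) : BL B (DD B U) :=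
  ⟨P.ct.DD B, fun r _ hr => ⟨E, P.E0, P.Q1.mono fun _ hn t _ => hn r hr.le t⟩⟩

lemma PB.diss_int (P : PB B N L T lam K E c U) (n : ℕ) :
    ∫ s in (0:ℝ)..T, diss (N n) (B.h n) (U n s) ≤ E / 2 := by
  have := (P.sch n).energy_pow P.hlam le_rfl (t := T) ⟨P.hT.le, le_rfl⟩
  simp only [Real.rpow_one, sub_self, Real.rpow_zero, one_mul] at this
  have h0 := en_nonneg (N := N n) (P.sch n).hpos (U n T)
  linarith [P.en0 n]

/-- On a box where `U` is bounded below, the dissipation controls the third difference quotient. -/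
lemma PB.ll3 (P : PB B N L T lam K E c U) : LL B (DD B (DD B (DD B U))) := by
  have hc := P.hc
  refine ⟨((P.ct.DD B).DD B).DD B, fun r h0 hr => ?_⟩
  have hT1 : T1 B B.R (fun n t => diss (N n) (B.h n) (U n t)) := by
    refine ⟨fun n => (P.sch n).cont_diss, fun n t => (P.sch n).diss_nonneg t, E / 2,
      Eventually.of_forall fun n => ?_⟩
    refine le_trans ?_ (P.diss_int n)
    exact intervalIntegral.integral_mono_interval P.lo.le (by linarith [P.hR]) P.hi.le
      (Eventually.of_forall fun t => (P.sch n).diss_nonneg t)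
      ((P.sch n).cont_diss.intervalIntegrable _ _)
  refine (hT1.const_mul (c := 1 / c ^ 2) (by positivity)).of_le h0.le hr.le
    (fun n => CT.Q (((P.ct.DD B).DD B).DD B) _ _ _ n) (fun n t => Q_nonneg (B.hpos n) _) ?_
  filter_upwards [P.ev_per, P.pos, B.ev_shift hr 1, B.ev_shift hr 2] with n h1 h2 h3 h4 t ht
  have hh := B.hpos n
  have ht' := Icc_sub_Icc hr.le ht
  rw [one_div, ← div_eq_inv_mul, le_div_iff₀ (by positivity), mul_comm]
  set G : ℤ → ℝ := fun i => U n t i * U n t (i - 1) *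
    (fd (B.h n) (fd (B.h n) (fd (B.h n) (U n t))) (i - 2)) ^ 2 with hG
  have Gper : ∀ i, G (i + N n) = G i := fun i => by
    have p := (P.sch n).per t
    simp only [hG]
    rw [p, show i + (N n:ℤ) - 1 = (i - 1) + N n by ring, p,
      show i + (N n:ℤ) - 2 = (i - 2) + N n by ring, fd_periodic (fd_periodic (fd_periodic p))]
  have G0 : ∀ i, 0 ≤ G i := fun i =>
    mul_nonneg (mul_nonneg ((P.sch n).nonneg _ _) ((P.sch n).nonneg _ _)) (sq_nonneg _)
  have key : ∑ i ∈ win (B.h n) B.x0 r, c ^ 2 * (DD B (DD B (DD B U)) n t i) ^ 2 ≤ psum (N n) G := by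
    rw [← psum_shift Gper 2]
    refine le_trans (Finset.sum_le_sum fun i hi => ?_) (sum_win_le_psum hh (h1 r hr.le)
      (fun i => G0 (i + 2)) fun i => by rw [add_right_comm, Gper])
    have a1 := h2 t ht' _ (mem_win_add hh h3 hi)
    have a2 := h2 t ht' _ (mem_win_add hh h4 hi)
    simp only [hG]
    rw [show i + 2 - 1 = i + 1 by ring, show i + 2 - 2 = i by ring]
    refine mul_le_mul_of_nonneg_right ?_ (sq_nonneg _)
    rw [pow_two]
    exact mul_le_mul a2 a1 hc.le (hc.le.trans a2)
  have := mul_le_mul_of_nonneg_left key hh.le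
  rw [← Finset.mul_sum] at this
  unfold Q diss
  calc _ = B.h n * (c ^ 2 * ∑ i ∈ win (B.h n) B.x0 r, (DD B (DD B (DD B U)) n t i) ^ 2) := by ring
    _ ≤ _ := this

/-- Interpolation of the first difference quotient between a function and its second one. -/
lemma Q_interp (B : Bx) {r r' : ℝ} (h0 : 0 < r) (hr : r < r') : ∃ C, 0 ≤ C ∧ ∀ᶠ n in atTop,
    ∀ (g : ℤ → ℝ) (ε : ℝ), 0 < ε → Q (B.h n) B.x0 r (fd (B.h n) g)
      ≤ ε * Q (B.h n) B.x0 r' (fd (B.h n) (fd (B.h n) g)) + (1 / ε + C) * Q (B.h n) B.x0 r' g := by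
  set δ := (r' - r) / 4 with hδ
  have hδ0 : 0 < δ := by linarith
  obtain ⟨C, hC, hcut⟩ := cut_exists B.x0 h0 (by linarith : r < r + δ)
  refine ⟨C + 4, by linarith, ?_⟩
  filter_upwards [B.ev one_pos, B.ev (by linarith : 0 < δ / 3)] with n hn hn' g ε hε
  have hh := B.hpos n
  obtain ⟨ω, hω⟩ := hcut (B.h n) hh hn
  set g' : ℤ → ℝ := fun i => g (i + (-1)) with hg'
  have hi := interp hω hh hn hC hε (ρ' := r + 2 * δ) (R := r + 3 * δ) (by linarith) (by linarith) g'
  have e1 : ∀ i, fd (B.h n) g' (i + 1) = fd (B.h n) g i := fun i => by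
    simp only [hg', fd]
    rw [show i + 1 + 1 + -1 = i + 1 by ring, show i + 1 + -1 = i by ring]
  have e2 : ∀ i, fd (B.h n) (fd (B.h n) g') i = fd (B.h n) (fd (B.h n) g) (i + (-1)) := fun i => by
    simp only [hg', fd]
    rw [show i + 1 + -1 = i + -1 + 1 by ring, show i + 1 + 1 + -1 = i + -1 + 1 + 1 by ring]
  simp only [e1, e2] at hi
  have l1 : Q (B.h n) B.x0 r (fd (B.h n) g)
      ≤ B.h n * ∑ i ∈ win (B.h n) B.x0 (r + 2 * δ), ω i * fd (B.h n) g i ^ 2 := by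
    refine mul_le_mul_of_nonneg_left ?_ hh.le
    refine le_trans (Finset.sum_le_sum fun i hi => ?_) (Finset.sum_le_sum_of_subset_of_nonneg
      (win_mono hh (by linarith : r ≤ r + 2 * δ)) fun i _ _ => mul_nonneg (hω.nonneg i) (sq_nonneg _))
    rw [hω.one i hi, one_mul]
  have l2 : B.h n * ∑ i ∈ win (B.h n) B.x0 (r + 2 * δ), ω i * fd (B.h n) (fd (B.h n) g) (i + (-1)) ^ 2
      ≤ Q (B.h n) B.x0 r' (fd (B.h n) (fd (B.h n) g)) := by
    refine le_trans ?_ (Q_shift_le (k := -1) (r := r + 2 * δ) hh (by simp; linarith) _)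
    refine mul_le_mul_of_nonneg_left (Finset.sum_le_sum fun i _ => ?_) hh.le
    exact mul_le_of_le_one_left (sq_nonneg _) (hω.le_one i)
  have l3 : Q (B.h n) B.x0 (r + 3 * δ) g' ≤ Q (B.h n) B.x0 r' g :=
    Q_shift_le (k := -1) hh (by simp; linarith) _
  calc _ ≤ _ := l1
    _ ≤ _ := hi
    _ ≤ _ := by rw [add_assoc (1 / ε)]; gcongr

lemma PB.ll2 (P : PB B N L T lam K E c U) : LL B (DD B (DD B U)) := by
  refine ⟨(P.ct.DD B).DD B, fun r h0 hr => ?_⟩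
  obtain ⟨m1, m2⟩ := mid_lt hr
  obtain ⟨C, hC, hi⟩ := Q_interp B h0 m1
  have a := ((P.ll3.2 _ (by linarith) m2).add ((P.bl1.toLL.2 _ (by linarith) m2).const_mul
    (c := 1 + C) (by linarith)))
  refine a.of_le h0.le m1.le (fun n => CT.Q ((P.ct.DD B).DD B) _ _ _ n)
    (fun n t => Q_nonneg (B.hpos n) _) ?_
  filter_upwards [hi] with n hn t _
  have := hn (DD B U n t) 1 one_pos
  rw [one_mul, div_one] at this
  exact this

/-- The source term of the equation for the second difference quotient, at a fixed time: for bounded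
`D w` it is of lower order with respect to `D⁴w`. -/
lemma source2_static {h x0 r ρ ρ' R1 C θ K M Φ : ℝ} {w ω φ : ℤ → ℝ} (hω : Cut h x0 r ρ C ω)
    (hh : 0 < h) (hh1 : h ≤ 1) (hC : 0 < C) (hθ : 0 < θ) (hρ0 : 0 ≤ ρ') (hρ : ρ + h ≤ ρ')
    (hR : ρ' + 2 * h ≤ R1) (w0 : ∀ i, 0 ≤ w i) (wK : ∀ i, w i ≤ K) (hM : 0 ≤ M)
    (hw : ∀ i ∈ win h x0 R1, fd h w i ^ 2 ≤ M) (hφ : ∀ i, φ i ^ 2 ≤ Φ) :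
    h * ∑ i ∈ win h x0 ρ', (ω i + h ^ 4) *
        (fd h (fun i => w (i + 2) * w (i + 1)) i * fd h (fd h (fd h w)) (i + 1) + φ i) ^ 2
      ≤ θ * (h * ∑ i ∈ win h x0 ρ', ω i * (fd h (fd h (fd h (fd h w))) i) ^ 2)
        + ((8 * K ^ 2 * M * ((8 * K ^ 2 * M + 1) / θ + C + 4) + 8 * K ^ 4) * Q h x0 R1 (fd h (fd h w))
        + 4 * Φ * (2 * ρ' + 1)) := by
  have hΦ : 0 ≤ Φ := (sq_nonneg _).trans (hφ 0)
  have hK : 0 ≤ K := (w0 0).trans (wK 0)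
  set v := fd h (fd h w) with hv
  set m : ℤ → ℝ := fd h (fun i => w (i + 2) * w (i + 1)) with hm
  have m_eq : ∀ i, m i = w (i + 2) * (fd h w (i + 2) + fd h w (i + 1)) := fun i => by
    simp only [hm, fd]
    rw [show i + 1 + 2 = i + 2 + 1 by ring, show i + 1 + 1 = i + 2 by ring]
    field_simp; ring
  have hm1 : ∀ i ∈ win h x0 ρ', m i ^ 2 ≤ 4 * K ^ 2 * M := fun i hi => by
    have a1 := hw _ (mem_win_add (k := 1) hh (by simp; linarith) hi)
    have a2 := hw _ (mem_win_add (k := 2) hh (by simpa using hR) hi)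
    rw [m_eq, mul_pow]
    have b1 : w (i + 2) ^ 2 ≤ K ^ 2 := pow_le_pow_left₀ (w0 _) (wK _) 2
    have b2 : (fd h w (i + 2) + fd h w (i + 1)) ^ 2 ≤ 4 * M := by
      nlinarith [sq_nonneg (fd h w (i + 2) - fd h w (i + 1))]
    calc _ ≤ K ^ 2 * (4 * M) := mul_le_mul b1 b2 (sq_nonneg _) (sq_nonneg _)
      _ = _ := by ring
  have hm2 : ∀ i, (h * m i) ^ 2 ≤ K ^ 4 := fun i => by
    have e : h * m i = w (i + 2) * (w (i + 2 + 1) - w (i + 1)) := by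
      rw [m_eq]; simp only [fd]; rw [show i + 1 + 1 = i + 2 by ring]; field_simp; ring
    have b1 : w (i + 2) ^ 2 ≤ K ^ 2 := pow_le_pow_left₀ (w0 _) (wK _) 2
    have b2 : (w (i + 2 + 1) - w (i + 1)) ^ 2 ≤ K ^ 2 := by
      refine sq_le_sq' ?_ ?_ <;> linarith [w0 (i + 2 + 1), w0 (i + 1), wK (i + 2 + 1), wK (i + 1)]
    rw [e, mul_pow]
    calc _ ≤ K ^ 2 * K ^ 2 := mul_le_mul b1 b2 (sq_nonneg _) (sq_nonneg _)
      _ = _ := by ring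
  have hv2 : ∀ i, (h * fd h v (i + 1)) ^ 2 ≤ 2 * v (i + 1) ^ 2 + 2 * v (i + 2) ^ 2 := fun i => by
    have e : h * fd h v (i + 1) = v (i + 2) - v (i + 1) := by
      unfold fd; rw [show i + 1 + 1 = i + 2 by ring]; field_simp
    rw [e]; nlinarith [sq_nonneg (v (i + 2) + v (i + 1))]
  have hh4 : h ^ 4 ≤ 1 := pow_le_one₀ hh.le hh1
  have pt : ∀ i ∈ win h x0 ρ', (ω i + h ^ 4) * (m i * fd h v (i + 1) + φ i) ^ 2
      ≤ 8 * K ^ 2 * M * (ω i * fd h v (i + 1) ^ 2) + (4 * K ^ 4 * v (i + 1) ^ 2 + 4 * K ^ 4 * v (i + 2) ^ 2)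
        + 4 * Φ := fun i hi => by
    have s1 : (m i * fd h v (i + 1) + φ i) ^ 2 ≤ 2 * (m i * fd h v (i + 1)) ^ 2 + 2 * φ i ^ 2 := by
      nlinarith [sq_nonneg (m i * fd h v (i + 1) - φ i)]
    have o0 := hω.nonneg i
    have o1 := hω.le_one i
    have s2 : ω i * (m i * fd h v (i + 1)) ^ 2 ≤ 4 * K ^ 2 * M * (ω i * fd h v (i + 1) ^ 2) := by
      have := mul_le_mul_of_nonneg_right (hm1 i hi) (mul_nonneg o0 (sq_nonneg (fd h v (i + 1))))
      calc _ = m i ^ 2 * (ω i * fd h v (i + 1) ^ 2) := by ring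
        _ ≤ _ := this
    have s3 : h ^ 4 * (m i * fd h v (i + 1)) ^ 2 ≤ K ^ 4 * (2 * v (i + 1) ^ 2 + 2 * v (i + 2) ^ 2) := by
      calc _ = (h * m i) ^ 2 * (h * fd h v (i + 1)) ^ 2 := by ring
        _ ≤ _ := mul_le_mul (hm2 i) (hv2 i) (sq_nonneg _) (by positivity)
    have s4 : (ω i + h ^ 4) * φ i ^ 2 ≤ 2 * Φ :=
      mul_le_mul (by linarith) (hφ i) (sq_nonneg _) (by norm_num)
    have := mul_le_mul_of_nonneg_left s1 (by positivity : 0 ≤ ω i + h ^ 4)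
    nlinarith
  have sum1 := mul_le_mul_of_nonneg_left (Finset.sum_le_sum pt) hh.le
  simp only [Finset.sum_add_distrib, ← Finset.mul_sum, Finset.sum_const, nsmul_eq_mul] at sum1
  have q1 : Q h x0 ρ' (fun i => v (i + 1)) ≤ Q h x0 R1 v :=
    Q_shift_le (k := 1) hh (by simp; linarith) v
  have q2 : Q h x0 ρ' (fun i => v (i + 2)) ≤ Q h x0 R1 v :=
    Q_shift_le (k := 2) hh (by simpa using hR) v
  unfold Q at q1 q2
  have hcard := card_win_le (x0 := x0) hh hρ0
  have hP := interp hω hh hh1 hC (ε := θ / (8 * K ^ 2 * M + 1)) (by positivity) hρ hR v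
  have hA0 : 0 ≤ h * ∑ i ∈ win h x0 ρ', ω i * (fd h (fd h v) i) ^ 2 :=
    mul_nonneg hh.le (Finset.sum_nonneg fun i _ => mul_nonneg (hω.nonneg i) (sq_nonneg _))
  set A := h * ∑ i ∈ win h x0 ρ', ω i * (fd h (fd h v) i) ^ 2
  set S := h * ∑ i ∈ win h x0 ρ', ω i * fd h v (i + 1) ^ 2 with hS
  have hP2 := mul_le_mul_of_nonneg_left hP (by positivity : 0 ≤ 8 * K ^ 2 * M)
  have e1 : 8 * K ^ 2 * M * (θ / (8 * K ^ 2 * M + 1) * A) ≤ θ * A := by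
    rw [← mul_assoc]
    refine mul_le_mul_of_nonneg_right ?_ hA0
    rw [mul_div_assoc', div_le_iff₀ (by positivity)]
    nlinarith
  have e2 : 1 / (θ / (8 * K ^ 2 * M + 1)) = (8 * K ^ 2 * M + 1) / θ := one_div_div _ _
  rw [e2] at hP2
  have k1 := mul_le_mul_of_nonneg_left q1 (by positivity : 0 ≤ 4 * K ^ 4)
  have k2 := mul_le_mul_of_nonneg_left q2 (by positivity : 0 ≤ 4 * K ^ 4)
  have k3 := mul_le_mul_of_nonneg_left (hcard.trans (by linarith : 2 * ρ' + h ≤ 2 * ρ' + 1))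
    (by positivity : 0 ≤ 4 * Φ)
  have eQ : Q h x0 R1 v = h * ∑ i ∈ win h x0 R1, v i ^ 2 := rfl
  rw [← eQ] at k1 k2
  nlinarith

end base

/-! ### The equations for higher difference quotients -/

section levels
variable {B : Bx} {N : ℕ → ℕ} {L T lam K E c : ℝ} {U : Fam}

/-- The mobility `u_{i+2} u_{i+1}`. -/
def mob (U : Fam) : Fam := SH 2 U * SH 1 U

/-- The absorption term `u_i ^ lam`. -/
def absorb (lam : ℝ) (U : Fam) : Fam := fun n t i => U n t i ^ lam

/-- The lower order terms in the equation for `D^{j+2} u`. -/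
def src (B : Bx) (lam : ℝ) (U : Fam) (j : ℕ) : Fam :=
  (DD B)^[j + 1] (mob U * (DD B)^[3] U) + SH 2 ((DD B)^[j] (absorb lam U)) - mob U * (DD B)^[j + 4] U

lemma PB.ode_DD (P : PB B N L T lam K E c U) (j : ℕ) (n : ℕ) {t : ℝ}
    (ht : t ∈ Ioo (B.t0 - B.R) (B.t0 + B.R)) (i : ℤ) :
    HasDerivAt (fun s => (DD B)^[j] U n s i)
      (-((DD B)^[j] (DD B (mob U * (DD B)^[3] U) + SH 2 (absorb lam U)) n t (i - 2))) t := by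
  induction j generalizing i with
  | zero =>
    have h0 : 0 < t := P.lo.trans ht.1
    have h1 : t < T := ht.2.trans P.hi
    refine (((P.sch n).ode t ⟨h0.le, h1.le⟩ i).hasDerivAt (Icc_mem_nhds h0 h1)).congr_deriv ?_
    simp only [Function.iterate_zero, id, Pi.add_apply, DD, SH, mob, absorb, fd, flux, Pi.mul_apply,
      Function.iterate_succ, Function.comp]
    rw [show i - 2 + 2 = i by ring]
    ring_nf
  | succ j ih =>
    generalize DD B (mob U * (DD B)^[3] U) + SH 2 (absorb lam U) = G at ih ⊢
    simp only [Function.iterate_succ_apply']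
    have := ((ih (i + 1)).sub (ih i)).div_const (B.h n)
    refine this.congr_deriv ?_
    simp only [DD, fd]
    rw [show i + 1 - 2 = i - 2 + 1 by ring]
    ring

lemma PB.ode_src (P : PB B N L T lam K E c U) (j : ℕ) (n : ℕ) (t : ℝ)
    (ht : t ∈ Ioo (B.t0 - B.R) (B.t0 + B.R)) (i : ℤ) :
    HasDerivAt (fun s => (DD B)^[j + 2] U n s i)
      (-(DD B (DD B (mob U * DD B (DD B ((DD B)^[j + 2] U)) + src B lam U j)) n t (i - 2))) t := by
  have e : mob U * DD B (DD B ((DD B)^[j + 2] U)) + src B lam U j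
      = (DD B)^[j] (DD B (mob U * (DD B)^[3] U) + SH 2 (absorb lam U)) := by
    have e1 : DD B (DD B ((DD B)^[j + 2] U)) = (DD B)^[j + 4] U := by
      simp only [Function.iterate_succ_apply']
    rw [e1, src, DD_iter_add, DD_iter_SH, Function.iterate_succ_apply (DD B) j]
    ring
  rw [e]
  have := P.ode_DD (j + 2) n ht i
  simpa only [Function.iterate_succ_apply'] using this

lemma PB.mob_bd (P : PB B N L T lam K E c U) : ∀ r, 0 < r → r < B.R → ∀ᶠ n in atTop,
    ∀ t ∈ Icc (B.t0 - r) (B.t0 + r), ∀ i ∈ win (B.h n) B.x0 r,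
      c ^ 2 ≤ mob U n t i ∧ mob U n t i ≤ K ^ 2 := by
  intro r h0 hr
  have hc := P.hc
  filter_upwards [P.pos, B.ev_shift hr 1, B.ev_shift hr 2] with n h2 h3 h4 t ht i hi
  have ht' := Icc_sub_Icc hr.le ht
  have a1 := h2 t ht' _ (mem_win_add (B.hpos n) h3 hi)
  have a2 := h2 t ht' _ (mem_win_add (B.hpos n) h4 hi)
  have b1 := (P.sch n).le_K t (i + 1)
  have b2 := (P.sch n).le_K t (i + 2)
  simp only [mob, SH, Pi.mul_apply, pow_two]
  exact ⟨mul_le_mul a2 a1 hc.le (hc.le.trans a2), mul_le_mul b2 b1 ((P.sch n).nonneg _ _) P.K0⟩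

lemma sqrt_one_add_le {q : ℝ} (hq : 0 ≤ q) : 1 ≤ Real.sqrt (1 + q) ∧ Real.sqrt (1 + q) ≤ 1 + q := by
  have h1 : (1:ℝ) ≤ Real.sqrt (1 + q) := Real.one_le_sqrt.2 (by linarith)
  refine ⟨h1, ?_⟩
  have := Real.mul_self_sqrt (by linarith : 0 ≤ 1 + q)
  nlinarith

set_option maxHeartbeats 1000000 in
/-- The quadratic source term `u_x u_xxx` of the second order equation is absorbed by
interpolation between the energy and the dissipation. -/
lemma PB.small2 (P : PB B N L T lam K E c U) : SmallSource B ((DD B)^[2] U) (src B lam U 0) := by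
  intro r ρ ρ' C θ h0 h1 h2 h3 hC hθ
  have hK := P.K0
  have hE := P.E0
  set δ := (B.R - ρ') / 4 with hδ
  have hδ0 : 0 < δ := by linarith
  -- `q` is the local norm of `D²u` on the radius `ρ' + 2δ`
  obtain ⟨C1, hC1, hi⟩ := Q_interp B (by linarith : 0 < ρ' + 2 * δ) (by linarith : ρ' + 2 * δ < ρ' + 3 * δ)
  set Φ := (K ^ lam) ^ 2 with hΦ
  set C2 := 2 * E / δ + 2 * δ with hC2
  have hC20 : 0 ≤ C2 := by positivity
  set C3 := 1 + E + C1 * E with hC3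
  have hC30 : 0 ≤ C3 := by positivity
  set C4 := 8 * K ^ 2 * C2 * ((8 * K ^ 2 * C2 + 1) / θ + C + 4) + 8 * K ^ 4 with hC4
  have hC40 : 0 ≤ C4 := by positivity
  have hT1 := (P.ll3.2 (ρ' + 3 * δ) (by linarith) (by linarith)).mono (r := ρ') (by linarith) (by linarith)
  refine ⟨fun n t => (C4 * (2 + 2 * C3 ^ 2) + 4 * Φ * (2 * ρ' + 1))
    + (C4 * (2 * C3 ^ 2)) * Q (B.h n) B.x0 (ρ' + 3 * δ) (DD B (DD B (DD B U)) n t),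
    (T1.const (by have : 0 < ρ' := by linarith
                  positivity)).add (hT1.const_mul (by positivity)), ?_⟩
  filter_upwards [B.ev one_pos, B.ev (by linarith : 0 < δ / 2), B.ev (by linarith : 0 < ρ' - ρ), hi, P.Q1]
    with n hn1 hn2 hn3 hn4 hn5 ω hω t ht
  have hh := B.hpos n
  set w := U n t with hw
  set q := Q (B.h n) B.x0 (ρ' + 2 * δ) (fd (B.h n) (fd (B.h n) w)) with hq
  set A := Q (B.h n) B.x0 (ρ' + 3 * δ) (fd (B.h n) (fd (B.h n) (fd (B.h n) w))) with hA
  have q0 : 0 ≤ q := Q_nonneg hh _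
  have A0 : 0 ≤ A := Q_nonneg hh _
  obtain ⟨s1, s2⟩ := sqrt_one_add_le q0
  obtain ⟨a1, a2⟩ := sqrt_one_add_le A0
  have sq1 : Real.sqrt (1 + q) ^ 2 = 1 + q := Real.sq_sqrt (by linarith)
  have sq2 : Real.sqrt (1 + A) ^ 2 = 1 + A := Real.sq_sqrt (by linarith)
  set sq := Real.sqrt (1 + q)
  set sA := Real.sqrt (1 + A)
  have hqA : q ≤ C3 * sA := by
    have k := hn4 (fd (B.h n) w) (1 / sA) (by positivity)
    rw [one_div_one_div] at k
    have k1 := hn5 (ρ' + 3 * δ) (by linarith) t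
    have k2 : 1 / sA * A ≤ sA := by
      rw [one_div, ← div_eq_inv_mul, div_le_iff₀ (by linarith)]; nlinarith
    have k3 := mul_le_mul_of_nonneg_left k1 (by positivity : 0 ≤ sA + C1)
    have k4 : C1 * E ≤ C1 * E * sA := le_mul_of_one_le_right (by positivity) a1
    calc q ≤ _ := k
      _ ≤ sA + (sA + C1) * E := by linarith
      _ ≤ _ := by rw [hC3]; linarith
  have hM : ∀ i ∈ win (B.h n) B.x0 (ρ' + δ), fd (B.h n) w i ^ 2 ≤ C2 * sq := fun i hi => by
    have hd : δ / sq ≤ δ := div_le_self hδ0.le s1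
    have k := sup_le_Q hh (by positivity : 0 < δ / sq) (by linarith : ρ' + δ + δ / sq ≤ ρ' + 2 * δ)
      (fd (B.h n) w) hi
    have k1 := hn5 (ρ' + 2 * δ) (by linarith) t
    have k2 := mul_le_mul_of_nonneg_left k1 (by positivity : 0 ≤ 2 / (δ / sq))
    have k3 : 2 / (δ / sq) * E = 2 * E / δ * sq := by field_simp
    have k4 : 2 * (δ / sq) * q ≤ 2 * δ * sq := by
      rw [mul_div_assoc', div_mul_eq_mul_div, div_le_iff₀ (by linarith)]
      have : q ≤ sq * sq := by linarith [pow_two sq]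
      rw [mul_assoc (2 * δ)]
      exact mul_le_mul_of_nonneg_left this (by positivity)
    rw [hC2]; linarith
  have key := source2_static (φ := fun i => SH 2 (absorb lam U) n t i) (Φ := Φ) hω hh hn1 hC hθ
    (by linarith : 0 ≤ ρ') (by linarith) (by linarith : ρ' + 2 * B.h n ≤ ρ' + δ) ((P.sch n).nonneg t)
    ((P.sch n).le_K t) (by positivity : 0 ≤ C2 * sq) hM (fun i =>
      pow_le_pow_left₀ (Real.rpow_nonneg ((P.sch n).nonneg _ _) _)
        (Real.rpow_le_rpow ((P.sch n).nonneg _ _) ((P.sch n).le_K _ _) (by linarith [P.hlam])) 2)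
  have eF : ∀ i, src B lam U 0 n t i = fd (B.h n) (fun i => w (i + 2) * w (i + 1)) i
      * fd (B.h n) (fd (B.h n) (fd (B.h n) w)) (i + 1) + SH 2 (absorb lam U) n t i := fun i => by
    have : src B lam U 0 = DD B (mob U) * SH 1 ((DD B)^[3] U) + SH 2 (absorb lam U) := by
      simp only [src, zero_add, Function.iterate_one, Function.iterate_zero, id]
      rw [DD_mul, ← Function.iterate_succ_apply' (DD B) 3 U]
      ring
    rw [this]; rfl
  have qm : Q (B.h n) B.x0 (ρ' + δ) (fd (B.h n) (fd (B.h n) w)) ≤ q := Q_mono hh (by linarith) _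
  have fin : (8 * K ^ 2 * (C2 * sq) * ((8 * K ^ 2 * (C2 * sq) + 1) / θ + C + 4) + 8 * K ^ 4)
      * Q (B.h n) B.x0 (ρ' + δ) (fd (B.h n) (fd (B.h n) w)) ≤ C4 * (2 + 2 * C3 ^ 2) + C4 * (2 * C3 ^ 2) * A := by
    have f1 : (8 * K ^ 2 * (C2 * sq) + 1) / θ + C + 4 ≤ ((8 * K ^ 2 * C2 + 1) / θ + C + 4) * sq := by
      have : (8 * K ^ 2 * (C2 * sq) + 1) / θ ≤ (8 * K ^ 2 * C2 + 1) / θ * sq := by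
        rw [div_mul_eq_mul_div]; gcongr; nlinarith
      nlinarith
    have f2 : 8 * K ^ 2 * (C2 * sq) * ((8 * K ^ 2 * (C2 * sq) + 1) / θ + C + 4) + 8 * K ^ 4
        ≤ C4 * (1 + q) := by
      have f3 := mul_le_mul_of_nonneg_left f1 (by positivity : 0 ≤ 8 * K ^ 2 * (C2 * sq))
      have f4 : 8 * K ^ 4 ≤ 8 * K ^ 4 * (1 + q) := le_mul_of_one_le_right (by positivity) (by linarith)
      calc _ ≤ 8 * K ^ 2 * (C2 * sq) * (((8 * K ^ 2 * C2 + 1) / θ + C + 4) * sq) + 8 * K ^ 4 * (1 + q) := by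
            linarith
        _ = 8 * K ^ 2 * C2 * ((8 * K ^ 2 * C2 + 1) / θ + C + 4) * (sq ^ 2) + 8 * K ^ 4 * (1 + q) := by ring
        _ = _ := by rw [sq1, hC4]; ring
    have f5 : q ^ 2 ≤ C3 ^ 2 * (1 + A) := by
      calc q ^ 2 ≤ (C3 * sA) ^ 2 := pow_le_pow_left₀ q0 hqA 2
        _ = _ := by rw [mul_pow, sq2]
    calc _ ≤ C4 * (1 + q) * q := mul_le_mul f2 qm (Q_nonneg hh _) (by positivity)
      _ ≤ C4 * (2 + 2 * q ^ 2) := by rw [mul_assoc]; gcongr; nlinarith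
      _ ≤ C4 * (2 + 2 * (C3 ^ 2 * (1 + A))) := by gcongr
      _ = _ := by ring
  simp only [eF]
  refine key.trans (add_le_add le_rfl ?_)
  change _ ≤ _ + C4 * (2 * C3 ^ 2) * A
  linarith

end levels

/-! ### Interior bounds up to fifth order -/

section induct
variable {B : Bx} {N : ℕ → ℕ} {L T lam K E c : ℝ} {U f : Fam}

lemma XX.succ_of {k : ℕ} (hf : XX B k f) (h : BL B ((DD B)^[k + 1] f)) : XX B (k + 1) f := by
  induction k generalizing f with
  | zero => exact ⟨BB.of_BL hf h, h⟩
  | succ k ih => exact ⟨hf.1, ih hf.2 h⟩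

lemma XX.iter_BB {k : ℕ} (hf : XX B k f) {i : ℕ} (hi : i < k) : BB B ((DD B)^[i] f) := by
  induction i generalizing k f with
  | zero => obtain ⟨k, rfl⟩ := Nat.exists_eq_succ_of_ne_zero hi.ne'; exact hf.1
  | succ i ih =>
    obtain ⟨k, rfl⟩ := Nat.exists_eq_succ_of_ne_zero (Nat.ne_of_gt (by omega : 0 < k))
    exact ih hf.2 (by omega)

lemma XX.iter_BL {k : ℕ} (hf : XX B k f) : BL B ((DD B)^[k] f) := by
  induction k generalizing f with
  | zero => exact hf
  | succ k ih => exact ih hf.2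

lemma PB.absorb_ct (P : PB B N L T lam K E c U) : CT (absorb lam U) := fun n i =>
  (P.ct n i).rpow_const fun _ => Or.inr (by linarith [P.hlam])

/-- Values of `U` near a window, together with bounds on the constants. -/
lemma PB.mem_Icc (P : PB B N L T lam K E c U) {r : ℝ} (hr : r < B.R) : ∀ᶠ n in atTop,
    ∀ t ∈ Icc (B.t0 - r) (B.t0 + r), ∀ i ∈ win (B.h n) B.x0 r, U n t i ∈ Icc c K ∧
      U n t (i + 1) ∈ Icc c K ∧ U n t (i + 1 + 1) ∈ Icc c K ∧ U n t (i + 1 + 1 + 1) ∈ Icc c K := by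
  filter_upwards [P.pos, B.ev_shift hr 0, B.ev_shift hr 1, B.ev_shift hr 2, B.ev_shift hr 3]
    with n h1 k0 k1 k2 k3 t ht i hi
  have ht' := Icc_sub_Icc hr.le ht
  have hh := B.hpos n
  rw [show i + 1 + 1 + 1 = i + 3 by ring, show i + 1 + 1 = i + 2 by ring]
  refine ⟨⟨?_, (P.sch n).le_K _ _⟩, ⟨h1 t ht' _ (mem_win_add hh k1 hi), (P.sch n).le_K _ _⟩,
    ⟨h1 t ht' _ (mem_win_add hh k2 hi), (P.sch n).le_K _ _⟩,
    ⟨h1 t ht' _ (mem_win_add hh k3 hi), (P.sch n).le_K _ _⟩⟩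
  simpa using h1 t ht' _ (mem_win_add hh k0 hi)

lemma PB.absorb1 (P : PB B N L T lam K E c U) (h1 : BB B ((DD B)^[1] U)) :
    BB B ((DD B)^[1] (absorb lam U)) := by
  refine ⟨P.absorb_ct.DD_iter B 1, fun r h0 hr => ?_⟩
  obtain ⟨M, hM, e1⟩ := h1.2 r h0 hr
  obtain ⟨C, hC, H⟩ := fd_rpow_bound (lam := lam) (K := K) P.hc M hM
  refine ⟨C, hC, ?_⟩
  filter_upwards [e1, P.mem_Icc hr, B.ev one_pos] with n e1 e2 e3 t ht i hi
  obtain ⟨a0, a1, a2, a3⟩ := e2 t ht i hi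
  exact (H (B.h n) (U n t) i (B.hpos n) e3 a0 a1 (e1 t ht i hi)).1

lemma PB.absorb2 (P : PB B N L T lam K E c U) (h1 : BB B ((DD B)^[1] U)) (h2 : BB B ((DD B)^[2] U)) :
    BB B ((DD B)^[2] (absorb lam U)) := by
  refine ⟨P.absorb_ct.DD_iter B 2, fun r h0 hr => ?_⟩
  obtain ⟨M, hM, e1⟩ := h1.2 r h0 hr
  obtain ⟨M', hM', e1'⟩ := h2.2 r h0 hr
  obtain ⟨C, hC, H⟩ := fd_rpow_bound (lam := lam) (K := K) P.hc (M + M') (by positivity)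
  refine ⟨C, hC, ?_⟩
  filter_upwards [e1, e1', P.mem_Icc hr, B.ev one_pos] with n e1 e1' e2 e3 t ht i hi
  obtain ⟨a0, a1, a2, a3⟩ := e2 t ht i hi
  exact ((H (B.h n) (U n t) i (B.hpos n) e3 a0 a1 ((e1 t ht i hi).trans (by linarith))).2 a2
    ((e1' t ht i hi).trans (by linarith))).1

lemma PB.absorb3 (P : PB B N L T lam K E c U) (h1 : BB B ((DD B)^[1] U)) (h2 : BB B ((DD B)^[2] U))
    (h3 : BB B ((DD B)^[3] U)) : BB B ((DD B)^[3] (absorb lam U)) := by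
  refine ⟨P.absorb_ct.DD_iter B 3, fun r h0 hr => ?_⟩
  obtain ⟨M, hM, e1⟩ := h1.2 r h0 hr
  obtain ⟨M', hM', e1'⟩ := h2.2 r h0 hr
  obtain ⟨M'', hM'', e1''⟩ := h3.2 r h0 hr
  obtain ⟨C, hC, H⟩ := fd_rpow_bound (lam := lam) (K := K) P.hc (M + M' + M'') (by positivity)
  refine ⟨C, hC, ?_⟩
  filter_upwards [e1, e1', e1'', P.mem_Icc hr, B.ev one_pos] with n e1 e1' e1'' e2 e3 t ht i hi
  obtain ⟨a0, a1, a2, a3⟩ := e2 t ht i hi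
  exact ((H (B.h n) (U n t) i (B.hpos n) e3 a0 a1 ((e1 t ht i hi).trans (by linarith))).2 a2
    ((e1' t ht i hi).trans (by linarith))).2 a3 ((e1'' t ht i hi).trans (by linarith))

/-- The first step of the regularity induction. -/
lemma PB.level2 (P : PB B N L T lam K E c U) : XX B 2 U ∧ ∀ i ≤ 4, LL B ((DD B)^[i] U) := by
  obtain ⟨b2, l4⟩ := step (v := (DD B)^[2] U) (by have := P.hc; positivity : 0 < c ^ 2) P.ll2 P.ll3 P.mob_bd P.small2
    (P.ode_src 0)
  refine ⟨⟨P.bb, BB.of_BL P.bl1 b2, b2⟩, fun i hi => ?_⟩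
  interval_cases i
  · exact P.bb.toLL
  · exact P.bl1.toLL
  · exact P.ll2
  · exact P.ll3
  · exact l4

/-- The induction step: the local estimate for `D^{j+3} u`, whose source consists of a commutator and
the absorption. -/
lemma PB.level_succ (P : PB B N L T lam K E c U) {j : ℕ} (hX : XX B (j + 2) U)
    (hL : ∀ i ≤ j + 4, LL B ((DD B)^[i] U)) (hφ : LL B ((DD B)^[j + 1] (absorb lam U))) :
    XX B (j + 3) U ∧ ∀ i ≤ j + 5, LL B ((DD B)^[i] U) := by
  have hmob : XX B (j + 2) (mob U) := (hX.shift 2).mul (hX.shift 1)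
  have hcom := LL_commutator (g := (DD B)^[3] U) hmob fun i hi => by
    rw [← Function.iterate_add_apply]; exact hL _ (by omega)
  have hs : LL B (src B lam U (j + 1)) := by
    have e : src B lam U (j + 1) = ((DD B)^[j + 2] (mob U * (DD B)^[3] U) - mob U * (DD B)^[j + 2] ((DD B)^[3] U))
        + SH 2 ((DD B)^[j + 1] (absorb lam U)) := by
      rw [src, ← Function.iterate_add_apply]
      change _ + _ - mob U * (DD B)^[j + 5] U = _ - mob U * (DD B)^[j + 5] U + _
      ring
    rw [e]
    exact hcom.add (hφ.shift 2)
  obtain ⟨b, l⟩ := step (v := (DD B)^[j + 3] U) (by have := P.hc; positivity : 0 < c ^ 2)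
    (hL (j + 3) (by omega)) (by rw [← Function.iterate_succ_apply' (DD B)]; exact hL (j + 4) (by omega))
    P.mob_bd (SmallSource.of_LL hs) (P.ode_src (j + 1))
  refine ⟨hX.succ_of b, fun i hi => ?_⟩
  rcases Nat.lt_or_ge i (j + 5) with h | h
  · exact hL i (by omega)
  · rw [show i = j + 5 by omega]
    rwa [← Function.iterate_succ_apply' (DD B), ← Function.iterate_succ_apply' (DD B)] at l

/-- Local bounds for the discrete solutions up to the fifth difference quotient. -/
lemma PB.level5 (P : PB B N L T lam K E c U) : XX B 5 U := by
  obtain ⟨x2, l2⟩ := P.level2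
  obtain ⟨x3, l3⟩ := P.level_succ (j := 0) x2 l2 (P.absorb1 (x2.iter_BB (by norm_num))).toLL
  obtain ⟨x4, l4⟩ := P.level_succ (j := 1) x3 l3
    (P.absorb2 (x3.iter_BB (by norm_num)) (x3.iter_BB (by norm_num))).toLL
  exact (P.level_succ (j := 2) x4 l4 (P.absorb3 (x4.iter_BB (by norm_num)) (x4.iter_BB (by norm_num))
    (x4.iter_BB (by norm_num))).toLL).1

end induct

/-! ### Passage to the limit in the difference quotients -/

/-- The closed space-time box of half-width `r`. -/
def cbox (B : Bx) (r : ℝ) : Set (ℝ × ℝ) :=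
  Icc (B.t0 - r) (B.t0 + r) ×ˢ Icc (B.x0 - r) (B.x0 + r)

/-- Uniform convergence of lattice functions on a box to a continuous limit. -/
structure Cv (B : Bx) (r : ℝ) (G : Fam) (g : ℝ → ℝ → ℝ) : Prop where
  cont : ContinuousOn (fun p : ℝ × ℝ => g p.1 p.2) (cbox B r)
  lim : ∀ ε > 0, ∀ᶠ n in atTop, ∀ p ∈ cbox B r, |G n p.1 ⌊p.2 / B.h n⌋ - g p.1 p.2| ≤ ε

section Cv
variable {B : Bx} {r r1 : ℝ} {F G : Fam} {f g : ℝ → ℝ → ℝ}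

lemma cbox_compact : IsCompact (cbox B r) := isCompact_Icc.prod isCompact_Icc

lemma cbox_mono (h : r1 ≤ r) : cbox B r1 ⊆ cbox B r :=
  prod_mono (Icc_subset_Icc (by linarith) (by linarith)) (Icc_subset_Icc (by linarith) (by linarith))

lemma Cv.mono (hG : Cv B r G g) (h : r1 ≤ r) : Cv B r1 G g :=
  ⟨hG.cont.mono (cbox_mono h), fun ε hε => (hG.lim ε hε).mono fun _ hn p hp => hn p (cbox_mono h hp)⟩

lemma Cv.comp2 (hF : Cv B r F f) (hG : Cv B r G g) {ψ : ℝ → ℝ → ℝ}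
    (hψ : Continuous fun p : ℝ × ℝ => ψ p.1 p.2) :
    Cv B r (fun n t i => ψ (F n t i) (G n t i)) (fun t x => ψ (f t x) (g t x)) := by
  have hc := hF.cont.prodMk hG.cont
  refine ⟨hψ.comp_continuousOn hc, fun ε hε => ?_⟩
  obtain ⟨M, hM⟩ := cbox_compact.exists_bound_of_continuousOn hc
  have hu := (isCompact_closedBall (0 : ℝ × ℝ) (M + 1)).uniformContinuousOn_of_continuous hψ.continuousOn
  obtain ⟨δ, hδ, H⟩ := Metric.uniformContinuousOn_iff_le.1 hu ε hε
  filter_upwards [hF.lim (min δ 1) (by positivity), hG.lim (min δ 1) (by positivity)] with n h1 h2 p hp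
  have a1 := h1 p hp
  have a2 := h2 p hp
  have hd : dist (F n p.1 ⌊p.2 / B.h n⌋, G n p.1 ⌊p.2 / B.h n⌋) (f p.1 p.2, g p.1 p.2) ≤ min δ 1 :=
    max_le a1 a2
  have hm := hM p hp
  refine H _ ?_ (f p.1 p.2, g p.1 p.2) ?_ (hd.trans (min_le_left _ _))
  · rw [mem_closedBall_zero_iff]
    have : dist (F n p.1 ⌊p.2 / B.h n⌋, G n p.1 ⌊p.2 / B.h n⌋) (f p.1 p.2, g p.1 p.2) ≤ 1 :=
      hd.trans (min_le_right _ _)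
    rw [dist_eq_norm] at this
    calc _ = ‖((F n p.1 ⌊p.2 / B.h n⌋, G n p.1 ⌊p.2 / B.h n⌋) - (f p.1 p.2, g p.1 p.2))
          + (f p.1 p.2, g p.1 p.2)‖ := by rw [sub_add_cancel]
      _ ≤ _ := (norm_add_le _ _).trans (by linarith)
  · rw [mem_closedBall_zero_iff]; linarith

lemma Cv.add (hF : Cv B r F f) (hG : Cv B r G g) : Cv B r (F + G) (fun t x => f t x + g t x) :=
  hF.comp2 hG (ψ := fun a b => a + b) continuous_add

lemma Cv.mul (hF : Cv B r F f) (hG : Cv B r G g) : Cv B r (F * G) (fun t x => f t x * g t x) :=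
  hF.comp2 hG (ψ := fun a b => a * b) continuous_mul

lemma Cv.rpow (hF : Cv B r F f) {lam : ℝ} (hl : 0 ≤ lam) :
    Cv B r (absorb lam F) (fun t x => f t x ^ lam) :=
  hF.comp2 hF (ψ := fun a _ => a ^ lam) ((Real.continuous_rpow_const hl).comp continuous_fst)

lemma Cv.shift (hG : Cv B r G g) (h : r1 < r) (k : ℤ) : Cv B r1 (SH k G) g := by
  refine ⟨hG.cont.mono (cbox_mono h.le), fun ε hε => ?_⟩
  have hu := cbox_compact.uniformContinuousOn_of_continuous hG.cont
  obtain ⟨δ, hδ, H⟩ := Metric.uniformContinuousOn_iff_le.1 hu (ε / 2) (by linarith)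
  filter_upwards [hG.lim (ε / 2) (by linarith), B.ev_shift h k, B.ev_shift hδ k] with n h1 h2 h3 p hp
  have hh := B.hpos n
  have hk : |(k:ℝ) * B.h n| = |(k:ℝ)| * B.h n := by rw [abs_mul, abs_of_pos hh]
  have hp' : (p.1, p.2 + k * B.h n) ∈ cbox B r := by
    have := abs_le.1 hk.le
    exact ⟨Icc_sub_Icc h.le hp.1, by simp only; linarith [hp.2.1], by
      simp only; linarith [hp.2.2]⟩
  have a1 := h1 _ hp'
  have a2 := H _ hp' p (cbox_mono h.le hp) (by
    rw [Prod.dist_eq]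
    refine max_le ?_ ?_
    · simp [hδ.le]
    · rw [Real.dist_eq, add_sub_cancel_left, hk]; linarith)
  simp only at a1 a2
  have e : (p.2 + k * B.h n) / B.h n = p.2 / B.h n + k := by field_simp
  rw [e, Int.floor_add_intCast] at a1
  rw [Real.dist_eq] at a2
  calc _ = |(G n p.1 (⌊p.2 / B.h n⌋ + k) - g p.1 (p.2 + k * B.h n))
        + (g p.1 (p.2 + k * B.h n) - g p.1 p.2)| := by rw [sub_add_sub_cancel]; rfl
    _ ≤ _ := (abs_add_le _ _).trans (by linarith)

lemma quot_aux {h S : ℝ} {G : ℤ → ℝ} (hh : 0 < h) (i : ℤ) (m : ℕ)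
    (H : ∀ j < m, |fd h G (i + j) - fd h G i| ≤ S) :
    |G (i + m) - G i - m * h * fd h G i| ≤ m * h * S := by
  induction m with
  | zero => simp
  | succ m ih =>
    have a := ih fun j hj => H j (by omega)
    have b := H m (by omega)
    have e : G (i + (m + 1 : ℕ)) = G (i + m) + h * fd h G (i + m) := by
      unfold fd; push_cast; rw [← add_assoc]; field_simp; ring
    rw [e]
    push_cast
    have b' : |h * (fd h G (i + m) - fd h G i)| ≤ h * S := by rw [abs_mul, abs_of_pos hh]; gcongr
    rw [abs_le] at *
    constructor <;> nlinarith

lemma quot_static {h x0 r M D δ x : ℝ} {G : ℤ → ℝ} (hh : 0 < h) (hhδ : h ≤ δ)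
    (hM : ∀ k ∈ win h x0 r, |fd h G k| ≤ M) (hD : Q h x0 r (fd h (fd h G)) ≤ D)
    (hx1 : x0 - r ≤ x - h) (hx2 : x + δ ≤ x0 + r) :
    |G ⌊(x + δ) / h⌋ - G ⌊x / h⌋ - δ * fd h G ⌊x / h⌋| ≤ 2 * δ * Real.sqrt (2 * δ * D) + h * M := by
  set i := ⌊x / h⌋ with hi
  set j := ⌊(x + δ) / h⌋ with hj
  have hδ : 0 < δ := hh.trans_le hhδ
  have i1 : i * h ≤ x := by have := Int.floor_le (x / h); rwa [le_div_iff₀ hh] at this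
  have i2 : x < i * h + h := by
    have := Int.lt_floor_add_one (x / h); rw [div_lt_iff₀ hh] at this; linarith
  have j1 : j * h ≤ x + δ := by have := Int.floor_le ((x + δ) / h); rwa [le_div_iff₀ hh] at this
  have j2 : x + δ < j * h + h := by
    have := Int.lt_floor_add_one ((x + δ) / h); rw [div_lt_iff₀ hh] at this; linarith
  have hij : i ≤ j := Int.floor_le_floor (by gcongr; linarith)
  obtain ⟨m, hm⟩ := Int.eq_ofNat_of_zero_le (sub_nonneg.2 hij)
  have hjm : j = i + m := by omega
  have mem : ∀ k : ℕ, k ≤ m → i + (k:ℤ) ∈ win h x0 r := fun k hk => by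
    rw [mem_win hh, abs_le]
    have : (k:ℝ) * h ≤ m * h := by gcongr
    have : (0:ℝ) ≤ k * h := by positivity
    rw [hjm] at j1
    push_cast at j1 ⊢
    constructor <;> linarith
  rw [hjm] at j1 j2
  push_cast at j1 j2
  have mh0 : (m:ℝ) * h ≤ 2 * δ := by linarith
  have D0 : 0 ≤ D := (Q_nonneg hh _).trans hD
  have H : ∀ k < m, |fd h G (i + k) - fd h G i| ≤ Real.sqrt (2 * δ * D) := fun k hk => by
    refine Real.abs_le_sqrt ?_
    refine (sq_sub_le_sum hh (fd h G) i k).trans ?_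
    have s := sum_range_le_win (h := h) (x0 := x0) (r := r) (f := fun i => fd h (fd h G) i ^ 2)
      (fun _ => sq_nonneg _) (i := i) (m := k) (fun j hj => mem j (by omega))
    have s2 := (mul_le_mul_of_nonneg_left s hh.le).trans hD
    have kh : (k:ℝ) * h ≤ 2 * δ := le_trans (by gcongr) mh0
    calc _ = (k * h) * (h * ∑ k ∈ Finset.range k, fd h (fd h G) (i + k) ^ 2) := by ring
      _ ≤ 2 * δ * D := mul_le_mul kh s2 (mul_nonneg hh.le (Finset.sum_nonneg fun _ _ => sq_nonneg _))
          (by linarith)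
  have a := quot_aux hh i m H
  have b := hM i (by simpa using mem 0 (by omega))
  have M0 : 0 ≤ M := (abs_nonneg _).trans b
  rw [hjm]
  have e : G (i + m) - G i - δ * fd h G i
      = (G (i + m) - G i - m * h * fd h G i) + (m * h - δ) * fd h G i := by ring
  rw [e]
  refine (abs_add_le _ _).trans (add_le_add (a.trans ?_) ?_)
  · gcongr
  · rw [abs_mul]
    refine mul_le_mul (abs_le.2 ⟨by linarith, by linarith⟩) b (abs_nonneg _) hh.le

/-- If lattice functions converge uniformly and their difference quotients are bounded with
second difference quotients bounded in `L^∞(L²)`, the limit is differentiable in space and the difference quotients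
converge uniformly to its derivative. -/
lemma Cv.has_deriv (hG : Cv B r G g) (h0 : 0 < r) (hr : r < B.R) (h1 : BB B (DD B G))
    (h2 : BL B (DD B (DD B G))) (hr1 : r1 < r) :
    Cv B r1 (DD B G) (fun t => deriv (g t)) ∧
      ∀ p ∈ cbox B r1, HasDerivAt (g p.1) (deriv (g p.1) p.2) p.2 := by
  obtain ⟨M, hM0, hM⟩ := h1.2 r h0 hr
  obtain ⟨D, hD0, hD⟩ := h2.2 r h0 hr
  set s := (r1 + r) / 2 with hs
  have hs1 : r1 < s := by linarith
  have hs2 : s < r := by linarith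
  set η : ℝ → ℝ := fun δ => 2 * Real.sqrt (2 * δ * D) + δ with hη
  set q : ℝ → ℝ × ℝ → ℝ := fun δ p => (g p.1 (p.2 + δ) - g p.1 p.2) / δ with hq
  have hηc : Tendsto η (nhds 0) (nhds 0) := by
    have : Continuous η := by fun_prop
    simpa [hη] using this.tendsto 0
  have inbox : ∀ δ, 0 ≤ δ → δ ≤ r - s → ∀ p ∈ cbox B s, (p.1, p.2 + δ) ∈ cbox B r := fun δ a b p hp =>
    ⟨Icc_sub_Icc hs2.le hp.1, by simp only; linarith [hp.2.1], by
      simp only; linarith [hp.2.2]⟩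
  have stepA : ∀ δ, 0 < δ → δ ≤ r - s → ∀ᶠ n in atTop, ∀ p ∈ cbox B s,
      |DD B G n p.1 ⌊p.2 / B.h n⌋ - q δ p| ≤ η δ := by
    intro δ hδ hδs
    filter_upwards [hM, hD, hG.lim (δ ^ 2 / 4) (by positivity), B.ev hδ,
      B.ev (by positivity : 0 < δ ^ 2 / 2 / (M + 1)), B.ev (by linarith : 0 < r - s)]
      with n k1 k2 k3 k4 k5 k6 p hp
    have hh := B.hpos n
    have ht := Icc_sub_Icc hs2.le hp.1
    have a := quot_static (G := G n p.1) (x0 := B.x0) (r := r) (x := p.2) hh k4 (k1 p.1 ht) (k2 p.1 ht)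
      (by linarith [hp.2.1]) (by linarith [hp.2.2])
    have b1 := k3 p (cbox_mono hs2.le hp)
    have b2 := k3 _ (inbox δ hδ.le hδs p hp)
    have hM2 : B.h n * M ≤ δ ^ 2 / 2 := by
      rw [le_div_iff₀ (by positivity)] at k5
      nlinarith
    rw [← mul_le_mul_iff_of_pos_left hδ, ← abs_of_pos hδ, ← abs_mul, abs_of_pos hδ]
    have e : δ * (DD B G n p.1 ⌊p.2 / B.h n⌋ - q δ p)
        = -(G n p.1 ⌊(p.2 + δ) / B.h n⌋ - G n p.1 ⌊p.2 / B.h n⌋ - δ * fd (B.h n) (G n p.1) ⌊p.2 / B.h n⌋)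
          + ((G n p.1 ⌊(p.2 + δ) / B.h n⌋ - g p.1 (p.2 + δ)) - (G n p.1 ⌊p.2 / B.h n⌋ - g p.1 p.2)) := by
      simp only [hq, DD]; field_simp; ring
    rw [e]
    refine (abs_add_le _ _).trans ?_
    rw [abs_neg]
    have b3 := (abs_sub (G n p.1 ⌊(p.2 + δ) / B.h n⌋ - g p.1 (p.2 + δ)) (G n p.1 ⌊p.2 / B.h n⌋ - g p.1 p.2))
    simp only at b2
    simp only [hη]
    nlinarith
  have small : ∀ ε > 0, ∃ δ0 > 0, δ0 ≤ r - s ∧ ∀ δ, 0 < δ → δ ≤ δ0 → η δ ≤ ε := fun ε hε => by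
    obtain ⟨d, hd, H⟩ := Metric.eventually_nhds_iff.1 (hηc.eventually (gt_mem_nhds hε))
    refine ⟨min (d / 2) (r - s), lt_min (by linarith) (by linarith), min_le_right _ _, fun δ a b => ?_⟩
    refine (H ?_).le
    rw [Real.dist_eq, sub_zero, abs_of_pos a]
    linarith [b.trans (min_le_left _ _)]
  have ex : ∀ p ∈ cbox B s, ∃ l, Tendsto (fun n => DD B G n p.1 ⌊p.2 / B.h n⌋) atTop (nhds l) := by
    intro p hp
    refine cauchySeq_tendsto_of_complete (Metric.cauchySeq_iff'.2 fun ε hε => ?_)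
    obtain ⟨δ, hδ, hδs, H⟩ := small (ε / 3) (by linarith)
    obtain ⟨n0, hn0⟩ := eventually_atTop.1 (stepA δ hδ hδs)
    refine ⟨n0, fun n hn => ?_⟩
    have a := hn0 n hn p hp
    have b := hn0 n0 le_rfl p hp
    have := H δ hδ le_rfl
    rw [Real.dist_eq]
    rw [abs_le] at a b
    rw [abs_lt]
    constructor <;> linarith
  choose! f hf using ex
  have fq : ∀ δ, 0 < δ → δ ≤ r - s → ∀ p ∈ cbox B s, |f p - q δ p| ≤ η δ := fun δ a b p hp =>
    le_of_tendsto ((hf p hp).sub_const _).abs ((stepA δ a b).mono fun n hn => hn p hp)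
  have hfc : ContinuousOn f (cbox B s) := by
    refine continuousOn_of_uniform_approx_of_continuousOn fun u hu => ?_
    obtain ⟨ε, hε, hεu⟩ := Metric.mem_uniformity_dist.1 hu
    obtain ⟨δ, hδ, hδs, H⟩ := small (ε / 2) (by linarith)
    refine ⟨q δ, ?_, fun p hp => hεu ?_⟩
    · refine ContinuousOn.div_const (ContinuousOn.sub ?_ (hG.cont.mono (cbox_mono hs2.le))) _
      exact hG.cont.comp (f := fun p : ℝ × ℝ => (p.1, p.2 + δ)) (by fun_prop) (inbox δ hδ.le hδs)
    · rw [Real.dist_eq]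
      have := fq δ hδ hδs p hp
      have := H δ hδ le_rfl
      linarith
  have hder : ∀ p ∈ cbox B r1, HasDerivAt (g p.1) (f p) p.2 := by
    intro p hp
    have hps := cbox_mono hs1.le hp
    rw [hasDerivAt_iff_tendsto_slope_zero, Metric.tendsto_nhdsWithin_nhds]
    intro ε hε
    obtain ⟨δ1, hδ1, hδs, H⟩ := small (ε / 3) (by linarith)
    obtain ⟨δ2, hδ2, H2⟩ := Metric.continuousOn_iff.1 hfc p hps (ε / 3) (by linarith)
    refine ⟨min (min δ1 δ2) (s - r1), by simp only [lt_min_iff]; exact ⟨⟨hδ1, hδ2⟩, by linarith⟩,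
      fun d hd0 hd => ?_⟩
    rw [Real.dist_eq, sub_zero] at hd
    have d1 := hd.trans_le ((min_le_left _ _).trans (min_le_left _ _))
    have d2 := hd.trans_le ((min_le_left _ _).trans (min_le_right _ _))
    have d3 := hd.trans_le (min_le_right _ _)
    rw [Real.dist_eq, smul_eq_mul]
    rcases lt_or_gt_of_ne hd0 with hneg | hpos
    · rw [abs_of_neg hneg] at d1 d2 d3
      have hp' : (p.1, p.2 + d) ∈ cbox B s := ⟨Icc_sub_Icc hs1.le hp.1, by
        simp only; linarith [hp.2.1], by simp only; linarith [hp.2.2]⟩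
      have a := fq (-d) (by linarith) (by linarith) _ hp'
      have b := H2 _ hp' (by
        rw [Prod.dist_eq]
        refine max_lt (by simpa using hδ2) ?_
        rw [Real.dist_eq, add_sub_cancel_left, abs_of_neg hneg]; exact d2)
      have c := H (-d) (by linarith) d1.le
      have e : q (-d) (p.1, p.2 + d) = d⁻¹ * (g p.1 (p.2 + d) - g p.1 p.2) := by
        simp only [hq]
        rw [add_neg_cancel_right, inv_mul_eq_div, div_neg, ← neg_div, neg_sub]
      rw [e] at a
      rw [Real.dist_eq] at b
      rw [abs_le] at a
      rw [abs_lt] at b ⊢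
      constructor <;> linarith
    · rw [abs_of_pos hpos] at d1
      have a := fq d hpos (by linarith) p hps
      have c := H d hpos d1.le
      have e : q d p = d⁻¹ * (g p.1 (p.2 + d) - g p.1 p.2) := by simp only [hq]; rw [inv_mul_eq_div]
      rw [e, abs_sub_comm] at a
      linarith
  have hfd : ∀ p ∈ cbox B r1, deriv (g p.1) p.2 = f p := fun p hp => (hder p hp).deriv
  refine ⟨⟨(hfc.mono (cbox_mono hs1.le)).congr hfd, fun ε hε => ?_⟩, fun p hp => ?_⟩
  · obtain ⟨δ, hδ, hδs, H⟩ := small (ε / 2) (by linarith)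
    filter_upwards [stepA δ hδ hδs] with n hn p hp
    have a := hn p (cbox_mono hs1.le hp)
    have b := fq δ hδ hδs p (cbox_mono hs1.le hp)
    have c := H δ hδ le_rfl
    rw [hfd p hp]
    rw [abs_le] at *
    constructor <;> linarith
  · rw [hfd p hp]; exact hder p hp

end Cv

/-! ### Smoothness of the limit on its positivity set -/

section interior
variable {L T lam K E : ℝ} {N : ℕ → ℕ} {h : ℕ → ℝ} {U : Fam} {u : ℝ → ℝ → ℝ}

/-- Near a point where the limit is positive, the approximations are bounded below. -/
lemma Approx.exists_box (A : Approx L T lam K E N h U u) {t0 x0 : ℝ} (ht : t0 ∈ Ioo 0 T)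
    (hu : 0 < u t0 x0) : ∃ (B : Bx) (c : ℝ), B.h = h ∧ B.t0 = t0 ∧ B.x0 = x0 ∧
      PB B N L T lam K E c U := by
  obtain ⟨δ, hδ, H⟩ := Metric.continuous_iff.1 A.cont (t0, x0) (u t0 x0 / 2) (by linarith)
  have hL := A.hL
  obtain ⟨R, hR, hR1⟩ : ∃ R, 0 < R ∧ R < min (min δ (L / 4)) (min t0 (T - t0)) :=
    exists_between (by
      have := ht.1
      have := sub_pos.2 ht.2
      positivity)
  simp only [lt_min_iff] at hR1
  obtain ⟨⟨r1, r2⟩, r3, r4⟩ := hR1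
  refine ⟨⟨h, t0, x0, R, fun n => (A.sch n).hpos, A.h_lim⟩, u t0 x0 / 4, rfl, rfl, rfl,
    A.sch, A.NL, A.en0, A.hlam, A.hT, hR, by simp only; linarith, by simp only; linarith,
    by simp only; linarith, by linarith, ?_⟩
  filter_upwards [A.conv (u t0 x0 / 4) (by linarith)] with n hn t ht' i hi
  have hh := (A.sch n).hpos
  have hi' := (mem_win hh).1 hi
  have a := hn t (i * h n)
  rw [mul_div_cancel_right₀ _ hh.ne', Int.floor_intCast] at a
  have b := H (t, i * h n) (by
    rw [Prod.dist_eq]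
    refine max_lt ?_ ?_
    · rw [Real.dist_eq, abs_lt]
      simp only [mem_Icc] at ht'
      simp only
      constructor <;> linarith
    · rw [Real.dist_eq]; exact hi'.trans_lt r1)
  rw [Real.dist_eq, abs_lt] at b
  rw [abs_le] at a
  simp only at b
  linarith

/-- On the box of half-width `r`, the difference quotients of `U` of order at most four converge
uniformly to the corresponding derivatives of `u`, and `u` has a continuous time derivative. -/
structure Reg (h : ℕ → ℝ) (lam : ℝ) (U : Fam) (u : ℝ → ℝ → ℝ) (B : Bx) (r : ℝ) : Prop where
  hh : B.h = h
  hr : 0 < r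
  cv : ∀ k ≤ 4, Cv B r ((DD B)^[k] U) (fun t => deriv^[k] (u t))
  dx : ∀ k < 4, ∀ p ∈ cbox B r, HasDerivAt (deriv^[k] (u p.1)) (deriv^[k + 1] (u p.1) p.2) p.2
  dt : ∀ x ∈ Icc (B.x0 - r) (B.x0 + r), ∀ t ∈ Ioo (B.t0 - r) (B.t0 + r),
    HasDerivAt (fun s => u s x) (deriv (fun s => u s x) t) t
  cont_dt : ContinuousOn (fun p : ℝ × ℝ => deriv (fun s => u s p.2) p.1)
    (Ioo (B.t0 - r) (B.t0 + r) ×ˢ Icc (B.x0 - r) (B.x0 + r))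

/-- Regularity near a point of positivity. The time derivative exists because the right hand side of
the scheme converges uniformly. -/
lemma Approx.regular (A : Approx L T lam K E N h U u) {t0 x0 : ℝ} (ht : t0 ∈ Ioo 0 T)
    (hu : 0 < u t0 x0) : ∃ (B : Bx) (r : ℝ), B.t0 = t0 ∧ B.x0 = x0 ∧ Reg h lam U u B r := by
  obtain ⟨B, c, hB, h1, h2, P⟩ := A.exists_box ht hu
  have hR := P.hR
  set ρ : ℝ → ℝ := fun k => B.R * (1 - k / 10) with hρ
  have ρlt : ∀ {a b : ℝ}, b < a → ρ a < ρ b := fun {a b} hab => by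
    simp only [hρ]; nlinarith
  have X := P.level5
  have c0 : Cv B (ρ 1) U u := ⟨A.cont.continuousOn, fun ε hε => by
    filter_upwards [A.conv ε hε] with n hn p _
    rw [hB]; exact hn _ _⟩
  have ρp : ∀ a : ℝ, a < 10 → 0 < ρ a := fun a ha => mul_pos hR (by linarith)
  have ρR : ∀ a : ℝ, 0 < a → ρ a < B.R := fun a ha => by
    simp only [hρ]; nlinarith
  have s1 := c0.has_deriv (ρp 1 (by norm_num)) (ρR 1 (by norm_num)) (X.iter_BB (i := 1) (by norm_num))
    (X.iter_BB (i := 2) (by norm_num)).toBL (ρlt (a := 2) (by norm_num))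
  have s2 := s1.1.has_deriv (ρp 2 (by norm_num)) (ρR 2 (by norm_num))
    (X.iter_BB (i := 2) (by norm_num)) (X.iter_BB (i := 3) (by norm_num)).toBL
    (ρlt (a := 3) (by norm_num))
  have s3 := s2.1.has_deriv (ρp 3 (by norm_num)) (ρR 3 (by norm_num))
    (X.iter_BB (i := 3) (by norm_num)) (X.iter_BB (i := 4) (by norm_num)).toBL
    (ρlt (a := 4) (by norm_num))
  have s4 := s3.1.has_deriv (ρp 4 (by norm_num)) (ρR 4 (by norm_num))
    (X.iter_BB (i := 4) (by norm_num)) X.iter_BL (ρlt (a := 5) (by norm_num))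
  have m : ∀ {a b : ℝ}, b ≤ a → ρ a ≤ ρ b := fun {a b} hab => by
    simp only [hρ]; nlinarith
  have cμ : Cv B (ρ 6) (mob U) (fun t x => u t x * u t x) :=
    (c0.shift (ρlt (by norm_num)) 2).mul (c0.shift (ρlt (by norm_num)) 1)
  have cDμ : Cv B (ρ 6) (DD B (mob U)) (fun t x => deriv (u t) x * u t x + u t x * deriv (u t) x) := by
    rw [mob, DD_mul, DD_SH, DD_SH]
    exact ((s1.1.shift (ρlt (by norm_num)) 2).mul ((c0.shift (ρlt (a := 5) (by norm_num)) 1).shift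
      (ρlt (by norm_num)) 1)).add ((c0.shift (ρlt (by norm_num)) 2).mul
        (s1.1.shift (ρlt (by norm_num)) 1))
  have cV := ((cDμ.mul (s3.1.shift (ρlt (a := 6) (by norm_num)) 1)).add
    (cμ.mul (s4.1.mono (m (by norm_num))))).add ((c0.rpow (lam := lam) (by linarith [P.hlam])).shift
      (ρlt (a := 6) (by norm_num)) 2)
  have cW := cV.shift (ρlt (a := 7) (by norm_num)) (-2)
  set w : ℝ → ℝ → ℝ := fun t x => (deriv (u t) x * u t x + u t x * deriv (u t) x) *
    deriv (deriv (deriv (u t))) x + u t x * u t x * deriv (deriv (deriv (deriv (u t)))) x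
      + u t x ^ lam with hw
  have dt : ∀ x ∈ Icc (B.x0 - ρ 7) (B.x0 + ρ 7), ∀ t ∈ Ioo (B.t0 - ρ 7) (B.t0 + ρ 7),
      HasDerivAt (fun s => u s x) (-(w t x)) t := by
    intro x hx t ht
    refine hasDerivAt_of_tendstoUniformlyOn (l := atTop) (f := fun n s => U n s ⌊x / B.h n⌋)
      (f' := fun n s => -((DD B (mob U * (DD B)^[3] U) + SH 2 (absorb lam U)) n s (⌊x / B.h n⌋ - 2)))
      (g' := fun s => -(w s x)) isOpen_Ioo ?_ ?_ ?_ ht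
    · rw [Metric.tendstoUniformlyOn_iff]
      intro ε hε
      filter_upwards [cW.lim (ε / 2) (by linarith)] with n hn s hs
      have := hn (s, x) ⟨Ioo_subset_Icc_self hs, hx⟩
      rw [Real.dist_eq, DD_mul]
      simp only [SH, hw, Pi.add_apply, Pi.mul_apply] at this ⊢
      refine lt_of_le_of_lt (le_of_eq_of_le ?_ this) (by linarith)
      rw [← sub_eq_add_neg]
      congr 1
      rw [neg_sub_neg]
      rfl
    · refine Eventually.of_forall fun n s hs => P.ode_DD 0 n ?_ _
      have := ρR 7 (by norm_num)
      exact ⟨by linarith [hs.1], by linarith [hs.2]⟩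
    · intro s _
      rw [Metric.tendsto_atTop']
      intro ε hε
      obtain ⟨n0, H⟩ := eventually_atTop.1 (A.conv (ε / 2) (by linarith))
      refine ⟨n0, fun n hn => ?_⟩
      rw [Real.dist_eq, hB]
      exact (H n hn.le s x).trans_lt (by linarith)
  refine ⟨B, ρ 7, h1, h2, hB, ρp 7 (by norm_num), ?_, ?_, fun x hx t ht => ?_, ?_⟩
  · intro k hk
    interval_cases k
    · exact c0.mono (m (by norm_num))
    · exact s1.1.mono (m (by norm_num))
    · exact s2.1.mono (m (by norm_num))
    · exact s3.1.mono (m (by norm_num))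
    · exact s4.1.mono (m (by norm_num))
  · intro k hk p hp
    interval_cases k
    · exact s1.2 p (cbox_mono (m (by norm_num)) hp)
    · exact s2.2 p (cbox_mono (m (by norm_num)) hp)
    · exact s3.2 p (cbox_mono (m (by norm_num)) hp)
    · exact s4.2 p (cbox_mono (m (by norm_num)) hp)
  · rw [(dt x hx t ht).deriv]; exact dt x hx t ht
  · exact (cW.cont.neg.mono (prod_mono Ioo_subset_Icc_self Subset.rfl)).congr
      fun p hp => (dt p.2 hp.2 p.1 hp.1).deriv

end interior

/-! ### Periodic absolutely continuous functions with square integrable derivative -/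

/-- `f` is `L`-periodic and absolutely continuous with derivative `g`, which is `L`-periodic and
square integrable over a period. -/
structure HasD (L : ℝ) (f g : ℝ → ℝ) : Prop where
  perf : ∀ x, f (x + L) = f x
  per : ∀ x, g (x + L) = g x
  int : ∀ a b, IntervalIntegrable g volume a b
  ac : ∀ a b, f b - f a = ∫ x in a..b, g x
  sq : IntervalIntegrable (fun x => g x ^ 2) volume 0 L

/-- The squared `L²(0,L)` norm of the difference quotient of step `r`. -/
def dq (L : ℝ) (f : ℝ → ℝ) (r : ℝ) : ℝ := ∫ x in (0:ℝ)..L, ((f (x + r) - f x) / r) ^ 2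

section HasD
variable {L : ℝ} {f g : ℝ → ℝ}

lemma HasD.persq (D : HasD L f g) : Function.Periodic (fun x => g x ^ 2) L := fun x => by
  simp only [D.per]

lemma HasD.sq_all (D : HasD L f g) (hL : 0 < L) (a b : ℝ) :
    IntervalIntegrable (fun x => g x ^ 2) volume a b :=
  D.persq.intervalIntegrable₀ hL.ne' D.sq a b

lemma HasD.cont (D : HasD L f g) : Continuous f := by
  have : f = fun x => f 0 + ∫ y in (0:ℝ)..x, g y := by
    funext x; rw [← D.ac]; ring
  rw [this]
  exact continuous_const.add (intervalIntegral.continuous_primitive D.int 0)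

lemma HasD.dq_le (D : HasD L f g) (hL : 0 < L) {r : ℝ} (hr : 0 < r) :
    dq L f r ≤ ∫ x in (0:ℝ)..L, g x ^ 2 := by
  set G : ℝ → ℝ := fun z => ∫ y in (0:ℝ)..z, g y ^ 2 with hG
  have Gc : Continuous G := intervalIntegral.continuous_primitive (D.sq_all hL) 0
  have Gd : ∀ a b, G b - G a = ∫ y in a..b, g y ^ 2 := fun a b =>
    intervalIntegral.integral_interval_sub_left (D.sq_all hL _ _) (D.sq_all hL _ _)
  have fc := D.cont
  have ii : ∀ {φ : ℝ → ℝ} (_ : Continuous φ) (a b : ℝ), IntervalIntegrable φ volume a b :=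
    fun h a b => h.intervalIntegrable a b
  have step1 : dq L f r ≤ ∫ x in (0:ℝ)..L, (G (x + r) - G x) / r := by
    refine intervalIntegral.integral_mono_on hL.le (ii (by fun_prop) _ _) (ii (by fun_prop) _ _)
      fun x _ => ?_
    have := sq_integral_le (by linarith : x ≤ x + r) (D.int _ _) (D.sq_all hL x (x + r))
    rw [← D.ac, ← Gd, add_sub_cancel_left] at this
    rw [div_pow, div_le_div_iff₀ (by positivity) hr]
    nlinarith
  refine step1.trans (le_of_eq ?_)
  rw [intervalIntegral.integral_div, intervalIntegral.integral_sub (ii (by fun_prop) _ _)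
    (ii Gc _ _), intervalIntegral.integral_comp_add_right (fun x => G x), zero_add]
  have e1 : (∫ x in r..(L + r), G x) - ∫ x in (0:ℝ)..L, G x
      = (∫ x in L..(L + r), G x) - ∫ x in (0:ℝ)..r, G x := by
    have a := intervalIntegral.integral_add_adjacent_intervals (ii Gc 0 r) (ii Gc r (L + r))
    have b := intervalIntegral.integral_add_adjacent_intervals (ii Gc 0 L) (ii Gc L (L + r))
    linarith
  have e2 : ∫ x in L..(L + r), G x = ∫ x in (0:ℝ)..r, G (x + L) := by
    rw [intervalIntegral.integral_comp_add_right (fun x => G x), zero_add, add_comm]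
  rw [e1, e2, ← intervalIntegral.integral_sub (ii (by fun_prop) _ _) (ii Gc _ _)]
  have e3 : ∀ x, G (x + L) - G x = ∫ y in (0:ℝ)..L, g y ^ 2 := fun x => by
    rw [Gd, D.persq.intervalIntegral_add_eq x 0, zero_add]
  simp only [e3]
  rw [intervalIntegral.integral_const, smul_eq_mul, sub_zero]
  field_simp

lemma ae_deriv_of_ac (hint : ∀ a b, IntervalIntegrable g volume a b)
    (hac : ∀ a b, f b - f a = ∫ x in a..b, g x) : ∀ᵐ x, HasDerivAt f (g x) x := by
  have hl : LocallyIntegrable g := by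
    rw [locallyIntegrable_iff]
    intro k hk
    obtain ⟨a, b, hab⟩ : ∃ a b : ℝ, k ⊆ Ioc a b := by
      obtain ⟨M, hM⟩ := hk.isBounded.exists_norm_le
      refine ⟨-(M + 1), M, fun x hx => ?_⟩
      have := abs_le.1 (hM x hx)
      exact ⟨by linarith [this.1], this.2⟩
    exact ((intervalIntegrable_iff.1 (hint a b)).mono_set (hab.trans Ioc_subset_uIoc))
  filter_upwards [_root_.LocallyIntegrable.ae_hasDerivAt_integral hl] with x hx
  have := (hx 0).const_add (f 0)
  refine this.congr_of_eventuallyEq (Eventually.of_forall fun y => ?_)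
  simp only [← hac]; ring

lemma HasD.ae_deriv (D : HasD L f g) : ∀ᵐ x, HasDerivAt f (g x) x := ae_deriv_of_ac D.int D.ac

/-- The derivative is controlled by the difference quotients (Fatou). -/
lemma sq_le_of_dq (hL : 0 < L) (hf : Continuous f) (hd : ∀ᵐ x, HasDerivAt f (g x) x)
    (hgm : AEStronglyMeasurable g volume) {C : ℝ} (hC : ∀ r, 0 < r → dq L f r ≤ C) :
    IntervalIntegrable (fun x => g x ^ 2) volume 0 L ∧ ∫ x in (0:ℝ)..L, g x ^ 2 ≤ C := by
  set r : ℕ → ℝ := fun k => 1 / ((k:ℝ) + 1) with hr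
  have r0 : ∀ k, 0 < r k := fun k => by simp only [hr]; positivity
  have rl : Tendsto r atTop (nhdsWithin 0 {0}ᶜ) := by
    rw [tendsto_nhdsWithin_iff]
    exact ⟨tendsto_one_div_add_atTop_nhds_zero_nat, Eventually.of_forall fun k => (r0 k).ne'⟩
  have C0 : 0 ≤ C := le_trans (intervalIntegral.integral_nonneg hL.le fun x _ => sq_nonneg _)
    (hC 1 one_pos)
  have cq : ∀ k, Continuous fun x => ((f (x + r k) - f x) / r k) ^ 2 := fun k => by fun_prop
  have key : ∫⁻ x in Ioc 0 L, ENNReal.ofReal (g x ^ 2) ≤ ENNReal.ofReal C := by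
    calc ∫⁻ x in Ioc 0 L, ENNReal.ofReal (g x ^ 2)
        = ∫⁻ x in Ioc 0 L, liminf (fun k => ENNReal.ofReal (((f (x + r k) - f x) / r k) ^ 2))
            atTop := by
          refine lintegral_congr_ae ?_
          filter_upwards [ae_restrict_of_ae hd] with x hx
          refine (Tendsto.liminf_eq ?_).symm
          refine (ENNReal.continuous_ofReal.tendsto _).comp (Tendsto.pow ?_ 2)
          have := (hasDerivAt_iff_tendsto_slope_zero.1 hx).comp rl
          refine this.congr fun k => ?_
          simp only [Function.comp, smul_eq_mul]; rw [inv_mul_eq_div]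
      _ ≤ liminf (fun k => ∫⁻ x in Ioc 0 L, ENNReal.ofReal (((f (x + r k) - f x) / r k) ^ 2))
            atTop := lintegral_liminf_le fun k => ((cq k).measurable).ennreal_ofReal
      _ ≤ ENNReal.ofReal C := by
          refine liminf_le_of_le (by isBoundedDefault) fun b hb => ?_
          obtain ⟨k, hk⟩ := hb.exists
          refine hk.trans ?_
          rw [← ofReal_integral_eq_lintegral_ofReal
            ((cq k).intervalIntegrable 0 L |>.1) (Eventually.of_forall fun x => sq_nonneg _),
            ← intervalIntegral.integral_of_le hL.le]
          exact ENNReal.ofReal_le_ofReal (hC _ (r0 k))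
  have hi : IntegrableOn (fun x => g x ^ 2) (Ioc 0 L) := by
    refine ⟨(hgm.pow 2).restrict, ?_⟩
    rw [hasFiniteIntegral_iff_ofReal (Eventually.of_forall fun x => sq_nonneg _)]
    exact key.trans_lt ENNReal.ofReal_lt_top
  refine ⟨(intervalIntegrable_iff_integrableOn_Ioc_of_le hL.le).2 hi, ?_⟩
  rw [intervalIntegral.integral_of_le hL.le, ← ENNReal.ofReal_le_ofReal_iff C0,
    ofReal_integral_eq_lintegral_ofReal hi (Eventually.of_forall fun x => sq_nonneg _)]
  exact key

lemma HasD.to_deriv (D : HasD L f g) : HasD L f (deriv f) := by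
  have e : ∀ᵐ x, g x = deriv f x := D.ae_deriv.mono fun x hx => hx.deriv.symm
  have p : ∀ x, deriv f (x + L) = deriv f x := fun x => by
    rw [← deriv_comp_add_const]; congr 1; funext y; exact D.perf y
  refine ⟨D.perf, p, fun a b => (D.int a b).congr_ae (ae_restrict_of_ae e), fun a b => ?_,
    (D.sq).congr_ae (ae_restrict_of_ae (e.mono fun x hx => by simp only [hx]))⟩
  rw [D.ac]
  exact intervalIntegral.integral_congr_ae (e.mono fun x hx _ => hx)

end HasD

section limit
variable {L : ℝ} {f : ℝ → ℝ} {F v : ℕ → ℝ → ℝ} {l : Filter ℕ}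

lemma dq_le_of_lim [NeBot l] [l.IsCountablyGenerated] (hL : 0 < L) (hD : ∀ n, HasD L (F n) (v n))
    (hf : Continuous f) (hlim : TendstoUniformly F f l) {C : ℝ}
    (hC : ∀ᶠ n in l, ∫ x in (0:ℝ)..L, v n x ^ 2 ≤ C) {r : ℝ} (hr : 0 < r) : dq L f r ≤ C := by
  have ht : Tendsto (fun n => dq L (F n) r) l (nhds (dq L f r)) := by
    have hK : IsCompact (Icc 0 L) := isCompact_Icc
    obtain ⟨M, hM⟩ := hK.exists_bound_of_continuousOn (f := fun x => f (x + r) - f x)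
      (by fun_prop)
    refine intervalIntegral.tendsto_integral_filter_of_dominated_convergence
      (fun _ => ((M + 2) / r) ^ 2) (Eventually.of_forall fun n => ?_) ?_ (by simp) ?_
    · have := (hD n).cont
      exact Continuous.aestronglyMeasurable (by fun_prop)
    · filter_upwards [Metric.tendstoUniformly_iff.1 hlim 1 one_pos] with n hn
      refine Eventually.of_forall fun x hx => ?_
      rw [uIoc_of_le hL.le] at hx
      have a := hn x
      have b := hn (x + r)
      have c := hM x ⟨hx.1.le, hx.2⟩
      rw [Real.dist_eq, abs_lt] at a b
      rw [Real.norm_eq_abs, abs_le] at c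
      rw [Real.norm_eq_abs, abs_of_nonneg (sq_nonneg _), div_pow, div_pow]
      have : |F n (x + r) - F n x| ≤ M + 2 := abs_le.2 ⟨by linarith, by linarith⟩
      have := pow_le_pow_left₀ (abs_nonneg _) this 2
      rw [sq_abs] at this
      gcongr
    · refine Eventually.of_forall fun x _ => ?_
      exact (((hlim.tendsto_at (x + r)).sub (hlim.tendsto_at x)).div_const r).pow 2
  exact le_of_tendsto ht (hC.mono fun n hn => ((hD n).dq_le hL hr).trans hn)

open AbsolutelyContinuousOnInterval in
lemma ac_of_lim [NeBot l] (hL : 0 < L) (hD : ∀ n, HasD L (F n) (v n))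
    (hlim : TendstoUniformly F f l) {a b C : ℝ} (hab : a ≤ b)
    (hC : ∀ᶠ n in l, ∫ x in a..b, v n x ^ 2 ≤ C) : AbsolutelyContinuousOnInterval f a b := by
  rw [absolutelyContinuousOnInterval_iff]
  intro ε hε
  have hC' : 0 < |C| + 1 := by positivity
  set η : ℝ := ε / (4 * (|C| + 1)) with hη
  have hη0 : 0 < η := by positivity
  refine ⟨ε * η, by positivity, fun I hI hs => ?_⟩
  obtain ⟨m, I⟩ := I
  simp only at hs ⊢
  have claim : ∑ i ∈ Finset.range m, dist (f (I i).1) (f (I i).2) ≤ ε / 2 := by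
    refine le_of_tendsto (f := fun n => ∑ i ∈ Finset.range m, dist (F n (I i).1) (F n (I i).2))
      (tendsto_finsetSum _ fun i _ => (hlim.tendsto_at _).dist (hlim.tendsto_at _))
      (hC.mono fun n hn => ?_)
    have vi := (hD n).int
    have v2 := (hD n).sq_all hL
    have each : ∀ i ∈ Finset.range m, dist (F n (I i).1) (F n (I i).2) ≤
        η * (∫ x in uIoc (I i).1 (I i).2, v n x ^ 2) + 1 / (4 * η) * dist (I i).1 (I i).2 := by
      intro i _
      rw [dist_comm, Real.dist_eq, (hD n).ac, ← Real.norm_eq_abs]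
      refine (intervalIntegral.norm_integral_le_integral_norm_uIoc).trans ?_
      have i1 : IntegrableOn (fun x => v n x ^ 2) (uIoc (I i).1 (I i).2) :=
        intervalIntegrable_iff.1 (v2 _ _)
      have ic : IntegrableOn (fun _ : ℝ => 1 / (4 * η)) (uIoc (I i).1 (I i).2) := by
        rw [← intervalIntegrable_iff]; simp
      have e : 1 / (4 * η) * dist (I i).1 (I i).2
          = ∫ x in uIoc (I i).1 (I i).2, 1 / (4 * η) := by
        rw [setIntegral_const, smul_eq_mul, mul_comm, measureReal_def, uIoc, Real.volume_Ioc,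
          ENNReal.toReal_ofReal (by simp), Real.dist_eq]
        congr 1
        rw [max_sub_min_eq_abs, abs_sub_comm]
      rw [e, ← integral_const_mul, ← integral_add (i1.const_mul η) ic]
      refine integral_mono (intervalIntegrable_iff.1 (vi _ _)).norm ((i1.const_mul η).add ic)
        fun x => ?_
      simp only [Real.norm_eq_abs]
      have h1 : |v n x| = (2 * η * |v n x|) * (1 / (2 * η)) := by field_simp
      have h2 : η * v n x ^ 2 + 1 / (4 * η) - |v n x| = η * (|v n x| - 1 / (2 * η)) ^ 2 := by
        rw [← sq_abs]; field_simp; ring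
      have h3 : 0 ≤ η * (|v n x| - 1 / (2 * η)) ^ 2 := by positivity
      linarith
    refine (Finset.sum_le_sum each).trans ?_
    rw [Finset.sum_add_distrib, ← Finset.mul_sum, ← Finset.mul_sum]
    have hU : ∑ i ∈ Finset.range m, ∫ x in uIoc (I i).1 (I i).2, v n x ^ 2 ≤ C := by
      rw [← integral_biUnion_finset _ (fun i _ => measurableSet_uIoc) hI.2
        (fun i _ => intervalIntegrable_iff.1 (v2 _ _))]
      refine le_trans ?_ hn
      rw [intervalIntegral.integral_of_le hab, ← uIoc_of_le hab]
      exact setIntegral_mono_set (intervalIntegrable_iff.1 (v2 _ _))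
        (Eventually.of_forall fun x => sq_nonneg _)
        (biUnion_uIoc_subset_of_mem_disjWithin hI).eventuallyLE
    have A1 : η * ∑ i ∈ Finset.range m, ∫ x in uIoc (I i).1 (I i).2, v n x ^ 2 ≤ ε / 4 := by
      calc _ ≤ η * (|C| + 1) := by gcongr; linarith [le_abs_self C]
        _ = ε / 4 := by rw [hη]; field_simp
    have A2 : 1 / (4 * η) * ∑ i ∈ Finset.range m, dist (I i).1 (I i).2 ≤ ε / 4 := by
      calc _ ≤ 1 / (4 * η) * (ε * η) := by gcongr
        _ = ε / 4 := by field_simp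
    linarith
  linarith

/-- Lower semicontinuity of the Dirichlet energy under uniform convergence. -/
lemma HasD.of_lim [NeBot l] [l.IsCountablyGenerated] (hL : 0 < L) (hD : ∀ n, HasD L (F n) (v n))
    (hf : Continuous f) (hper : ∀ x, f (x + L) = f x) (hlim : TendstoUniformly F f l) {C : ℝ}
    (hC : ∀ᶠ n in l, ∫ x in (0:ℝ)..L, v n x ^ 2 ≤ C) :
    HasD L f (deriv f) ∧ ∫ x in (0:ℝ)..L, deriv f x ^ 2 ≤ C := by
  have hac : ∀ m : ℕ, AbsolutelyContinuousOnInterval f (-(m * L)) (-(m * L) + (2 * m : ℕ) • L) :=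
    fun m => by
    refine ac_of_lim (C := (2 * m : ℕ) • C) hL hD hlim ?_ ?_
    · have : (0:ℝ) ≤ (2 * m : ℕ) • L := by positivity
      linarith
    · filter_upwards [hC] with n hn
      have e := (hD n).persq.intervalIntegral_add_zsmul_eq (2 * m : ℕ) (-(m * L))
        (fun a b => (hD n).sq_all hL a b)
      rw [natCast_zsmul, natCast_zsmul, (hD n).persq.intervalIntegral_add_eq _ 0, zero_add] at e
      rw [e]
      exact nsmul_le_nsmul_right hn _
  have hsub : ∀ m : ℕ, uIcc (-(m * L)) (-(m * L) + (2 * m : ℕ) • L) = Icc (-(m * L)) (m * L) :=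
    fun m => by
    have e : -(m * L) + (2 * m : ℕ) • L = m * L := by
      rw [nsmul_eq_mul]; push_cast; ring
    rw [e, uIcc_of_le]
    have : (0:ℝ) ≤ m * L := by positivity
    linarith
  have big : ∀ a b : ℝ, ∃ m : ℕ, uIcc a b ⊆ Icc (-(m * L)) (m * L) := fun a b => by
    obtain ⟨m, hm⟩ := exists_nat_ge (max |a| |b| / L)
    rw [div_le_iff₀ hL] at hm
    have h1 := abs_le.1 ((le_max_left _ _).trans hm)
    have h2 := abs_le.1 ((le_max_right _ _).trans hm)
    exact ⟨m, uIcc_subset_Icc h1 h2⟩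
  have ac : ∀ a b, AbsolutelyContinuousOnInterval f a b := fun a b => by
    obtain ⟨m, hm⟩ := big a b
    exact (hac m).mono (by rw [hsub]; exact hm)
  have hdiff : ∀ᵐ x, HasDerivAt f (deriv f x) x := by
    have : ∀ m : ℕ, ∀ᵐ x, x ∈ uIcc (-(m * L)) (m * L) → DifferentiableAt ℝ f x := fun m =>
      (ac _ _).ae_differentiableAt
    filter_upwards [ae_all_iff.2 this] with x hx
    obtain ⟨m, hm⟩ := big x x
    exact (hx m (Icc_subset_uIcc (hm (by simp)))).hasDerivAt
  obtain ⟨h1, h2⟩ := sq_le_of_dq hL hf hdiff (measurable_deriv f).aestronglyMeasurable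
    (fun r hr => dq_le_of_lim hL hD hf hlim hC hr)
  refine ⟨⟨hper, fun x => ?_, fun a b => (ac a b).intervalIntegrable_deriv, fun a b =>
    ((ac a b).integral_deriv_eq_sub).symm, h1⟩, h2⟩
  rw [← deriv_comp_add_const]; congr 1; funext y; exact hper y

end limit

/-! ### Step functions and piecewise linear interpolants -/

section step
variable {N : ℕ} {h L : ℝ} {F : ℤ → ℝ}

/-- The integral of a step function over a part of a cell. -/
lemma cell (hh : 0 < h) (F : ℤ → ℝ) (k : ℤ) {x : ℝ} (h1 : k * h ≤ x) (h2 : x ≤ (k + 1) * h) :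
    IntervalIntegrable (fun y => F ⌊y / h⌋) volume (k * h) x ∧
      ∫ y in (k * h)..x, F ⌊y / h⌋ = (x - k * h) * F k := by
  have e : ∀ᵐ y, y ∈ uIoc (k * h) x → F k = F ⌊y / h⌋ := by
    filter_upwards [Measure.ae_ne volume ((k + 1) * h)] with y hy hy2
    rw [uIoc_of_le h1] at hy2
    congr 1
    symm
    rw [Int.floor_eq_iff, le_div_iff₀ hh, div_lt_iff₀ hh]
    exact ⟨hy2.1.le, lt_of_le_of_ne (hy2.2.trans h2) hy⟩
  constructor
  · exact (intervalIntegrable_const (c := F k)).congr_ae ((ae_restrict_iff' measurableSet_uIoc).2 e)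
  · rw [← intervalIntegral.integral_congr_ae e, intervalIntegral.integral_const, smul_eq_mul]

lemma floor_add_period (hh : 0 < h) (hN : N * h = L) (x : ℝ) : ⌊(x + L) / h⌋ = ⌊x / h⌋ + N := by
  rw [← hN, add_div, mul_div_cancel_right₀ _ hh.ne']
  exact_mod_cast Int.floor_add_natCast _ _

lemma step_int_aux (hh : 0 < h) (F : ℤ → ℝ) :
    IntervalIntegrable (fun y => F ⌊y / h⌋) volume 0 (N * h) ∧
      ∫ y in (0:ℝ)..(N * h), F ⌊y / h⌋ = h * psum N F := by
  induction N with
  | zero => simp [psum]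
  | succ N ih =>
    have c := cell hh F N (x := ((N + 1 : ℕ) : ℝ) * h) (by push_cast; nlinarith) (by push_cast; rfl)
    simp only [Int.cast_natCast] at c
    refine ⟨ih.1.trans c.1, ?_⟩
    rw [← intervalIntegral.integral_add_adjacent_intervals ih.1 c.1, ih.2, c.2]
    unfold psum
    rw [Finset.sum_range_succ]; push_cast; ring

lemma step_per (hh : 0 < h) (hN : N * h = L) (hF : ∀ i, F (i + N) = F i) (x : ℝ) :
    F ⌊(x + L) / h⌋ = F ⌊x / h⌋ := by rw [floor_add_period hh hN, hF]

lemma step_int (hh : 0 < h) (hN : N * h = L) (F : ℤ → ℝ) :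
    ∫ y in (0:ℝ)..L, F ⌊y / h⌋ = h * psum N F := by
  rw [← hN]; exact (step_int_aux hh F).2

lemma step_intble (hh : 0 < h) (hN : N * h = L) (hL : 0 < L) (hF : ∀ i, F (i + N) = F i) (a b : ℝ) :
    IntervalIntegrable (fun y => F ⌊y / h⌋) volume a b := by
  have p : Function.Periodic (fun y => F ⌊y / h⌋) L := fun x => step_per hh hN hF x
  refine p.intervalIntegrable₀ hL.ne' ?_ a b
  rw [← hN]; exact (step_int_aux hh F).1

/-- The piecewise linear interpolant of a lattice function. -/
def lin (h : ℝ) (F : ℤ → ℝ) (x : ℝ) : ℝ := F 0 + ∫ y in (0:ℝ)..x, fd h F ⌊y / h⌋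

lemma lin_hasD (hh : 0 < h) (hN : N * h = L) (hL : 0 < L) (hF : ∀ i, F (i + N) = F i) :
    HasD L (lin h F) (fun x => fd h F ⌊x / h⌋) ∧
      ∫ x in (0:ℝ)..L, (fd h F ⌊x / h⌋) ^ 2 = en N h F := by
  have ii := step_intble hh hN hL (fd_periodic (h := h) hF)
  have ac : ∀ a b, lin h F b - lin h F a = ∫ x in a..b, fd h F ⌊x / h⌋ := fun a b => by
    unfold lin
    rw [add_sub_add_left_eq_sub]
    exact intervalIntegral.integral_interval_sub_left (ii _ _) (ii _ _)
  have p : Function.Periodic (fun y => fd h F ⌊y / h⌋) L := fun x =>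
    step_per hh hN (fd_periodic hF) x
  refine ⟨⟨fun x => ?_, p, ii, ac, ?_⟩, step_int hh hN fun i => fd h F i ^ 2⟩
  · have := ac x (x + L)
    rw [p.intervalIntegral_add_eq x 0, zero_add, step_int hh hN] at this
    have s := psum_sbp (N := N) (h := h) (f := F) (g := fun _ => 1) hF fun _ => rfl
    simp only [one_mul] at s
    have z : psum N (fun i => fd h (fun _ => (1:ℝ)) (i - 1) * F i) = 0 := by
      simp [psum, fd]
    rw [z, neg_zero] at s
    have s' : psum N (fd h F) = 0 := s
    rw [s', mul_zero] at this
    linarith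
  · exact step_intble (F := fun i => fd h F i ^ 2) hh hN hL
      (fun i => by simp only [fd_periodic hF]) 0 L

lemma lin_node (hh : 0 < h) (hN : N * h = L) (hL : 0 < L) (hF : ∀ i, F (i + N) = F i) (k : ℤ) :
    lin h F (k * h) = F k := by
  have D := (lin_hasD hh hN hL hF).1
  have st : ∀ k : ℤ, lin h F ((k + 1 : ℤ) * h) - lin h F (k * h) = F (k + 1) - F k := fun k => by
    rw [D.ac, (cell hh (fd h F) k (by push_cast; nlinarith) (by push_cast; rfl)).2]
    unfold fd; push_cast; field_simp; ring
  induction k using Int.induction_on with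
  | zero => simp [lin]
  | succ i ih => linarith [st i]
  | pred i ih =>
    have := st (-i - 1)
    rw [sub_add_cancel] at this
    linarith

lemma lin_sub (hh : 0 < h) (hN : N * h = L) (hL : 0 < L) (hF : ∀ i, F (i + N) = F i) (hN1 : 1 ≤ N)
    (x : ℝ) : |lin h F x - F ⌊x / h⌋| ^ 2 ≤ h * en N h F := by
  have D := (lin_hasD hh hN hL hF).1
  have f1 := Int.floor_le (x / h)
  have f2 := Int.lt_floor_add_one (x / h)
  rw [le_div_iff₀ hh] at f1
  rw [div_lt_iff₀ hh] at f2
  rw [← lin_node hh hN hL hF ⌊x / h⌋, D.ac, (cell hh (fd h F) _ f1 f2.le).2, sq_abs]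
  have e := sq_sub_le_energy hh hF ⌊x / h⌋ 1 hN1
  rw [Nat.cast_one, Nat.cast_one, one_mul] at e
  refine le_trans ?_ e
  have : F (⌊x / h⌋ + 1) - F ⌊x / h⌋ = h * fd h F ⌊x / h⌋ := by unfold fd; field_simp
  rw [this, mul_pow, mul_pow]
  have h3 : (x - ⌊x / h⌋ * h) ^ 2 ≤ h ^ 2 := pow_le_pow_left₀ (by linarith) (by linarith) 2
  gcongr

lemma measurable_step2 {G : ℝ → ℤ → ℝ} (hG : ∀ i, Continuous fun t => G t i) (h : ℝ) :
    Measurable fun p : ℝ × ℝ => G p.1 ⌊p.2 / h⌋ := by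
  have h1 : Measurable fun q : ℝ × ℤ => G q.1 q.2 :=
    measurable_from_prod_countable_left fun i => (hG i).measurable
  exact h1.comp (measurable_fst.prodMk (Int.measurable_floor.comp (measurable_snd.div_const h)))

end step

/-! ### The Dirichlet energy of the limit -/

section energy
variable {L T lam K E : ℝ} {N : ℕ → ℕ} {h : ℕ → ℝ} {U : Fam} {u : ℝ → ℝ → ℝ}

lemma Approx.N1 (A : Approx L T lam K E N h U u) (n : ℕ) : 1 ≤ N n := by
  by_contra! hc
  have : N n = 0 := by omega
  have := A.NL n
  simp_all only [Nat.cast_zero, zero_mul]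
  exact absurd A.hL (by rw [← this]; simp)

lemma Approx.en_le (A : Approx L T lam K E N h U u) (n : ℕ) (t : ℝ) : en (N n) (h n) (U n t) ≤ E :=
  ((A.sch n).en_le A.hT.le A.hlam t).trans (A.en0 n)

lemma Approx.lin_unif (A : Approx L T lam K E N h U u) (t : ℝ) :
    TendstoUniformly (fun n => lin (h n) (U n t)) (u t) atTop := by
  rw [Metric.tendstoUniformly_iff]
  intro ε hε
  have hl : Tendsto (fun n => h n * E) atTop (nhds 0) := by
    simpa using A.h_lim.mul_const E
  filter_upwards [A.conv (ε / 4) (by linarith),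
    hl.eventually (gt_mem_nhds (by positivity : 0 < (ε / 4) ^ 2))] with n h1 h2 x
  have S := A.sch n
  have a := lin_sub S.hpos (A.NL n) A.hL (S.per t) (A.N1 n) x
  have b : |lin (h n) (U n t) x - U n t ⌊x / h n⌋| ≤ ε / 4 := by
    refine le_of_sq_le_sq ?_ (by linarith)
    refine a.trans (le_trans ?_ h2.le)
    exact mul_le_mul_of_nonneg_left (A.en_le n t) S.hpos.le
  have c := h1 t x
  rw [Real.dist_eq, abs_lt]
  rw [abs_le] at b c
  constructor <;> linarith

lemma Approx.per (A : Approx L T lam K E N h U u) (t x : ℝ) : u t (x + L) = u t x := by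
  have a := (A.lin_unif t).tendsto_at (x + L)
  have b := (A.lin_unif t).tendsto_at x
  refine tendsto_nhds_unique a (b.congr fun n => ?_)
  exact ((lin_hasD (A.sch n).hpos (A.NL n) A.hL ((A.sch n).per t)).1.perf x).symm

lemma Approx.hasD_of_freq (A : Approx L T lam K E N h U u) (t : ℝ) {C : ℝ}
    (hC : ∃ᶠ n in atTop, en (N n) (h n) (U n t) ≤ C) :
    HasD L (u t) (deriv (u t)) ∧ ∫ x in (0:ℝ)..L, deriv (u t) x ^ 2 ≤ C := by
  set s : Set ℕ := {n | en (N n) (h n) (U n t) ≤ C} with hs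
  have : NeBot (atTop ⊓ 𝓟 s) := frequently_mem_iff_neBot.1 hC
  have X := fun n => lin_hasD (A.sch n).hpos (A.NL n) A.hL ((A.sch n).per t)
  refine HasD.of_lim (l := atTop ⊓ 𝓟 s) A.hL (fun n => (X n).1)
    (A.cont.comp (by fun_prop : Continuous fun x : ℝ => (t, x))) (A.per t)
    (fun v hv => (A.lin_unif t v hv).filter_mono inf_le_left) ?_
  have : ∀ᶠ n in atTop ⊓ 𝓟 s, n ∈ s := eventually_inf_principal.2 (Eventually.of_forall fun _ h => h)
  filter_upwards [this] with n hn
  rw [(X n).2]; exact hn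

lemma Approx.hasD (A : Approx L T lam K E N h U u) (t : ℝ) :
    HasD L (u t) (deriv (u t)) ∧ ∫ x in (0:ℝ)..L, deriv (u t) x ^ 2 ≤ E :=
  A.hasD_of_freq t (Frequently.of_forall fun n => A.en_le n t)

/-- Lower semicontinuity of the discrete Dirichlet energies. -/
lemma Approx.lsc (A : Approx L T lam K E N h U u) (t : ℝ) :
    ENNReal.ofReal (∫ x in (0:ℝ)..L, deriv (u t) x ^ 2) ≤
      liminf (fun n => ENNReal.ofReal (en (N n) (h n) (U n t))) atTop := by
  refine le_of_forall_gt_imp_ge_of_dense fun b hb => ?_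
  have hb' := frequently_lt_of_liminf_lt (by isBoundedDefault) hb
  rcases eq_or_ne b ⊤ with rfl | hbt
  · exact le_top
  refine ENNReal.ofReal_le_of_le_toReal (A.hasD_of_freq t (hb'.mono fun n hn => ?_)).2
  exact (ENNReal.ofReal_le_iff_le_toReal hbt).1 hn.le

end energy

/-! ### The initial datum is attained in the energy norm -/

section init
variable {L T lam K E : ℝ} {N : ℕ → ℕ} {h : ℕ → ℝ} {U : Fam} {u : ℝ → ℝ → ℝ}

lemma Approx.cont_slice (A : Approx L T lam K E N h U u) (t : ℝ) : Continuous (u t) :=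
  A.cont.comp (by fun_prop : Continuous fun x : ℝ => (t, x))

/-- The energies do not exceed the initial one, and the Dirichlet energy is lower semicontinuous, so
the parallelogram identity forces strong convergence of the derivatives. -/
lemma Approx.init_deriv (A : Approx L T lam K E N h U u)
    (hE : ∫ x in (0:ℝ)..L, deriv (u 0) x ^ 2 = E) :
    Tendsto (fun t => ∫ x in (0:ℝ)..L, (deriv (u t) x - deriv (u 0) x) ^ 2) (nhds 0) (nhds 0) := by
  have hL := A.hL
  rw [Metric.tendsto_nhds]
  intro ε hε
  have D0 := (A.hasD 0).1
  obtain ⟨r, hr, hr2⟩ : ∃ r, 0 < r ∧ E - ε / 8 < dq L (u 0) r := by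
    by_contra! hc
    have := (sq_le_of_dq hL (A.cont_slice 0) D0.ae_deriv
      (measurable_deriv _).aestronglyMeasurable hc).2
    linarith
  set w : ℝ → ℝ → ℝ := fun t x => (u t x + u 0 x) / 2 with hw
  have wc : Continuous fun p : ℝ × ℝ => w p.1 p.2 := by
    have h0 := A.cont
    have h1 : Continuous fun p : ℝ × ℝ => u 0 p.2 := (A.cont_slice 0).comp continuous_snd
    exact (h0.add h1).div_const 2
  have dqc : Continuous fun t => dq L (w t) r := by
    refine intervalIntegral.continuous_parametric_intervalIntegral_of_continuous' (μ := volume)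
      (f := fun t x => ((w t (x + r) - w t x) / r) ^ 2) ?_ 0 L
    have h1 : Continuous fun p : ℝ × ℝ => w p.1 (p.2 + r) :=
      wc.comp (by fun_prop : Continuous fun p : ℝ × ℝ => (p.1, p.2 + r))
    exact ((h1.sub wc).div_const r).pow 2
  have w0 : w 0 = u 0 := by funext x; simp only [hw]; ring
  have ev : ∀ᶠ t in nhds 0, E - ε / 8 < dq L (w t) r :=
    dqc.continuousAt.eventually (lt_mem_nhds (by
      show E - ε / 8 < dq L (w 0) r
      rw [w0]; exact hr2))
  filter_upwards [ev] with t ht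
  obtain ⟨Dt, le⟩ := A.hasD t
  have i1 := Dt.sq
  have i2 := D0.sq
  have i3 : IntervalIntegrable (fun x => deriv (u t) x * deriv (u 0) x) volume 0 L := by
    refine (i1.add i2).mono_fun ((measurable_deriv _).mul (measurable_deriv _)).aestronglyMeasurable
      (Eventually.of_forall fun x => ?_)
    simp only [Real.norm_eq_abs]
    rw [abs_of_nonneg (by positivity : 0 ≤ deriv (u t) x ^ 2 + deriv (u 0) x ^ 2), abs_le]
    constructor <;> nlinarith [sq_nonneg (deriv (u t) x + deriv (u 0) x),
      sq_nonneg (deriv (u t) x - deriv (u 0) x)]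
  have ex : ∀ x, ((deriv (u t) x + deriv (u 0) x) / 2) ^ 2
      = 1 / 4 * deriv (u t) x ^ 2 + 1 / 4 * deriv (u 0) x ^ 2
        + 1 / 2 * (deriv (u t) x * deriv (u 0) x) := fun x => by ring
  have ex2 : ∀ x, (deriv (u t) x - deriv (u 0) x) ^ 2
      = deriv (u t) x ^ 2 + deriv (u 0) x ^ 2
        + (-2) * (deriv (u t) x * deriv (u 0) x) := fun x => by ring
  have Dw : HasD L (w t) (fun x => (deriv (u t) x + deriv (u 0) x) / 2) := by
    refine ⟨fun x => ?_, fun x => ?_, fun a b => ((Dt.int a b).add (D0.int a b)).div_const 2,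
      fun a b => ?_, ?_⟩
    · simp only [hw, Dt.perf, D0.perf]
    · simp only [Dt.per, D0.per]
    · rw [intervalIntegral.integral_div, intervalIntegral.integral_add (Dt.int a b) (D0.int a b),
        ← Dt.ac, ← D0.ac]
      simp only [hw]; ring
    · simp only [ex]
      exact ((i1.const_mul _).add (i2.const_mul _)).add (i3.const_mul _)
  have key := ht.trans_le (Dw.dq_le hL hr)
  have e1 : ∫ x in (0:ℝ)..L, ((deriv (u t) x + deriv (u 0) x) / 2) ^ 2
      = 1 / 4 * (∫ x in (0:ℝ)..L, deriv (u t) x ^ 2) + 1 / 4 * (∫ x in (0:ℝ)..L, deriv (u 0) x ^ 2)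
        + 1 / 2 * ∫ x in (0:ℝ)..L, deriv (u t) x * deriv (u 0) x := by
    simp only [ex]
    rw [intervalIntegral.integral_add ((i1.const_mul _).add (i2.const_mul _)) (i3.const_mul _),
      intervalIntegral.integral_add (i1.const_mul _) (i2.const_mul _)]
    simp only [intervalIntegral.integral_const_mul]
  have e2 : ∫ x in (0:ℝ)..L, (deriv (u t) x - deriv (u 0) x) ^ 2
      = (∫ x in (0:ℝ)..L, deriv (u t) x ^ 2) + (∫ x in (0:ℝ)..L, deriv (u 0) x ^ 2)
        + (-2) * ∫ x in (0:ℝ)..L, deriv (u t) x * deriv (u 0) x := by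
    simp only [ex2]
    rw [intervalIntegral.integral_add (i1.add i2) (i3.const_mul _),
      intervalIntegral.integral_add i1 i2, intervalIntegral.integral_const_mul]
  have n0 : 0 ≤ ∫ x in (0:ℝ)..L, (deriv (u t) x - deriv (u 0) x) ^ 2 :=
    intervalIntegral.integral_nonneg hL.le fun x _ => sq_nonneg _
  rw [Real.dist_eq, sub_zero, abs_of_nonneg n0]
  linarith

lemma Approx.init (A : Approx L T lam K E N h U u) {g : ℝ → ℝ}
    (hae : ∀ᵐ x, g x = deriv (u 0) x) (hE : ∫ x in (0:ℝ)..L, g x ^ 2 = E) :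
    Tendsto (fun t => ∫ x in (0:ℝ)..L, ((u t x - u 0 x) ^ 2 + (deriv (u t) x - g x) ^ 2))
      (nhds 0) (nhds 0) := by
  have hE' : ∫ x in (0:ℝ)..L, deriv (u 0) x ^ 2 = E := by
    rw [← hE]
    exact intervalIntegral.integral_congr_ae (hae.mono fun x hx _ => by simp only [hx])
  have c1 : Continuous fun p : ℝ × ℝ => (u p.1 p.2 - u 0 p.2) ^ 2 :=
    (A.cont.sub ((A.cont_slice 0).comp continuous_snd)).pow 2
  have c2 : Continuous fun t => ∫ x in (0:ℝ)..L, (u t x - u 0 x) ^ 2 :=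
    intervalIntegral.continuous_parametric_intervalIntegral_of_continuous' (μ := volume)
      (f := fun t x => (u t x - u 0 x) ^ 2) c1 0 L
  have t1 := c2.tendsto 0
  simp only [sub_self, ne_eq, OfNat.ofNat_ne_zero, not_false_eq_true, zero_pow,
    intervalIntegral.integral_zero] at t1
  have t2 := t1.add (A.init_deriv hE')
  rw [add_zero] at t2
  refine t2.congr fun t => ?_
  obtain ⟨Dt, -⟩ := A.hasD t
  have D0 := (A.hasD 0).1
  rw [← intervalIntegral.integral_add]
  · exact intervalIntegral.integral_congr_ae (hae.mono fun x hx _ => by simp only [hx])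
  · exact (((A.cont_slice t).sub (A.cont_slice 0)).pow 2).intervalIntegrable _ _
  · refine ((Dt.sq.add D0.sq).const_mul 2).mono_fun
      (((measurable_deriv _).sub (measurable_deriv _)).pow_const 2).aestronglyMeasurable
      (Eventually.of_forall fun x => ?_)
    simp only [Real.norm_eq_abs]
    rw [abs_of_nonneg (by positivity), abs_of_nonneg (by positivity)]
    nlinarith [sq_nonneg (deriv (u t) x + deriv (u 0) x)]

end init

/-! ### The energy estimate -/

section energy
variable {L T lam K E : ℝ} {N : ℕ → ℕ} {h : ℕ → ℝ} {U : Fam} {u : ℝ → ℝ → ℝ}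

lemma Approx.u_lim (A : Approx L T lam K E N h U u) (t x : ℝ) (k : ℤ) :
    Tendsto (fun n => U n t (⌊x / h n⌋ + k)) atTop (nhds (u t x)) := by
  have hx : Tendsto (fun n => u t (x + k * h n)) atTop (nhds (u t x)) := by
    refine ((A.cont_slice t).tendsto x).comp ?_
    simpa using (A.h_lim.const_mul (k:ℝ)).const_add x
  rw [Metric.tendsto_nhds] at hx ⊢
  intro ε hε
  filter_upwards [hx (ε / 2) (by linarith), A.conv (ε / 3) (by linarith)] with n h1 h2
  have hh := (A.sch n).hpos
  have e : (x + k * h n) / h n = x / h n + k := by field_simp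
  have b := h2 t (x + k * h n)
  rw [e, Int.floor_add_intCast, abs_le] at b
  rw [Real.dist_eq, abs_lt] at h1 ⊢
  constructor <;> linarith

lemma Approx.d3_lim (A : Approx L T lam K E N h U u) {t x : ℝ} (ht : t ∈ Ioo 0 T)
    (hu : 0 < u t x) :
    Tendsto (fun n => fd (h n) (fd (h n) (fd (h n) (U n t))) (⌊x / h n⌋ - 2)) atTop
      (nhds (deriv (deriv (deriv (u t))) x)) := by
  obtain ⟨B, r, h1, h2, R⟩ := A.regular ht hu
  have hr := R.hr
  have c := (R.cv 3 (by norm_num)).shift (r1 := r / 2) (by linarith) (-2)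
  rw [Metric.tendsto_nhds]
  intro ε hε
  filter_upwards [c.lim (ε / 2) (by linarith)] with n hn
  have := hn (t, x) ⟨by simp only [mem_Icc]; rw [h1]; constructor <;> linarith,
    by simp only [mem_Icc]; rw [h2]; constructor <;> linarith⟩
  rw [R.hh] at this
  rw [Real.dist_eq]
  refine lt_of_le_of_lt (le_of_eq_of_le ?_ this) (by linarith : ε / 2 < ε)
  simp only [SH, Function.iterate_succ_apply', Function.iterate_zero, id, DD, R.hh]
  rfl

/-- The dissipation density of the approximations. -/
def dens (h : ℕ → ℝ) (U : Fam) (n : ℕ) (t : ℝ) (i : ℤ) : ℝ :=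
  U n t i * U n t (i - 1) * (fd (h n) (fd (h n) (fd (h n) (U n t))) (i - 2)) ^ 2

lemma Approx.dens_nonneg (A : Approx L T lam K E N h U u) (n : ℕ) (t : ℝ) (i : ℤ) :
    0 ≤ dens h U n t i :=
  mul_nonneg (mul_nonneg ((A.sch n).nonneg _ _) ((A.sch n).nonneg _ _)) (sq_nonneg _)

lemma Approx.dens_cont (A : Approx L T lam K E N h U u) (n : ℕ) (i : ℤ) :
    Continuous fun t => dens h U n t i :=
  (((A.sch n).cont _).mul ((A.sch n).cont _)).mul (((A.sch n).cont_fd3 _).pow 2)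

lemma Approx.dens_per (A : Approx L T lam K E N h U u) (n : ℕ) (t : ℝ) (i : ℤ) :
    dens h U n t (i + N n) = dens h U n t i := by
  have p := (A.sch n).per t
  unfold dens
  rw [p, show i + (N n:ℤ) - 1 = (i - 1) + N n by ring, p,
    show i + (N n:ℤ) - 2 = (i - 2) + N n by ring, fd_periodic (fd_periodic (fd_periodic p))]

lemma Approx.dens_lim (A : Approx L T lam K E N h U u) {t x : ℝ} (ht : t ∈ Ioo 0 T)
    (hu : 0 < u t x) : Tendsto (fun n => dens h U n t ⌊x / h n⌋) atTop
      (nhds (u t x ^ 2 * deriv (deriv (deriv (u t))) x ^ 2)) := by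
  have a := A.u_lim t x 0
  have b := A.u_lim t x (-1)
  simp only [add_zero] at a
  have := (a.mul b).mul ((A.d3_lim ht hu).pow 2)
  rw [← sq] at this
  exact this

lemma Approx.lint_dens (A : Approx L T lam K E N h U u) (n : ℕ) (t : ℝ) :
    ∫⁻ x in Ioc 0 L, ENNReal.ofReal (dens h U n t ⌊x / h n⌋)
      = ENNReal.ofReal (diss (N n) (h n) (U n t)) := by
  have S := A.sch n
  have ii := step_intble (F := dens h U n t) S.hpos (A.NL n) A.hL (A.dens_per n t) 0 L
  rw [← ofReal_integral_eq_lintegral_ofReal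
    ((intervalIntegrable_iff_integrableOn_Ioc_of_le A.hL.le).1 ii)
    (Eventually.of_forall fun x => A.dens_nonneg n t _), ← intervalIntegral.integral_of_le A.hL.le,
    step_int S.hpos (A.NL n)]
  rfl

lemma ofReal_integral_le {α : Type*} [MeasurableSpace α] (μ : Measure α) {f : α → ℝ}
    (hf : ∀ x, 0 ≤ f x) : ENNReal.ofReal (∫ x, f x ∂μ) ≤ ∫⁻ x, ENNReal.ofReal (f x) ∂μ := by
  by_cases hi : Integrable f μ
  · rw [ofReal_integral_eq_lintegral_ofReal hi (Eventually.of_forall hf)]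
  · rw [integral_undef hi]; simp

/-- Fatou for the dissipation at a fixed time. -/
lemma Approx.diss_lsc (A : Approx L T lam K E N h U u) {t : ℝ} (ht : t ∈ Ioo 0 T) :
    ENNReal.ofReal (∫ x in {x : ℝ | x ∈ Ioo (0:ℝ) L ∧ 0 < u t x},
        u t x ^ 2 * deriv (deriv (deriv (u t))) x ^ 2) ≤
      liminf (fun n => ENNReal.ofReal (diss (N n) (h n) (U n t))) atTop := by
  set s : Set ℝ := {x : ℝ | x ∈ Ioo (0:ℝ) L ∧ 0 < u t x} with hs
  have ms : MeasurableSet s :=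
    (isOpen_Ioo.inter (isOpen_lt continuous_const (A.cont_slice t))).measurableSet
  refine (ofReal_integral_le _ fun x => by positivity).trans ?_
  calc _ = ∫⁻ x in s, liminf (fun n => ENNReal.ofReal (dens h U n t ⌊x / h n⌋)) atTop := by
        refine setLIntegral_congr_fun ms fun x hx => ?_
        exact (((ENNReal.continuous_ofReal.tendsto _).comp
          (A.dens_lim ht hx.2)).liminf_eq).symm
    _ ≤ liminf (fun n => ∫⁻ x in s, ENNReal.ofReal (dens h U n t ⌊x / h n⌋)) atTop := by
        refine lintegral_liminf_le fun n => Measurable.ennreal_ofReal ?_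
        exact (measurable_from_top (f := dens h U n t)).comp
          (Int.measurable_floor.comp (measurable_id.div_const _))
    _ ≤ _ := by
        refine liminf_le_liminf (Eventually.of_forall fun n => ?_)
        rw [← A.lint_dens]
        exact lintegral_mono_set fun x hx => ⟨hx.1.1, hx.1.2.le⟩

lemma rpow_le_liminf {a : ENNReal} {v : ℕ → ENNReal} (ha : a ≤ liminf v atTop) {q : ℝ} (hq : 0 ≤ q) :
    a ^ q ≤ liminf (fun n => v n ^ q) atTop := by
  rcases hq.eq_or_lt with rfl | hq
  · simp
  · refine (ENNReal.rpow_le_rpow ha hq.le).trans (le_of_eq ?_)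
    exact (ENNReal.orderIsoRpow q hq).liminf_apply

lemma ennreal_le_liminf_add {v w : ℕ → ENNReal} :
    liminf v atTop + liminf w atTop ≤ liminf (v + w) atTop := by
  rw [liminf_eq_iSup_iInf_of_nat, liminf_eq_iSup_iInf_of_nat, liminf_eq_iSup_iInf_of_nat]
  have m : ∀ f : ℕ → ENNReal, Monotone fun n => ⨅ i, ⨅ (_ : n ≤ i), f i := fun f a b hab =>
    le_iInf₂ fun i hi => iInf₂_le i (hab.trans hi)
  rw [ENNReal.iSup_add_iSup_of_monotone (m v) (m w)]
  exact iSup_mono fun n => le_iInf₂ fun i hi => add_le_add (iInf₂_le i hi) (iInf₂_le i hi)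

/-- The energy estimate of order `2q` for the limit. -/
lemma Approx.energy (A : Approx L T lam K E N h U u) (hE : 0 ≤ E) {q : ℝ} (hq : 1 ≤ q) {t : ℝ}
    (ht : t ∈ Icc 0 T) :
    (∫ x in (0:ℝ)..L, deriv (u t) x ^ 2) ^ q + 2 * ∫ s in (0:ℝ)..t,
      (∫ x in (0:ℝ)..L, deriv (u s) x ^ 2) ^ (q - 1) *
        (∫ x in {x : ℝ | x ∈ Ioo (0:ℝ) L ∧ 0 < u s x},
          u s x ^ 2 * deriv (deriv (deriv (u s))) x ^ 2) ≤ E ^ q := by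
  set e : ℝ → ℝ := fun s => ∫ x in (0:ℝ)..L, deriv (u s) x ^ 2 with he
  set d : ℝ → ℝ := fun s => ∫ x in {x : ℝ | x ∈ Ioo (0:ℝ) L ∧ 0 < u s x},
          u s x ^ 2 * deriv (deriv (deriv (u s))) x ^ 2 with hd
  have e0 : ∀ s, 0 ≤ e s := fun s =>
    intervalIntegral.integral_nonneg A.hL.le fun x _ => sq_nonneg _
  have d0 : ∀ s, 0 ≤ d s := fun s => integral_nonneg fun x => by positivity
  have en0 : ∀ n s, 0 ≤ en (N n) (h n) (U n s) := fun n s => en_nonneg (A.sch n).hpos _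
  have f0 : ∀ s, 0 ≤ e s ^ (q - 1) * d s := fun s => mul_nonneg (Real.rpow_nonneg (e0 s) _) (d0 s)
  set G : ℕ → ℝ → ℝ := fun n s => en (N n) (h n) (U n s) ^ (q - 1) * diss (N n) (h n) (U n s) with hG
  have G0 : ∀ n s, 0 ≤ G n s := fun n s =>
    mul_nonneg (Real.rpow_nonneg (en0 n s) _) ((A.sch n).diss_nonneg s)
  have Gc : ∀ n, Continuous (G n) := fun n =>
    ((A.sch n).cont_en.rpow_const fun s => Or.inr (by linarith)).mul (A.sch n).cont_diss
  have k1 : ENNReal.ofReal (e t ^ q) ≤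
      liminf (fun n => ENNReal.ofReal (en (N n) (h n) (U n t) ^ q)) atTop := by
    have hl : ENNReal.ofReal (e t) ≤ _ := A.lsc t
    have := rpow_le_liminf hl (by linarith : 0 ≤ q)
    simp only [ENNReal.ofReal_rpow_of_nonneg (e0 _) (by linarith : 0 ≤ q),
      ENNReal.ofReal_rpow_of_nonneg (en0 _ _) (by linarith : 0 ≤ q)] at this
    exact this
  have k2 : ∀ s ∈ Ioo 0 T, ENNReal.ofReal (e s ^ (q - 1) * d s) ≤
      liminf (fun n => ENNReal.ofReal (G n s)) atTop := fun s hs => by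
    have hl : ENNReal.ofReal (e s) ≤ _ := A.lsc s
    have a := rpow_le_liminf hl (by linarith : 0 ≤ q - 1)
    have b : ENNReal.ofReal (d s) ≤ _ := A.diss_lsc hs
    simp only [ENNReal.ofReal_rpow_of_nonneg (e0 _) (by linarith : 0 ≤ q - 1),
      ENNReal.ofReal_rpow_of_nonneg (en0 _ _) (by linarith : 0 ≤ q - 1)] at a
    rw [ENNReal.ofReal_mul (Real.rpow_nonneg (e0 s) _)]
    refine (mul_le_mul' a b).trans (ENNReal.le_liminf_mul.trans (le_of_eq ?_))
    congr 1
    funext n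
    simp only [Pi.mul_apply, hG]
    rw [ENNReal.ofReal_mul (Real.rpow_nonneg (en0 n s) _)]
  have k3 : ENNReal.ofReal (∫ s in (0:ℝ)..t, e s ^ (q - 1) * d s) ≤
      liminf (fun n => ENNReal.ofReal (∫ s in (0:ℝ)..t, G n s)) atTop := by
    rw [intervalIntegral.integral_of_le ht.1]
    refine (ofReal_integral_le _ f0).trans ?_
    calc _ ≤ ∫⁻ s in Ioc 0 t, liminf (fun n => ENNReal.ofReal (G n s)) atTop := by
          refine lintegral_mono_ae ((ae_restrict_iff' measurableSet_Ioc).2 ?_)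
          filter_upwards [Measure.ae_ne volume T] with s hs hs2
          exact k2 s ⟨hs2.1, lt_of_le_of_ne (hs2.2.trans ht.2) hs⟩
      _ ≤ _ := lintegral_liminf_le fun n => (Gc n).measurable.ennreal_ofReal
      _ = _ := by
          congr 1; funext n
          rw [intervalIntegral.integral_of_le ht.1, ofReal_integral_eq_lintegral_ofReal
            ((Gc n).intervalIntegrable 0 t).1 (Eventually.of_forall fun s => G0 n s)]
  have I0 : 0 ≤ ∫ s in (0:ℝ)..t, e s ^ (q - 1) * d s :=
    intervalIntegral.integral_nonneg ht.1 fun s _ => f0 s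
  have IG : ∀ n, 0 ≤ ∫ s in (0:ℝ)..t, G n s := fun n =>
    intervalIntegral.integral_nonneg ht.1 fun s _ => G0 n s
  rw [← ENNReal.ofReal_le_ofReal_iff (Real.rpow_nonneg hE q),
    ENNReal.ofReal_add (Real.rpow_nonneg (e0 t) q) (by positivity), two_mul,
    ENNReal.ofReal_add I0 I0]
  have k4 := add_le_add k1 ((add_le_add k3 k3).trans ennreal_le_liminf_add)
  refine k4.trans (ennreal_le_liminf_add.trans ?_)
  refine liminf_le_of_le (by isBoundedDefault) fun b hb => ?_
  obtain ⟨n, hn⟩ := hb.exists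
  refine hn.trans ?_
  simp only [Pi.add_apply]
  rw [← ENNReal.ofReal_add (IG n) (IG n), ← ENNReal.ofReal_add (Real.rpow_nonneg (en0 n t) q)
    (by linarith [IG n])]
  refine ENNReal.ofReal_le_ofReal ?_
  have := (A.sch n).energy_pow A.hlam hq ht
  have h2 := Real.rpow_le_rpow (en0 n 0) (A.en0 n) (by linarith : 0 ≤ q)
  simp only [hG]
  linarith

end energy

/-! ### Convergence of integrals -/

/-- Vitali-type convergence: on a finite measure space, `L²`-bounded sequences tending to zero a.e.
tend to zero in mean. -/
lemma tendsto_integral_of_sq {α : Type*} [MeasurableSpace α] {μ : Measure α} [IsFiniteMeasure μ]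
    {g : ℕ → α → ℝ} {C : ℝ} (hg : ∀ n, AEStronglyMeasurable (g n) μ)
    (hi : ∀ n, Integrable (fun x => g n x ^ 2) μ) (hC : ∀ n, ∫ x, g n x ^ 2 ∂μ ≤ C)
    (hl : ∀ᵐ x ∂μ, Tendsto (fun n => g n x) atTop (nhds 0)) :
    Tendsto (fun n => ∫ x, g n x ∂μ) atTop (nhds 0) := by
  have C0 : 0 ≤ C := (integral_nonneg fun x => sq_nonneg _).trans (hC 0)
  have gi : ∀ n, Integrable (g n) μ := fun n => by
    refine ((integrable_const (1:ℝ)).add (hi n)).mono' (hg n) (Eventually.of_forall fun x => ?_)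
    simp only [Real.norm_eq_abs, Pi.add_apply]
    rw [abs_le]
    constructor <;> nlinarith [sq_nonneg (g n x - 1), sq_nonneg (g n x + 1)]
  rw [Metric.tendsto_nhds]
  intro ε hε
  set M : ℝ := 2 * (C + 1) / ε with hM
  have M0 : 0 < M := by positivity
  have mi : ∀ n, Integrable (fun x => min |g n x| M) μ := fun n =>
    (gi n).abs.inf (integrable_const M)
  have t1 : Tendsto (fun n => ∫ x, min |g n x| M ∂μ) atTop (nhds (∫ _, (0:ℝ) ∂μ)) := by
    refine tendsto_integral_of_dominated_convergence (fun _ => M) (fun n => (mi n).1)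
      (integrable_const M) (fun n => Eventually.of_forall fun x => ?_) ?_
    · rw [Real.norm_eq_abs, abs_of_nonneg (le_min (abs_nonneg _) M0.le)]; exact min_le_right _ _
    · filter_upwards [hl] with x hx
      have := hx.abs.min (tendsto_const_nhds (x := M))
      simpa [M0.le] using this
  rw [integral_zero] at t1
  filter_upwards [t1.eventually (gt_mem_nhds (by linarith : (0:ℝ) < ε / 2))] with n hn
  rw [Real.dist_eq, sub_zero]
  have le : |∫ x, g n x ∂μ| ≤ ∫ x, (min |g n x| M + M⁻¹ * g n x ^ 2) ∂μ := by
    refine (abs_integral_le_integral_abs).trans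
      (integral_mono (gi n).abs ((mi n).add ((hi n).const_mul _)) fun x => ?_)
    simp only
    rcases le_total |g n x| M with h | h
    · rw [min_eq_left h]
      have : 0 ≤ M⁻¹ * g n x ^ 2 := by positivity
      linarith
    · rw [min_eq_right h, ← sq_abs]
      have : |g n x| = M⁻¹ * (M * |g n x|) := by field_simp
      have h2 : M⁻¹ * (M * |g n x|) ≤ M⁻¹ * |g n x| ^ 2 := by gcongr; nlinarith
      linarith
  rw [integral_add (mi n) ((hi n).const_mul _), integral_const_mul] at le
  have : M⁻¹ * ∫ x, g n x ^ 2 ∂μ < ε / 2 := by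
    calc _ ≤ M⁻¹ * C := by gcongr; exact hC n
      _ < ε / 2 := by
        rw [hM, inv_div, div_mul_eq_mul_div, div_lt_div_iff₀ (by positivity) (by norm_num)]
        nlinarith
  linarith

/-- Products of a bounded a.e. convergent sequence with an `L²`-bounded one; the latter need only
converge where the limit of the former does not vanish. -/
lemma tendsto_integral_mul {α : Type*} [MeasurableSpace α] {μ : Measure α} [IsFiniteMeasure μ]
    {F b : ℕ → α → ℝ} {F0 b0 : α → ℝ} {M C : ℝ} (mF : ∀ n, AEStronglyMeasurable (F n) μ)
    (mb : ∀ n, AEStronglyMeasurable (b n) μ) (mb0 : AEStronglyMeasurable b0 μ)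
    (hF : ∀ n, ∀ᵐ x ∂μ, |F n x| ≤ M)
    (hi : ∀ n, Integrable (fun x => b n x ^ 2) μ) (hC : ∀ n, ∫ x, b n x ^ 2 ∂μ ≤ C)
    (hi0 : Integrable (fun x => b0 x ^ 2) μ)
    (limF : ∀ᵐ x ∂μ, Tendsto (fun n => F n x) atTop (nhds (F0 x)))
    (limb : ∀ᵐ x ∂μ, F0 x ≠ 0 → Tendsto (fun n => b n x) atTop (nhds (b0 x))) :
    Tendsto (fun n => ∫ x, F n x * b n x ∂μ) atTop (nhds (∫ x, F0 x * b0 x ∂μ)) := by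
  have C0 : 0 ≤ C := (integral_nonneg fun x => sq_nonneg _).trans (hC 0)
  have mF0 : AEStronglyMeasurable F0 μ := aestronglyMeasurable_of_tendsto_ae atTop mF limF
  have hF0 : ∀ᵐ x ∂μ, |F0 x| ≤ M := by
    filter_upwards [limF, ae_all_iff.2 hF] with x h1 h2
    exact le_of_tendsto' h1.abs h2
  have ib : ∀ {f : α → ℝ}, AEStronglyMeasurable f μ → Integrable (fun x => f x ^ 2) μ →
      Integrable f μ := fun {f} hm hf => by
    refine ((integrable_const (1:ℝ)).add hf).mono' hm (Eventually.of_forall fun x => ?_)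
    simp only [Real.norm_eq_abs, Pi.add_apply]
    rw [abs_le]
    constructor <;> nlinarith [sq_nonneg (f x - 1), sq_nonneg (f x + 1)]
  have i1 : ∀ n, Integrable (fun x => F n x * b n x) μ := fun n =>
    (ib (mb n) (hi n)).bdd_mul (mF n) (c := M) (hF n)
  have i2 : Integrable (fun x => F0 x * b0 x) μ := (ib mb0 hi0).bdd_mul mF0 (c := M) hF0
  have i3 : ∀ n, Integrable (fun x => F0 x * b n x) μ := fun n =>
    (ib (mb n) (hi n)).bdd_mul mF0 (c := M) hF0
  -- the first error term `(F n - F0) * b n`, by Young's inequality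
  have d1 : Tendsto (fun n => ∫ x, (F n x - F0 x) * b n x ∂μ) atTop (nhds 0) := by
    have sqi : ∀ n, Integrable (fun x => (F n x - F0 x) ^ 2) μ := fun n => by
      refine (integrable_const ((2 * M) ^ 2)).mono' (((mF n).sub mF0).pow 2) ?_
      filter_upwards [hF n, hF0] with x h1 h2
      rw [Real.norm_eq_abs, abs_of_nonneg (sq_nonneg _)]
      rw [abs_le] at h1 h2
      nlinarith
    have t1 : Tendsto (fun n => ∫ x, (F n x - F0 x) ^ 2 ∂μ) atTop (nhds (∫ _, (0:ℝ) ∂μ)) := by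
      refine tendsto_integral_of_dominated_convergence (fun _ => (2 * M) ^ 2) (fun n => (sqi n).1)
        (integrable_const _) (fun n => ?_) ?_
      · filter_upwards [hF n, hF0] with x h1 h2
        rw [Real.norm_eq_abs, abs_of_nonneg (sq_nonneg _)]
        rw [abs_le] at h1 h2
        nlinarith
      · filter_upwards [limF] with x hx
        have := (hx.sub_const (F0 x)).pow 2
        simpa using this
    rw [integral_zero] at t1
    rw [Metric.tendsto_nhds]
    intro ε hε
    set δ : ℝ := ε / (2 * (C + 1)) with hδ
    have δ0 : 0 < δ := by positivity
    filter_upwards [t1.eventually (gt_mem_nhds (by positivity : (0:ℝ) < δ * (ε / 2)))] with n hn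
    rw [Real.dist_eq, sub_zero]
    have le : |∫ x, (F n x - F0 x) * b n x ∂μ| ≤
        ∫ x, (δ⁻¹ * (F n x - F0 x) ^ 2 + δ * b n x ^ 2) ∂μ := by
      refine (abs_integral_le_integral_abs).trans
        (integral_mono ?_ (((sqi n).const_mul _).add ((hi n).const_mul _)) fun x => ?_)
      · have := ((i1 n).sub (i3 n)).abs
        refine this.congr (Eventually.of_forall fun x => ?_)
        simp only [Pi.sub_apply, sub_mul]
      · simp only
        set a := F n x - F0 x
        set c := b n x
        have k : δ⁻¹ * a ^ 2 + δ * c ^ 2 = δ⁻¹ * (a ^ 2 + (δ * c) ^ 2) := by field_simp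
        have k2 : |a * c| = δ⁻¹ * |a * (δ * c)| := by
          rw [show a * (δ * c) = δ * (a * c) by ring, abs_mul δ, abs_of_pos δ0]; field_simp
        rw [k, k2]
        gcongr
        rw [abs_le]
        constructor <;> nlinarith [sq_nonneg (a - δ * c), sq_nonneg (a + δ * c)]
    rw [integral_add ((sqi n).const_mul _) ((hi n).const_mul _), integral_const_mul,
      integral_const_mul] at le
    have k1 : δ⁻¹ * ∫ x, (F n x - F0 x) ^ 2 ∂μ < ε / 2 := by
      rw [inv_mul_lt_iff₀ δ0]; exact hn
    have k2 : δ * ∫ x, b n x ^ 2 ∂μ ≤ ε / 2 := by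
      calc _ ≤ δ * (C + 1) := by gcongr; linarith [hC n]
        _ = ε / 2 := by rw [hδ]; field_simp
    linarith
  have d2 : Tendsto (fun n => ∫ x, F0 x * (b n x - b0 x) ∂μ) atTop (nhds 0) := by
    have pt : ∀ n, ∀ᵐ x ∂μ, (F0 x * (b n x - b0 x)) ^ 2 ≤
        M ^ 2 * 2 * b n x ^ 2 + M ^ 2 * 2 * b0 x ^ 2 := fun n => by
      filter_upwards [hF0] with x hx
      have h1 : F0 x ^ 2 ≤ M ^ 2 := sq_le_sq' (by linarith [abs_le.1 hx]) (abs_le.1 hx).2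
      have h2 : (b n x - b0 x) ^ 2 ≤ 2 * b n x ^ 2 + 2 * b0 x ^ 2 := by
        nlinarith [sq_nonneg (b n x + b0 x)]
      calc _ = F0 x ^ 2 * (b n x - b0 x) ^ 2 := by ring
        _ ≤ M ^ 2 * (2 * b n x ^ 2 + 2 * b0 x ^ 2) := by gcongr
        _ = _ := by ring
    have ri : ∀ n, Integrable (fun x => M ^ 2 * 2 * b n x ^ 2 + M ^ 2 * 2 * b0 x ^ 2) μ := fun n =>
      ((hi n).const_mul _).add (hi0.const_mul _)
    have mm : ∀ n, AEStronglyMeasurable (fun x => F0 x * (b n x - b0 x)) μ := fun n =>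
      mF0.mul ((mb n).sub mb0)
    have si : ∀ n, Integrable (fun x => (F0 x * (b n x - b0 x)) ^ 2) μ := fun n => by
      refine (ri n).mono' ((mm n).pow 2) ?_
      filter_upwards [pt n] with x hx
      rw [Real.norm_eq_abs, abs_of_nonneg (sq_nonneg _)]
      exact hx
    refine tendsto_integral_of_sq (C := M ^ 2 * 2 * C + M ^ 2 * 2 * ∫ x, b0 x ^ 2 ∂μ) mm si
      (fun n => ?_) ?_
    · refine (integral_mono_ae (si n) (ri n) (pt n)).trans ?_
      rw [integral_add ((hi n).const_mul _) (hi0.const_mul _), integral_const_mul,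
        integral_const_mul]
      gcongr
      exact hC n
    · filter_upwards [limb] with x hx
      by_cases h0 : F0 x = 0
      · simp [h0]
      · have := ((hx h0).sub_const (b0 x)).const_mul (F0 x)
        simpa using this
  have := (d1.add d2).add_const (∫ x, F0 x * b0 x ∂μ)
  simp only [zero_add] at this
  refine this.congr fun n => ?_
  have e1 : Integrable (fun x => (F n x - F0 x) * b n x) μ :=
    ((i1 n).sub (i3 n)).congr (Eventually.of_forall fun x => by simp only [Pi.sub_apply, sub_mul])
  have e2 : Integrable (fun x => F0 x * (b n x - b0 x)) μ :=
    ((i3 n).sub i2).congr (Eventually.of_forall fun x => by simp only [Pi.sub_apply, mul_sub])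
  have e3 : Integrable (fun x => (F n x - F0 x) * b n x + F0 x * (b n x - b0 x)) μ := e1.add e2
  rw [← integral_add e1 e2, ← integral_add e3 i2]
  refine integral_congr_ae (Eventually.of_forall fun x => ?_)
  simp only
  ring

section step2
variable {N : ℕ} {h L T : ℝ}

lemma restrict_cyl (L T : ℝ) : (volume : Measure (ℝ × ℝ)).restrict (Ioo 0 T ×ˢ Ioo 0 L)
    = ((volume : Measure ℝ).restrict (Ioo 0 T)).prod ((volume : Measure ℝ).restrict (Ioo 0 L)) := by
  rw [Measure.prod_restrict]; rfl

lemma step2_int (hh : 0 < h) (hN : N * h = L) (hL : 0 < L) {G : ℝ → ℤ → ℝ}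
    (hG : ∀ i, Continuous fun t => G t i) (hper : ∀ t i, G t (i + N) = G t i) :
    IntegrableOn (fun p : ℝ × ℝ => G p.1 ⌊p.2 / h⌋) (Ioo 0 T ×ˢ Ioo 0 L) := by
  unfold IntegrableOn
  rw [restrict_cyl, integrable_prod_iff (measurable_step2 hG h).aestronglyMeasurable]
  have sl : ∀ t, IntervalIntegrable (fun x => G t ⌊x / h⌋) volume 0 L := fun t =>
    step_intble hh hN hL (hper t) 0 L
  refine ⟨Eventually.of_forall fun t => ?_, ?_⟩
  · exact ((intervalIntegrable_iff_integrableOn_Ioo_of_le hL.le).1 (sl t))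
  · have e : ∀ t, ∫ x in Ioo 0 L, ‖G t ⌊x / h⌋‖ = h * psum N (fun i => |G t i|) := fun t => by
      rw [← integral_Ioc_eq_integral_Ioo, ← intervalIntegral.integral_of_le hL.le]
      exact step_int hh hN fun i => |G t i|
    simp only [e]
    have c : Continuous fun t => h * psum N (fun i => |G t i|) :=
      continuous_const.mul (continuous_finsetSum _ fun i _ => (hG _).abs)
    exact (c.integrableOn_Icc (a := 0) (b := T)).mono_set Ioo_subset_Icc_self

lemma step2_integral (hT : 0 ≤ T) (hh : 0 < h) (hN : N * h = L) (hL : 0 < L) {G : ℝ → ℤ → ℝ}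
    (hG : ∀ i, Continuous fun t => G t i) (hper : ∀ t i, G t (i + N) = G t i) :
    ∫ p in Ioo 0 T ×ˢ Ioo 0 L, G p.1 ⌊p.2 / h⌋ = ∫ t in (0:ℝ)..T, h * psum N (G t) := by
  have i := step2_int (T := T) hh hN hL hG hper
  unfold IntegrableOn at i
  rw [restrict_cyl] at i ⊢
  rw [integral_prod _ i, intervalIntegral.integral_of_le hT, integral_Ioc_eq_integral_Ioo]
  congr 1
  funext t
  rw [← integral_Ioc_eq_integral_Ioo, ← intervalIntegral.integral_of_le hL.le]
  exact step_int hh hN (G t)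

end step2

/-! ### The weak formulation of the scheme -/

/-- Test functions: jointly continuous partial derivatives `ψt`, `ψx`, and space periodicity,
vanishing at the times `0` and `T`. -/
structure Test (L T : ℝ) (ψ ψt ψx : ℝ → ℝ → ℝ) : Prop where
  c : Continuous fun p : ℝ × ℝ => ψ p.1 p.2
  ct : Continuous fun p : ℝ × ℝ => ψt p.1 p.2
  cx : Continuous fun p : ℝ × ℝ => ψx p.1 p.2
  dt : ∀ t x, HasDerivAt (fun s => ψ s x) (ψt t x) t
  dx : ∀ t x, HasDerivAt (fun y => ψ t y) (ψx t x) x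
  per : ∀ t x, ψ t (x + L) = ψ t x
  zero : ∀ x, ψ 0 x = 0
  zeroT : ∀ x, ψ T x = 0

lemma Test.mk' {L T : ℝ} {ψ : ℝ → ℝ → ℝ} (hψ : ContDiff ℝ 1 (fun p : ℝ × ℝ => ψ p.1 p.2))
    (per : ∀ t x : ℝ, ψ t (x + L) = ψ t x) (h0 : ∀ x : ℝ, ψ 0 x = 0) (h1 : ∀ x : ℝ, ψ T x = 0) :
    Test L T ψ (fun t x => deriv (fun s => ψ s x) t) (fun t x => deriv (fun y => ψ t y) x) := by
  set Ψ : ℝ × ℝ → ℝ := fun p => ψ p.1 p.2 with hΨ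
  have cf : Continuous (fderiv ℝ Ψ) := hψ.continuous_fderiv one_ne_zero
  have hd : ∀ p, HasFDerivAt Ψ (fderiv ℝ Ψ p) p := fun p =>
    (hψ.differentiable one_ne_zero p).hasFDerivAt
  have d1 : ∀ t x, HasDerivAt (fun s => ψ s x) (fderiv ℝ Ψ (t, x) (1, 0)) t := fun t x => by
    have hc : HasDerivAt (fun s : ℝ => (s, x)) ((1:ℝ), (0:ℝ)) t :=
      (hasDerivAt_id t).prodMk (hasDerivAt_const t x)
    exact (hd (t, x)).comp_hasDerivAt t hc
  have d2 : ∀ t x, HasDerivAt (fun y => ψ t y) (fderiv ℝ Ψ (t, x) (0, 1)) x := fun t x => by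
    have hc : HasDerivAt (fun y : ℝ => (t, y)) ((0:ℝ), (1:ℝ)) x :=
      (hasDerivAt_const x t).prodMk (hasDerivAt_id x)
    exact (hd (t, x)).comp_hasDerivAt x hc
  refine ⟨hψ.continuous, ?_, ?_, fun t x => ?_, fun t x => ?_, per, h0, h1⟩
  · simp only [(d1 _ _).deriv]
    exact cf.clm_apply continuous_const
  · simp only [(d2 _ _).deriv]
    exact cf.clm_apply continuous_const
  · rw [(d1 t x).deriv]; exact d1 t x
  · rw [(d2 t x).deriv]; exact d2 t x

section weak
variable {L T lam K E : ℝ} {N : ℕ → ℕ} {h : ℕ → ℝ} {U : Fam} {u ψ ψt ψx : ℝ → ℝ → ℝ}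

lemma Test.per_t (P : Test L T ψ ψt ψx) (t x : ℝ) : ψt t (x + L) = ψt t x := by
  have a := P.dt t (x + L)
  simp only [P.per] at a
  exact a.unique (P.dt t x)

lemma Test.bound (P : Test L T ψ ψt ψx) : ∃ M, 0 ≤ M ∧ ∀ t ∈ Icc 0 T, ∀ x ∈ Icc (-L) L,
    |ψ t x| ≤ M ∧ |ψt t x| ≤ M ∧ |ψx t x| ≤ M := by
  have hc : IsCompact (Icc 0 T ×ˢ Icc (-L) L) := isCompact_Icc.prod isCompact_Icc
  obtain ⟨M1, h1⟩ := hc.exists_bound_of_continuousOn P.c.continuousOn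
  obtain ⟨M2, h2⟩ := hc.exists_bound_of_continuousOn P.ct.continuousOn
  obtain ⟨M3, h3⟩ := hc.exists_bound_of_continuousOn P.cx.continuousOn
  refine ⟨max 0 (max M1 (max M2 M3)), le_max_left _ _, fun t ht x hx => ⟨?_, ?_, ?_⟩⟩
  · exact (h1 (t, x) ⟨ht, hx⟩).trans (by simp)
  · exact (h2 (t, x) ⟨ht, hx⟩).trans (by simp)
  · exact (h3 (t, x) ⟨ht, hx⟩).trans (by simp)

lemma Test.slope (P : Test L T ψ ψt ψx) {h : ℝ} (hh : 0 < h) (t : ℝ) (i : ℤ) :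
    ∃ ξ ∈ Icc ((i - 1) * h) (i * h), fd h (fun j => ψ t (j * h)) (i - 1) = ψx t ξ := by
  have lt : ((i:ℝ) - 1) * h < i * h := by nlinarith
  obtain ⟨ξ, hξ, e⟩ := exists_hasDerivAt_eq_slope (fun y => ψ t y) (ψx t) lt
    (fun y _ => (P.dx t y).continuousAt.continuousWithinAt) (fun y _ => P.dx t y)
  refine ⟨ξ, Ioo_subset_Icc_self hξ, ?_⟩
  rw [e]
  unfold fd
  simp only
  push_cast
  rw [show (i:ℝ) * h - (i - 1) * h = h by ring, show (i:ℝ) - 1 + 1 = i by ring]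

lemma Test.per_node (hper : ∀ t x, ψ t (x + L) = ψ t x) {N : ℕ} {h : ℝ} (hN : N * h = L) (t : ℝ)
    (i : ℤ) : ψ t ((i + N : ℤ) * h) = ψ t (i * h) := by
  rw [← hper t (i * h), ← hN]; push_cast; ring_nf

lemma Approx.h_le (A : Approx L T lam K E N h U u) (n : ℕ) : h n ≤ L := by
  have h1 : (1:ℝ) ≤ N n := by exact_mod_cast A.N1 n
  have := A.NL n
  nlinarith [(A.sch n).hpos]

/-- The weak formulation satisfied by the scheme. -/
lemma Approx.discrete_weak (A : Approx L T lam K E N h U u) (P : Test L T ψ ψt ψx) (n : ℕ) :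
    (∫ p in Ioo 0 T ×ˢ Ioo 0 L, U n p.1 ⌊p.2 / h n⌋ * ψt p.1 (⌊p.2 / h n⌋ * h n))
    + (∫ p in Ioo 0 T ×ˢ Ioo 0 L, flux (h n) (U n p.1) ⌊p.2 / h n⌋ *
        fd (h n) (fun j => ψ p.1 (j * h n)) (⌊p.2 / h n⌋ - 1))
    - (∫ p in Ioo 0 T ×ˢ Ioo 0 L, U n p.1 ⌊p.2 / h n⌋ ^ lam * ψ p.1 (⌊p.2 / h n⌋ * h n)) = 0 := by
  have S := A.sch n
  have hh := S.hpos
  have hN := A.NL n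
  have lam0 : 0 ≤ lam := by linarith [A.hlam]
  have cψ : ∀ x, Continuous fun t => ψ t x := fun x => P.c.comp (Continuous.prodMk_left x)
  have cψt : ∀ x, Continuous fun t => ψt t x := fun x => P.ct.comp (Continuous.prodMk_left x)
  have pψ := fun t i => Test.per_node P.per hN t i
  have pψt := fun t i => Test.per_node P.per_t hN t i
  have c1 : ∀ i : ℤ, Continuous fun t => U n t i * ψt t (i * h n) := fun i =>
    (S.cont i).mul (cψt _)
  have c3 : ∀ i : ℤ, Continuous fun t => U n t i ^ lam * ψ t (i * h n) := fun i =>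
    ((S.cont i).rpow_const fun _ => Or.inr lam0).mul (cψ _)
  have cfl : ∀ i : ℤ, Continuous fun t => flux (h n) (U n t) i := fun i =>
    ((S.cont _).mul (S.cont _)).mul (S.cont_fd3 _)
  have cfd : ∀ i : ℤ, Continuous fun t => fd (h n) (fun j => ψ t (j * h n)) i := fun i =>
    ((cψ _).sub (cψ _)).div_const _
  have c2 : ∀ i : ℤ, Continuous fun t => flux (h n) (U n t) i *
      fd (h n) (fun j => ψ t (j * h n)) (i - 1) := fun i => (cfl i).mul (cfd _)
  have p2 : ∀ t (i : ℤ), flux (h n) (U n t) (i + N n) *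
      fd (h n) (fun j => ψ t (j * h n)) (i + N n - 1) = flux (h n) (U n t) i *
      fd (h n) (fun j => ψ t (j * h n)) (i - 1) := fun t i => by
    rw [flux_periodic (S.per t), show i + (N n:ℤ) - 1 = (i - 1) + N n by ring,
      fd_periodic (fun i => pψ t i)]
  rw [step2_integral (G := fun t i => U n t i * ψt t (i * h n)) A.hT.le hh hN A.hL c1
      (fun t i => by simp only [S.per, pψt]),
    step2_integral (G := fun t i => U n t i ^ lam * ψ t (i * h n)) A.hT.le hh hN A.hL c3
      (fun t i => by simp only [S.per, pψ]),
    step2_integral (G := fun t i => flux (h n) (U n t) i *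
      fd (h n) (fun j => ψ t (j * h n)) (i - 1)) A.hT.le hh hN A.hL c2 p2]
  have cs : ∀ {G : ℝ → ℤ → ℝ}, (∀ i, Continuous fun t => G t i) →
      Continuous fun t => h n * psum (N n) (G t) := fun hG =>
    continuous_const.mul (continuous_finsetSum _ fun i _ => hG _)
  have i1 := (cs c1).intervalIntegrable (μ := volume) 0 T
  have i2 := (cs c2).intervalIntegrable (μ := volume) 0 T
  have i3 := (cs c3).intervalIntegrable (μ := volume) 0 T
  rw [← intervalIntegral.integral_add i1 i2, ← intervalIntegral.integral_sub (i1.add i2) i3]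
  set Y : ℝ → ℝ := fun t => h n * psum (N n) fun i => U n t i * ψ t (i * h n) with hY
  have Yc : Continuous Y := cs fun i => (S.cont i).mul (cψ _)
  have dY : ∀ t ∈ Ioo 0 T, HasDerivAt Y
      (h n * psum (N n) (fun i => U n t i * ψt t (i * h n))
        + h n * psum (N n) (fun i => flux (h n) (U n t) i *
          fd (h n) (fun j => ψ t (j * h n)) (i - 1))
        - h n * psum (N n) (fun i => U n t i ^ lam * ψ t (i * h n))) t := fun t ht => by
    have d : HasDerivAt Y (h n * psum (N n) (fun i =>
        (-(fd (h n) (flux (h n) (U n t)) i) - U n t i ^ lam) * ψ t (i * h n)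
          + U n t i * ψt t (i * h n))) t := by
      refine HasDerivAt.const_mul (h n) (HasDerivAt.fun_sum fun i _ => ?_)
      exact ((S.ode t (Ioo_subset_Icc_self ht) i).hasDerivAt (Icc_mem_nhds ht.1 ht.2)).mul
        (P.dt t _)
    convert d using 1
    have sb := psum_sbp (h := h n) (f := flux (h n) (U n t)) (g := fun i => ψ t (i * h n))
      (flux_periodic (S.per t)) (fun i => pψ t i)
    have e : psum (N n) (fun i => (-(fd (h n) (flux (h n) (U n t)) i) - U n t i ^ lam) *
          ψ t (i * h n) + U n t i * ψt t (i * h n))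
        = - psum (N n) (fun i => ψ t (i * h n) * fd (h n) (flux (h n) (U n t)) i)
          - psum (N n) (fun i => U n t i ^ lam * ψ t (i * h n))
          + psum (N n) (fun i => U n t i * ψt t (i * h n)) := by
      rw [← psum_neg, ← psum_sub, ← psum_add]
      congr 1; funext i; ring
    have e2 : psum (N n) (fun i => fd (h n) (fun j => ψ t (j * h n)) (i - 1) * flux (h n) (U n t) i)
        = psum (N n) (fun i => flux (h n) (U n t) i *
          fd (h n) (fun j => ψ t (j * h n)) (i - 1)) := by
      congr 1; funext i; ring
    rw [e, sb, e2]
    ring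
  rw [intervalIntegral.integral_eq_sub_of_hasDerivAt_of_le A.hT.le Yc.continuousOn dY
    ((i1.add i2).sub i3)]
  simp [hY, P.zero, P.zeroT]

end weak

/-! ### Passage to the limit in the weak formulation -/

section weak
variable {L T lam K E : ℝ} {N : ℕ → ℕ} {h : ℕ → ℝ} {U : Fam} {u ψ ψt ψx : ℝ → ℝ → ℝ}

lemma Approx.nonneg (A : Approx L T lam K E N h U u) (t x : ℝ) : 0 ≤ u t x :=
  ge_of_tendsto' (A.u_lim t x 0) fun n => (A.sch n).nonneg _ _

lemma Approx.le_K (A : Approx L T lam K E N h U u) (t x : ℝ) : u t x ≤ K :=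
  le_of_tendsto' (A.u_lim t x 0) fun n => (A.sch n).le_K _ _

/-- The square root of the dissipation density, with the sign of the third difference. -/
def rt (h : ℕ → ℝ) (U : Fam) (n : ℕ) (t : ℝ) (i : ℤ) : ℝ :=
  √(U n t i * U n t (i - 1)) * fd (h n) (fd (h n) (fd (h n) (U n t))) (i - 2)

lemma Approx.rt_sq (A : Approx L T lam K E N h U u) (n : ℕ) (t : ℝ) (i : ℤ) :
    rt h U n t i ^ 2 = dens h U n t i := by
  unfold rt dens
  rw [mul_pow, Real.sq_sqrt (mul_nonneg ((A.sch n).nonneg _ _) ((A.sch n).nonneg _ _))]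

lemma Approx.cont_sqrt (A : Approx L T lam K E N h U u) (n : ℕ) (i : ℤ) :
    Continuous fun t => √(U n t i * U n t (i - 1)) :=
  (((A.sch n).cont _).mul ((A.sch n).cont _)).sqrt

lemma Approx.rt_cont (A : Approx L T lam K E N h U u) (n : ℕ) (i : ℤ) :
    Continuous fun t => rt h U n t i := (A.cont_sqrt n i).mul ((A.sch n).cont_fd3 _)

lemma Approx.sqrt_lim (A : Approx L T lam K E N h U u) (t x : ℝ) :
    Tendsto (fun n => √(U n t ⌊x / h n⌋ * U n t (⌊x / h n⌋ - 1))) atTop (nhds (u t x)) := by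
  have a := A.u_lim t x 0
  have b := A.u_lim t x (-1)
  simp only [add_zero] at a
  have := (a.mul b).sqrt
  rw [Real.sqrt_mul_self (A.nonneg t x)] at this
  exact this

lemma Approx.rt_lim (A : Approx L T lam K E N h U u) {t x : ℝ} (ht : t ∈ Ioo 0 T)
    (hu : 0 < u t x) : Tendsto (fun n => rt h U n t ⌊x / h n⌋) atTop
      (nhds (u t x * deriv (deriv (deriv (u t))) x)) := (A.sqrt_lim t x).mul (A.d3_lim ht hu)

lemma Approx.dens_int (A : Approx L T lam K E N h U u) (n : ℕ) :
    IntegrableOn (fun p : ℝ × ℝ => dens h U n p.1 ⌊p.2 / h n⌋) (Ioo 0 T ×ˢ Ioo 0 L) ∧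
    ∫ p in Ioo 0 T ×ˢ Ioo 0 L, dens h U n p.1 ⌊p.2 / h n⌋ ≤ E / 2 := by
  have S := A.sch n
  refine ⟨step2_int S.hpos (A.NL n) A.hL (A.dens_cont n) (A.dens_per n), ?_⟩
  rw [step2_integral A.hT.le S.hpos (A.NL n) A.hL (A.dens_cont n) (A.dens_per n)]
  have := S.energy_pow A.hlam le_rfl (t := T) ⟨A.hT.le, le_rfl⟩
  simp only [Real.rpow_one, sub_self, Real.rpow_zero, one_mul] at this
  have h0 := en_nonneg (N := N n) S.hpos (U n T)
  have h2 : ∫ s in (0:ℝ)..T, h n * psum (N n) (dens h U n s)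
      = ∫ s in (0:ℝ)..T, diss (N n) (h n) (U n s) := rfl
  rw [h2]
  linarith [A.en0 n]

/-- The limit flux `u u_xxx`, extended by zero outside the positivity set. -/
def flim (u : ℝ → ℝ → ℝ) (p : ℝ × ℝ) : ℝ :=
  {p : ℝ × ℝ | 0 < u p.1 p.2}.indicator (fun p => u p.1 p.2 * deriv (deriv (deriv (u p.1))) p.2) p

lemma Approx.meas_pos (A : Approx L T lam K E N h U u) :
    MeasurableSet {p : ℝ × ℝ | 0 < u p.1 p.2} :=
  (isOpen_lt continuous_const A.cont).measurableSet

lemma ae_cyl (L T : ℝ) : ∀ᵐ p ∂(volume : Measure (ℝ × ℝ)).restrict (Ioo 0 T ×ˢ Ioo 0 L),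
    p.1 ∈ Ioo 0 T ∧ p.2 ∈ Ioo 0 L :=
  (ae_restrict_iff' (measurableSet_Ioo.prod measurableSet_Ioo)).2 (Eventually.of_forall fun _ hp => hp)

lemma Approx.flim_meas (A : Approx L T lam K E N h U u) : AEStronglyMeasurable (flim u)
    ((volume : Measure (ℝ × ℝ)).restrict (Ioo 0 T ×ˢ Ioo 0 L)) := by
  refine aestronglyMeasurable_of_tendsto_ae atTop (f := fun n =>
    {p : ℝ × ℝ | 0 < u p.1 p.2}.indicator (fun p : ℝ × ℝ => rt h U n p.1 ⌊p.2 / h n⌋)) (fun n =>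
    ((measurable_step2 (A.rt_cont n) (h n)).indicator A.meas_pos).aestronglyMeasurable) ?_
  filter_upwards [ae_cyl L T] with p hp
  unfold flim
  by_cases hu : 0 < u p.1 p.2
  · simp only [indicator, mem_ofPred_eq, hu, if_true]
    exact A.rt_lim hp.1 hu
  · simp only [indicator, mem_ofPred_eq, hu, if_false]
    exact tendsto_const_nhds

lemma Approx.flim_int (A : Approx L T lam K E N h U u) :
    IntegrableOn (fun p => flim u p ^ 2) (Ioo 0 T ×ˢ Ioo 0 L) := by
  refine ⟨A.flim_meas.pow 2, ?_⟩
  rw [hasFiniteIntegral_iff_ofReal (Eventually.of_forall fun p => sq_nonneg _)]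
  calc _ ≤ ∫⁻ p in Ioo 0 T ×ˢ Ioo 0 L,
        liminf (fun n => ENNReal.ofReal (dens h U n p.1 ⌊p.2 / h n⌋)) atTop := by
        refine lintegral_mono_ae ?_
        filter_upwards [ae_cyl L T] with p hp
        unfold flim
        by_cases hu : 0 < u p.1 p.2
        · simp only [indicator, mem_ofPred_eq, hu, if_true]
          rw [mul_pow]
          exact (((ENNReal.continuous_ofReal.tendsto _).comp
            (A.dens_lim hp.1 hu)).liminf_eq).ge
        · simp [indicator, hu]
    _ ≤ liminf (fun n => ∫⁻ p in Ioo 0 T ×ˢ Ioo 0 L,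
          ENNReal.ofReal (dens h U n p.1 ⌊p.2 / h n⌋)) atTop :=
        lintegral_liminf_le fun n => (measurable_step2 (A.dens_cont n) (h n)).ennreal_ofReal
    _ ≤ ENNReal.ofReal (E / 2) := by
        refine liminf_le_of_le (by isBoundedDefault) fun b hb => ?_
        obtain ⟨n, hn⟩ := hb.exists
        refine hn.trans ?_
        rw [← ofReal_integral_eq_lintegral_ofReal (A.dens_int n).1
          (Eventually.of_forall fun p => A.dens_nonneg n _ _)]
        exact ENNReal.ofReal_le_ofReal (A.dens_int n).2
    _ < ⊤ := ENNReal.ofReal_lt_top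

lemma Approx.node_lim (A : Approx L T lam K E N h U u) (x : ℝ) :
    Tendsto (fun n => ⌊x / h n⌋ * h n) atTop (nhds x) := by
  refine tendsto_of_tendsto_of_tendsto_of_le_of_le (g := fun n => x - h n) (h := fun _ => x)
    (by simpa using A.h_lim.const_sub x) tendsto_const_nhds (fun n => ?_) (fun n => ?_)
  · have hh := (A.sch n).hpos
    have := Int.lt_floor_add_one (x / h n)
    rw [div_lt_iff₀ hh] at this
    simp only
    linarith
  · have hh := (A.sch n).hpos
    have := Int.floor_le (x / h n)
    rw [le_div_iff₀ hh] at this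
    exact this

lemma Approx.node_mem (A : Approx L T lam K E N h U u) (n : ℕ) {x : ℝ} (hx : x ∈ Ioo 0 L) :
    0 ≤ ⌊x / h n⌋ * h n ∧ ⌊x / h n⌋ * h n ≤ L := by
  have hh := (A.sch n).hpos
  have h1 := Int.floor_le (x / h n)
  rw [le_div_iff₀ hh] at h1
  have h2 : (0:ℝ) ≤ ⌊x / h n⌋ := by
    exact_mod_cast Int.floor_nonneg.2 (div_nonneg hx.1.le hh.le)
  exact ⟨by positivity, h1.trans hx.2.le⟩

/-- The limit satisfies the weak formulation. -/
lemma Approx.weak (A : Approx L T lam K E N h U u) (P : Test L T ψ ψt ψx) :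
    (∫ p in Ioo 0 T ×ˢ Ioo 0 L, u p.1 p.2 * ψt p.1 p.2)
    + (∫ p in Ioo 0 T ×ˢ Ioo 0 L, u p.1 p.2 * ψx p.1 p.2 * flim u p)
    - (∫ p in Ioo 0 T ×ˢ Ioo 0 L, u p.1 p.2 ^ lam * ψ p.1 p.2) = 0 := by
  have hL := A.hL
  obtain ⟨M, M0, hM⟩ := P.bound
  have K0 : 0 ≤ K := (A.nonneg 0 0).trans (A.le_K 0 0)
  have lam0 : 0 ≤ lam := by linarith [A.hlam]
  set μ := (volume : Measure (ℝ × ℝ)).restrict (Ioo 0 T ×ˢ Ioo 0 L) with hμ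
  have : IsFiniteMeasure μ := by rw [hμ, restrict_cyl]; infer_instance
  have cψ : ∀ x, Continuous fun t => ψ t x := fun x => P.c.comp (Continuous.prodMk_left x)
  have cψt : ∀ x, Continuous fun t => ψt t x := fun x => P.ct.comp (Continuous.prodMk_left x)
  have sl : ∀ {f : ℝ → ℝ → ℝ}, (Continuous fun p : ℝ × ℝ => f p.1 p.2) → ∀ t x,
      Tendsto (fun n => f t (⌊x / h n⌋ * h n)) atTop (nhds (f t x)) := fun {f} hf t x =>
    ((hf.comp (Continuous.prodMk_right t)).tendsto x).comp (A.node_lim x)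
  have l1 : Tendsto (fun n => ∫ p, U n p.1 ⌊p.2 / h n⌋ * ψt p.1 (⌊p.2 / h n⌋ * h n) ∂μ) atTop
      (nhds (∫ p, u p.1 p.2 * ψt p.1 p.2 ∂μ)) := by
    refine tendsto_integral_of_dominated_convergence (fun _ => K * M) (fun n => ?_)
      (integrable_const _) (fun n => ?_) (Eventually.of_forall fun p => ?_)
    · exact (measurable_step2 (G := fun t i => U n t i * ψt t (i * h n))
        (fun i => ((A.sch n).cont i).mul (cψt _)) (h n)).aestronglyMeasurable
    · filter_upwards [ae_cyl L T] with p hp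
      rw [Real.norm_eq_abs, abs_mul, abs_of_nonneg ((A.sch n).nonneg _ _)]
      obtain ⟨a, b⟩ := A.node_mem n hp.2
      exact mul_le_mul ((A.sch n).le_K _ _) (hM _ (Ioo_subset_Icc_self hp.1) _
        ⟨by linarith, b⟩).2.1 (abs_nonneg _) K0
    · have := A.u_lim p.1 p.2 0
      simp only [add_zero] at this
      exact this.mul (sl P.ct p.1 p.2)
  have l3 : Tendsto (fun n => ∫ p, U n p.1 ⌊p.2 / h n⌋ ^ lam * ψ p.1 (⌊p.2 / h n⌋ * h n) ∂μ) atTop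
      (nhds (∫ p, u p.1 p.2 ^ lam * ψ p.1 p.2 ∂μ)) := by
    refine tendsto_integral_of_dominated_convergence (fun _ => K ^ lam * M) (fun n => ?_)
      (integrable_const _) (fun n => ?_) (Eventually.of_forall fun p => ?_)
    · exact (measurable_step2 (G := fun t i => U n t i ^ lam * ψ t (i * h n))
        (fun i => (((A.sch n).cont i).rpow_const fun _ => Or.inr lam0).mul (cψ _))
        (h n)).aestronglyMeasurable
    · filter_upwards [ae_cyl L T] with p hp
      rw [Real.norm_eq_abs, abs_mul, abs_of_nonneg (Real.rpow_nonneg ((A.sch n).nonneg _ _) _)]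
      obtain ⟨a, b⟩ := A.node_mem n hp.2
      exact mul_le_mul (Real.rpow_le_rpow ((A.sch n).nonneg _ _) ((A.sch n).le_K _ _) lam0)
        (hM _ (Ioo_subset_Icc_self hp.1) _ ⟨by linarith, b⟩).1 (abs_nonneg _)
        (Real.rpow_nonneg K0 _)
    · have := A.u_lim p.1 p.2 0
      simp only [add_zero] at this
      exact (this.rpow_const (Or.inr lam0)).mul (sl P.c p.1 p.2)
  have l2 : Tendsto (fun n => ∫ p, flux (h n) (U n p.1) ⌊p.2 / h n⌋ *
        fd (h n) (fun j => ψ p.1 (j * h n)) (⌊p.2 / h n⌋ - 1) ∂μ) atTop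
      (nhds (∫ p, u p.1 p.2 * ψx p.1 p.2 * flim u p ∂μ)) := by
    have key := tendsto_integral_mul (μ := μ)
      (F := fun n p => √(U n p.1 ⌊p.2 / h n⌋ * U n p.1 (⌊p.2 / h n⌋ - 1)) *
        fd (h n) (fun j => ψ p.1 (j * h n)) (⌊p.2 / h n⌋ - 1))
      (b := fun n p => rt h U n p.1 ⌊p.2 / h n⌋)
      (F0 := fun p => u p.1 p.2 * ψx p.1 p.2) (b0 := flim u) (M := K * M) (C := E / 2)
      (fun n => ?_) (fun n => ?_) A.flim_meas (fun n => ?_) (fun n => ?_) (fun n => ?_)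
      A.flim_int (Eventually.of_forall fun p => ?_) ?_
    · refine key.congr fun n => integral_congr_ae (Eventually.of_forall fun p => ?_)
      have := Real.mul_self_sqrt (mul_nonneg ((A.sch n).nonneg p.1 ⌊p.2 / h n⌋)
        ((A.sch n).nonneg p.1 (⌊p.2 / h n⌋ - 1)))
      simp only [rt, flux]
      linear_combination this * fd (h n) (fun j => ψ p.1 (j * h n)) (⌊p.2 / h n⌋ - 1) *
        fd (h n) (fd (h n) (fd (h n) (U n p.1))) (⌊p.2 / h n⌋ - 2)
    · exact (measurable_step2 (G := fun t i => √(U n t i * U n t (i - 1)) *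
        fd (h n) (fun j => ψ t (j * h n)) (i - 1)) (fun i => (A.cont_sqrt n i).mul
        (((cψ _).sub (cψ _)).div_const _)) (h n)).aestronglyMeasurable
    · exact (measurable_step2 (A.rt_cont n) (h n)).aestronglyMeasurable
    · filter_upwards [ae_cyl L T] with p hp
      obtain ⟨ξ, hξ, e⟩ := P.slope (A.sch n).hpos p.1 ⌊p.2 / h n⌋
      obtain ⟨a, b⟩ := A.node_mem n hp.2
      have hl := A.h_le n
      rw [e, abs_mul, abs_of_nonneg (Real.sqrt_nonneg _)]
      refine mul_le_mul ?_ (hM _ (Ioo_subset_Icc_self hp.1) _ ⟨?_, hξ.2.trans b⟩).2.2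
        (abs_nonneg _) K0
      · rw [← Real.sqrt_mul_self K0]
        exact Real.sqrt_le_sqrt (mul_le_mul ((A.sch n).le_K _ _) ((A.sch n).le_K _ _)
          ((A.sch n).nonneg _ _) K0)
      · have := hξ.1
        rw [sub_mul] at this
        linarith
    · simp only [A.rt_sq]
      exact (A.dens_int n).1
    · simp only [A.rt_sq]
      exact (A.dens_int n).2
    · refine (A.sqrt_lim p.1 p.2).mul ?_
      choose ξ hξ e using fun n => P.slope (A.sch n).hpos p.1 ⌊p.2 / h n⌋
      simp only [e]
      have : Tendsto ξ atTop (nhds p.2) := by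
        refine tendsto_of_tendsto_of_tendsto_of_le_of_le
          (g := fun n => (⌊p.2 / h n⌋ - 1) * h n) (h := fun n => ⌊p.2 / h n⌋ * h n)
          ?_ (A.node_lim p.2) (fun n => (hξ n).1) (fun n => (hξ n).2)
        have := (A.node_lim p.2).sub A.h_lim
        simpa [sub_mul] using this
      exact ((P.cx.comp (Continuous.prodMk_right p.1)).tendsto p.2).comp this
    · filter_upwards [ae_cyl L T] with p hp h0
      have hu : 0 < u p.1 p.2 := lt_of_le_of_ne (A.nonneg _ _)
        fun hz => h0 (by rw [← hz, zero_mul])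
      have := A.rt_lim hp.1 hu
      simpa only [flim, indicator, mem_ofPred_eq, hu, if_true] using this
  have := (l1.add l2).sub l3
  exact tendsto_nhds_unique this (by
    simp only [hμ, A.discrete_weak P]
    exact tendsto_const_nhds)

end weak

/-! ### The weak solution -/

section final
variable {L T lam K E : ℝ} {N : ℕ → ℕ} {h : ℕ → ℝ} {U : Fam} {u : ℝ → ℝ → ℝ}

lemma Approx.pos_reg (A : Approx L T lam K E N h U u) {p : ℝ × ℝ} (hp : p ∈ PT T u) :
    (∀ k < 4, HasDerivAt (deriv^[k] (u p.1)) (deriv^[k + 1] (u p.1) p.2) p.2) ∧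
    (∀ k ≤ 4, ContinuousAt (fun q : ℝ × ℝ => deriv^[k] (u q.1) q.2) p) ∧
    HasDerivAt (fun s => u s p.2) (deriv (fun s => u s p.2) p.1) p.1 ∧
    ContinuousAt (fun q : ℝ × ℝ => deriv (fun s => u s q.2) q.1) p := by
  obtain ⟨B, r, h1, h2, R⟩ := A.regular hp.1 hp.2
  have hr := R.hr
  have mt : p.1 ∈ Ioo (B.t0 - r) (B.t0 + r) := by rw [h1]; constructor <;> linarith
  have mx : p.2 ∈ Ioo (B.x0 - r) (B.x0 + r) := by rw [h2]; constructor <;> linarith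
  have nt := Ioo_mem_nhds mt.1 mt.2
  have nx := Icc_mem_nhds mx.1 mx.2
  have nb : cbox B r ∈ nhds p := prod_mem_nhds (mem_of_superset nt Ioo_subset_Icc_self) nx
  exact ⟨fun k hk => R.dx k hk p (mem_of_mem_nhds nb), fun k hk => (R.cv k hk).cont.continuousAt nb,
    R.dt p.2 (mem_of_mem_nhds nx) p.1 mt, R.cont_dt.continuousAt (prod_mem_nhds nt nx)⟩

lemma Approx.meas_PT (A : Approx L T lam K E N h U u) : MeasurableSet (PT T u) :=
  (measurableSet_Ioo.preimage measurable_fst).inter A.meas_pos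

lemma flim_of_mem {p : ℝ × ℝ} (hp : p ∈ PT T u) :
    flim u p = u p.1 p.2 * deriv (deriv (deriv (u p.1))) p.2 := by
  have := hp.2
  simp only [flim, indicator, mem_ofPred_eq, this, if_true]

lemma Approx.weakSol (A : Approx L T lam K E N h U u) {u₀ g₀ : ℝ → ℝ} (hu0 : ∀ x, u 0 x = u₀ x)
    (h0int : ∀ a b : ℝ, IntervalIntegrable g₀ volume a b)
    (h0ac : ∀ a b : ℝ, u₀ b - u₀ a = ∫ x in a..b, g₀ x)
    (hE : ∫ x in (0:ℝ)..L, g₀ x ^ 2 = E) :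
    ∃ W : WeakSol L T lam u₀ g₀, W.u = u ∧ W.ux = (fun t => deriv (u t)) ∧
      W.ux3 = fun t => deriv (deriv (deriv (u t))) := by
  have hu : u 0 = u₀ := funext hu0
  have hae : ∀ᵐ x, g₀ x = deriv (u 0) x := by
    rw [hu]
    exact (ae_deriv_of_ac h0int h0ac).mono fun x hx => hx.deriv.symm
  refine ⟨⟨u, fun t => deriv (u t), fun t x => deriv (fun s => u s x) t,
    fun t => deriv (deriv (u t)), fun t => deriv (deriv (deriv (u t))),
    fun t => deriv (deriv (deriv (deriv (u t)))), fun t _ x => A.nonneg t x, A.cont.continuousOn,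
    A.per, fun t _ => (A.hasD t).1.int, fun t _ => (A.hasD t).1.ac, fun t _ => (A.hasD t).1.sq,
    ⟨L * K ^ 2 + E, fun t _ => ?_⟩, fun p hp => (A.pos_reg hp).2.2.1,
    fun p hp => (A.pos_reg hp).1 0 (by norm_num), fun p hp => (A.pos_reg hp).1 1 (by norm_num),
    fun p hp => (A.pos_reg hp).1 2 (by norm_num), fun p hp => (A.pos_reg hp).1 3 (by norm_num),
    fun p hp => (A.pos_reg hp).2.2.2.continuousWithinAt,
    fun p hp => ((A.pos_reg hp).2.1 1 (by norm_num)).continuousWithinAt,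
    fun p hp => ((A.pos_reg hp).2.1 2 (by norm_num)).continuousWithinAt,
    fun p hp => ((A.pos_reg hp).2.1 3 (by norm_num)).continuousWithinAt,
    fun p hp => ((A.pos_reg hp).2.1 4 (by norm_num)).continuousWithinAt,
    ?_, fun ψ hψ hper h0 h1 => ?_, ?_⟩, rfl, rfl, rfl⟩
  · have i1 : IntervalIntegrable (fun x => u t x ^ 2) volume 0 L :=
      ((A.cont_slice t).pow 2).intervalIntegrable _ _
    rw [intervalIntegral.integral_add i1 (A.hasD t).1.sq]
    refine add_le_add ?_ (A.hasD t).2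
    have := intervalIntegral.integral_mono_on A.hL.le i1
      (intervalIntegrable_const (c := K ^ 2)) fun x _ =>
      pow_le_pow_left₀ (A.nonneg t x) (A.le_K t x) 2
    simpa using this
  · refine (A.flim_int.mono_set inter_subset_right).congr_fun (fun p hp => ?_)
      (A.meas_PT.inter (measurableSet_Ioo.prod measurableSet_Ioo))
    simp only [flim_of_mem hp.1]
  · have key := A.weak (Test.mk' hψ hper h0 h1)
    rw [← key]
    congr 2
    rw [inter_comm, ← setIntegral_indicator A.meas_PT]
    refine setIntegral_congr_fun (measurableSet_Ioo.prod measurableSet_Ioo) fun p hp => ?_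
    by_cases hq : p ∈ PT T u
    · simp only [indicator, hq, if_true, flim_of_mem hq]
      ring
    · have : ¬ 0 < u p.1 p.2 := fun hc => hq ⟨hp.1, hc⟩
      simp [indicator, hq, flim, this]
  · have := A.init hae hE
    simp only [hu0] at this
    exact this.mono_left nhdsWithin_le_nhds

end final

/-- Existence of a nonnegative weak solution of the thin-film equation with absorption
satisfying, for every `p ∈ [2,∞)`, the `p`-th order energy estimate
`‖u_x(t)‖₂^p + 2 ∫₀ᵗ ‖u_x(s)‖₂^{p-2} ∫_{u(s)>0} u² u_xxx² dx ds ≤ ‖u₀'‖₂^p`. -/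
theorem thin_film_absorption_existence_energy_estimate
    (L T lam : ℝ) (hL : 0 < L) (hT : 0 < T) (hlam : 1 ≤ lam)
    (u₀ g₀ : ℝ → ℝ)
    (h0cont : Continuous u₀)
    (h0nonneg : ∀ x : ℝ, 0 ≤ u₀ x)
    (h0ne : ∃ x : ℝ, u₀ x ≠ 0)
    (h0per : ∀ x : ℝ, u₀ (x + L) = u₀ x)
    (h0int : ∀ a b : ℝ, IntervalIntegrable g₀ volume a b)
    (h0ac : ∀ a b : ℝ, u₀ b - u₀ a = ∫ x in a..b, g₀ x)
    (h0L2 : IntervalIntegrable (fun x => (g₀ x) ^ 2) volume 0 L) :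
    ∃ W : WeakSol L T lam u₀ g₀,
      ∀ p : ℝ, 2 ≤ p → ∀ t ∈ Set.Icc (0 : ℝ) T,
        (Real.sqrt (∫ x in (0 : ℝ)..L, (W.ux t x) ^ 2)) ^ p
          + 2 * ∫ s in (0 : ℝ)..t,
              (Real.sqrt (∫ x in (0 : ℝ)..L, (W.ux s x) ^ 2)) ^ (p - 2)
                * (∫ x in {x : ℝ | x ∈ Set.Ioo (0 : ℝ) L ∧ 0 < W.u s x},
                    (W.u s x) ^ 2 * (W.ux3 s x) ^ 2)
          ≤ (Real.sqrt (∫ x in (0 : ℝ)..L, (g₀ x) ^ 2)) ^ p := by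
  obtain ⟨K, N, h, U, u, A, hu0, -, -⟩ :=
    approx_exists hL hT hlam h0cont h0nonneg h0per h0int h0ac h0L2
  obtain ⟨W, hu, hux, hux3⟩ := A.weakSol hu0 h0int h0ac rfl
  refine ⟨W, fun p hp t ht => ?_⟩
  rw [hu, hux, hux3]
  have pw : ∀ X : ℝ, 0 ≤ X → ∀ r : ℝ, √X ^ r = X ^ (r / 2) := fun X hX r => by
    rw [Real.sqrt_eq_rpow, ← Real.rpow_mul hX]; congr 1; ring
  have e0 : ∀ f : ℝ → ℝ, 0 ≤ ∫ x in (0:ℝ)..L, f x ^ 2 := fun f =>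
    intervalIntegral.integral_nonneg hL.le fun x _ => sq_nonneg _
  simp only [pw _ (e0 _), sub_div, div_self (two_ne_zero (α := ℝ))]
  exact A.energy (e0 g₀) (by linarith : 1 ≤ p / 2) ht

end
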